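/- arXiv:0704.3645 — 5 statements merged into one kernel-verified Lean document; each statement's English description precedes it below -/
import Mathlib

section
/- Let 1 ∈ A ⊆ B be an inclusion of unital C*-algebras, and let E : B → A be a faithful conditional expectation admitting a quasi-basis u_1, …, u_n such that Index(E) = Σ_{j=1}^n u_j u_j^* is invertible in B (this invertibility is automatic for index-finite type expectations). Then tsr(B) ≤ tsr(A) + n − 1; equivalently, for every integer t ≥ 1, if Lg_t(A) is dense in A^t, then Lg_{t+n−1}(B) is dense in B^{t+n−1}. -/
section Helpers

open Matrix

/-- The set of left invertible matrices. -/
def LInv (R : Type*) [Ring R] (m n : Type) [Fintype m] [DecidableEq n] : Set (Matrix m n R) :=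
  {X | ∃ Y : Matrix n m R, Y * X = 1}

theorem LInv_reindex {R : Type*} [Ring R] [TopologicalSpace R]
    {m n m' n' : Type} [Fintype m] [DecidableEq n] [Fintype m'] [DecidableEq n']
    (e : m ≃ m') (f : n ≃ n') (h : Dense (LInv R m n)) : Dense (LInv R m' n') := by
  have hc : Continuous (fun X : Matrix m n R => X.submatrix e.symm f.symm) :=
    continuous_id.matrix_submatrix _ _
  have hs : Function.Surjective (fun X : Matrix m n R => X.submatrix e.symm f.symm) := by
    intro X
    refine ⟨X.submatrix e f, ?_⟩
    ext i j
    simp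
  refine (hs.denseRange.dense_image hc h).mono ?_
  rintro _ ⟨X, ⟨Y, hY⟩, rfl⟩
  refine ⟨Y.submatrix f.symm e.symm, ?_⟩
  simp only [Matrix.submatrix_mul_equiv, hY, Matrix.submatrix_one_equiv]

theorem LInv_row {R : Type*} [Ring R] [TopologicalSpace R]
    {m : Type} [Fintype m]
    (h : Dense (LInv R m Unit)) : Dense (LInv R (m ⊕ Unit) Unit) := by
  intro X
  have hc : Continuous (fun c : Matrix m Unit R => fromRows c X.toRows₂) := by
    refine continuous_matrix ?_
    rintro (i | i) j
    · exact continuous_id.matrix_elem i j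
    · exact continuous_const
  have := map_mem_closure (t := LInv R (m ⊕ Unit) Unit) hc (h X.toRows₁) (by
    rintro c ⟨d, hd⟩
    refine ⟨fromCols d 0, ?_⟩
    rw [fromCols_mul_fromRows, hd]
    simp)
  simpa using this

theorem LInv_step {R : Type*} [Ring R] [TopologicalSpace R] [IsTopologicalRing R]
    {m n : Type} [Fintype m] [Fintype n] [DecidableEq n]
    (h1 : Dense (LInv R m Unit)) (h : Dense (LInv R m n)) :
    Dense (LInv R (m ⊕ Unit) (Unit ⊕ n)) := by
  intro X
  rw [← fromBlocks_toBlocks X]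
  generalize X.toBlocks₁₁ = c
  generalize X.toBlocks₁₂ = W
  generalize X.toBlocks₂₁ = r
  generalize X.toBlocks₂₂ = w
  rw [← closure_closure]
  have hc : Continuous (fun c : Matrix m Unit R => fromBlocks c W r w) :=
    continuous_id.matrix_fromBlocks continuous_const continuous_const continuous_const
  refine map_mem_closure (f := fun c : Matrix m Unit R => fromBlocks c W r w) hc (h1 c) ?_
  rintro c ⟨d, hd⟩
  set p := (1 - r) * d with hp
  set w' := w + p * W with hw'
  have hc2 : Continuous (fun Z : Matrix m n R =>
      fromBlocks c (Z + c * w') r (w' - p * (Z + c * w'))) := by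
    refine continuous_const.matrix_fromBlocks ?_ continuous_const ?_
    · exact continuous_id.add continuous_const
    · exact continuous_const.sub (continuous_const.matrix_mul (continuous_id.add continuous_const))
  have := map_mem_closure (t := LInv R (m ⊕ Unit) (Unit ⊕ n)) hc2 (h (W - c * w')) ?_
  · simpa [hw'] using this
  rintro Z ⟨Y, hY⟩
  classical
  have hpc : p * c = 1 - r := by rw [hp, Matrix.mul_assoc, hd, Matrix.mul_one]
  -- row operations
  refine ⟨(fromBlocks 1 (-w') 0 1 : Matrix (Unit ⊕ n) (Unit ⊕ n) R) *
    ((fromBlocks 0 1 Y 0 : Matrix (Unit ⊕ n) (m ⊕ Unit) R) *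
    ((fromBlocks 1 (-c) 0 1 : Matrix (m ⊕ Unit) (m ⊕ Unit) R) *
      (fromBlocks 1 0 p 1 : Matrix (m ⊕ Unit) (m ⊕ Unit) R))), ?_⟩
  have e1 : (fromBlocks 1 0 p 1 : Matrix (m ⊕ Unit) (m ⊕ Unit) R) *
      fromBlocks c (Z + c * w') r (w' - p * (Z + c * w')) = fromBlocks c (Z + c * w') 1 w' := by
    rw [fromBlocks_multiply]; simp [hpc]
  have e2 : (fromBlocks 1 (-c) 0 1 : Matrix (m ⊕ Unit) (m ⊕ Unit) R) *
      fromBlocks c (Z + c * w') (1 : Matrix Unit Unit R) w' =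
        fromBlocks 0 Z (1 : Matrix Unit Unit R) w' := by
    rw [fromBlocks_multiply]; simp
  have e3 : (fromBlocks 0 1 Y 0 : Matrix (Unit ⊕ n) (m ⊕ Unit) R) *
      fromBlocks 0 Z (1 : Matrix Unit Unit R) w' =
        (fromBlocks 1 w' 0 1 : Matrix (Unit ⊕ n) (Unit ⊕ n) R) := by
    rw [fromBlocks_multiply]; simp [hY]
  have e4 : (fromBlocks 1 (-w') 0 1 : Matrix (Unit ⊕ n) (Unit ⊕ n) R) *
      (fromBlocks 1 w' 0 1 : Matrix (Unit ⊕ n) (Unit ⊕ n) R) = 1 := by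
    rw [fromBlocks_multiply]; simp
  simp only [Matrix.mul_assoc]
  rw [e1, e2, e3, e4]

theorem LInv_dense {R : Type*} [Ring R] [TopologicalSpace R] [IsTopologicalRing R] (t : ℕ)
    (h : Dense (LInv R (Fin t) Unit)) (n : ℕ) :
    Dense (LInv R (Fin (t + n)) Unit) ∧ Dense (LInv R (Fin (t + n)) (Fin (n + 1))) := by
  have e : ∀ k, Nonempty (Fin k ⊕ Unit ≃ Fin (k + 1)) := fun k =>
    ⟨Fintype.equivFinOfCardEq (by simp)⟩
  have e' : ∀ k, Nonempty (Unit ⊕ Fin k ≃ Fin (k + 1)) := fun k =>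
    ⟨Fintype.equivFinOfCardEq (by simp [add_comm])⟩
  induction n with
  | zero => exact ⟨h, LInv_reindex (Equiv.refl _) (Fintype.equivFinOfCardEq (by simp)) h⟩
  | succ n ih =>
    obtain ⟨e⟩ := e (t + n)
    obtain ⟨e'⟩ := e' (n + 1)
    exact ⟨LInv_reindex e (Equiv.refl _) (LInv_row ih.1),
      LInv_reindex e e' (LInv_step ih.1 ih.2)⟩

end Helpers



/-- If `1 ∈ A ⊆ B` is an inclusion of unital C*-algebras and `E : B → A` is a faithful
conditional expectation with a quasi-basis of `n` elements whose index is invertible,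
then `tsr (B) ≤ tsr (A) + n - 1`, expressed via density of the sets of left-generating
tuples: if `Lg_t (A)` is dense in `A^t` then `Lg_{t+n-1} (B)` is dense in `B^{t+n-1}`. -/
theorem tsr_le_of_conditional_expectation
    {B : Type*} [CStarAlgebra B] [PartialOrder B] [StarOrderedRing B]
    (A : StarSubalgebra ℂ B) (hA : IsClosed (A : Set B))
    (E : B →ₗ[ℂ] B)
    (hrange : ∀ x : B, E x ∈ A)
    (hid : ∀ x ∈ A, E x = x)
    (hbimod : ∀ a ∈ A, ∀ c ∈ A, ∀ x : B, E (a * x * c) = a * E x * c)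
    (hpos : ∀ x : B, 0 ≤ x → 0 ≤ E x)
    (hfaithful : ∀ x : B, E (star x * x) = 0 → x = 0)
    (n : ℕ) (u : Fin n → B)
    (hqb₁ : ∀ b : B, b = ∑ j, u j * E (star (u j) * b))
    (hqb₂ : ∀ b : B, b = ∑ j, E (b * u j) * star (u j))
    (hindex : IsUnit (∑ j, u j * star (u j)))
    (t : ℕ) (ht : 1 ≤ t)
    (htsrA : Dense {c : Fin t → A |
      ∃ d : Fin t → A, ∑ i, (d i : B) * (c i : B) = 1}) :
    Dense {c : Fin (t + n - 1) → B |
      ∃ d : Fin (t + n - 1) → B, ∑ i, d i * c i = 1} := by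
  rcases n with _ | k
  · have h10 : (1 : B) = 0 := by simpa using hqb₁ 1
    have : Subsingleton B := subsingleton_of_zero_eq_one h10.symm
    intro c
    exact subset_closure ⟨0, Subsingleton.elim _ _⟩
  change Dense {c : Fin (t + k) → B | ∃ d : Fin (t + k) → B, ∑ i, d i * c i = 1}
  have h0 : Dense (LInv A (Fin t) Unit) := by
    have hc : Continuous (fun c : Fin t → A => (Matrix.of fun i (_ : Unit) => c i)) :=
      continuous_matrix fun i _ => continuous_apply i
    have hs : Function.Surjective
        (fun c : Fin t → A => (Matrix.of fun i (_ : Unit) => c i)) := fun X =>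
      ⟨fun i => X i (), by ext i j; rfl⟩
    refine (hs.denseRange.dense_image hc htsrA).mono ?_
    rintro _ ⟨c, ⟨d, hd⟩, rfl⟩
    refine ⟨Matrix.of fun _ i => d i, ?_⟩
    ext i j
    simpa [Matrix.mul_apply] using hd
  have hD := (LInv_dense t h0 k).2
  intro b
  have hc : Continuous (fun X : Matrix (Fin (t + k)) (Fin (k + 1)) A =>
      (fun i => ∑ j, (X i j : B) * star (u j))) := by
    refine continuous_pi fun i => continuous_finsetSum _ fun j _ => ?_
    exact (continuous_subtype_val.comp (continuous_id.matrix_elem i j)).mul continuous_const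
  have key := map_mem_closure
    (t := {c : Fin (t + k) → B | ∃ d : Fin (t + k) → B, ∑ i, d i * c i = 1}) hc
    (hD (Matrix.of fun i j => ⟨E (b i * u j), hrange _⟩)) ?_
  · have hb : (fun i => ∑ j, E (b i * u j) * star (u j)) = b := by
      funext i; exact (hqb₂ (b i)).symm
    simpa [hb] using key
  rintro X ⟨Y, hY⟩
  obtain ⟨v, hv⟩ := hindex.exists_left_inv
  have hY' : ∀ j l, ∑ i, (Y j i : B) * (X i l : B) = if j = l then 1 else 0 := by
    intro j l
    have := congrArg (fun a : A => (a : B)) (congrFun (congrFun hY j) l)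
    simp only [Matrix.mul_apply, Matrix.one_apply] at this
    split_ifs at this ⊢ <;> simpa using this
  refine ⟨fun i => v * ∑ j, u j * (Y j i : B), ?_⟩
  rw [← hv]
  simp only [mul_assoc, ← Finset.mul_sum]
  congr 1
  calc ∑ i, (∑ j, u j * (Y j i : B)) * ∑ l, (X i l : B) * star (u l)
      = ∑ j, ∑ l, u j * (∑ i, (Y j i : B) * (X i l : B)) * star (u l) := by
        simp only [Finset.mul_sum, Finset.sum_mul, mul_assoc]
        rw [Finset.sum_comm]
        conv_rhs => rw [Finset.sum_comm]
        refine Finset.sum_congr rfl fun j _ => ?_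
        rw [Finset.sum_comm]
    _ = ∑ j, u j * star (u j) := by
        simp [hY']
end

section
/- Let 1 ∈ A ⊆ B be an inclusion of unital C*-algebras, and let E : B → A be a faithful conditional expectation admitting a quasi-basis u_1, …, u_n such that Index(E) = Σ_{j=1}^n u_j u_j^* is invertible in B. Then tsr(A) ≤ n·tsr(B) + n² − 2n + 1; equivalently, for every integer t ≥ 1, if Lg_t(B) is dense in B^t, then Lg_{nt+(n−1)²}(A) is dense in A^{nt+(n−1)²}. -/
namespace TsrAux

/-- Left invertibility of a matrix given by its rows: the rows span all unit vectors. -/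
def LI {B : Type*} [Ring B] {k n : ℕ} (x : Fin k → Fin n → B) : Prop :=
  ∀ j, (Pi.single j 1 : Fin n → B) ∈ Submodule.span B (Set.range x)

lemma dense_col {B : Type*} [Ring B] [TopologicalSpace B] [IsTopologicalRing B] {t : ℕ}
    (h : Dense {c : Fin t → B | ∃ d : Fin t → B, ∑ i, d i * c i = 1}) (k : ℕ) (hk : t ≤ k) :
    Dense {c : Fin k → B | ∃ d : Fin k → B, ∑ i, d i * c i = 1} := by
  obtain ⟨s, rfl⟩ := Nat.exists_eq_add_of_le hk
  intro x
  let f : (Fin t → B) → (Fin (t + s) → B) :=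
    fun v => Fin.addCases (motive := fun _ => B) v (fun i => x (Fin.natAdd t i))
  have hf : Continuous f := by
    refine continuous_pi fun i => ?_
    refine Fin.addCases (fun i => ?_) (fun i => ?_) i
    · simp only [f, Fin.addCases_left]; fun_prop
    · simp only [f, Fin.addCases_right]; fun_prop
  have hx : f (fun i => x (Fin.castAdd s i)) = x := by
    funext i
    refine Fin.addCases (fun i => ?_) (fun i => ?_) i
    · simp only [f, Fin.addCases_left]
    · simp only [f, Fin.addCases_right]
  rw [← hx]
  refine map_mem_closure hf (h _) ?_
  rintro v ⟨d, hd⟩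
  refine ⟨Fin.addCases (motive := fun _ => B) d (fun _ => 0), ?_⟩
  rw [Fin.sum_univ_add]
  simp [f, Fin.addCases_left, Fin.addCases_right, hd]

lemma dense_LI {B : Type*} [Ring B] [TopologicalSpace B] [IsTopologicalRing B] {t : ℕ}
    (h : Dense {c : Fin t → B | ∃ d : Fin t → B, ∑ i, d i * c i = 1}) (n : ℕ) :
    ∀ k, t + n ≤ k → Dense {x : Fin k → Fin (n + 1) → B | LI x} := by
  induction n with
  | zero =>
    intro k hk x
    let f : (Fin k → B) → (Fin k → Fin 1 → B) := fun v i _ => v i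
    have hf : Continuous f := by fun_prop
    have hx : f (fun i => x i 0) = x := by
      funext i j
      simp [f, Subsingleton.elim j 0]
    rw [← hx]
    refine map_mem_closure hf (dense_col h k hk _) ?_
    rintro v ⟨d, hd⟩ j
    rw [Submodule.mem_span_range_iff_exists_fun]
    refine ⟨d, ?_⟩
    funext l
    obtain rfl : j = l := Fin.ext (by omega)
    simp [f, hd]
  | succ n ih =>
    intro k hk
    obtain ⟨k, rfl⟩ : ∃ k', k = k' + 1 := ⟨k - 1, by omega⟩
    let S1 : Set (Fin (k + 1) → Fin (n + 2) → B) :=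
      {x | ∃ d : Fin k → B, ∑ i, d i * x i.succ 0 = 1}
    have h1 : Dense S1 := by
      intro x
      let f : (Fin k → B) → (Fin (k + 1) → Fin (n + 2) → B) :=
        fun v => Fin.cons (x 0) (fun i => Fin.cons (v i) (fun j => x i.succ j.succ))
      have hf : Continuous f := by
        refine continuous_pi fun i => continuous_pi fun j => ?_
        refine Fin.cases ?_ (fun i => ?_) i
        · simp only [f, Fin.cons_zero]; fun_prop
        · refine Fin.cases ?_ (fun j => ?_) j
          · simp only [f, Fin.cons_zero, Fin.cons_succ]; fun_prop
          · simp only [f, Fin.cons_succ]; fun_prop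
      have hx : f (fun i => x i.succ 0) = x := by
        funext i j
        refine Fin.cases ?_ (fun i => ?_) i
        · simp only [f, Fin.cons_zero]
        · refine Fin.cases ?_ (fun j => ?_) j
          · simp only [f, Fin.cons_zero, Fin.cons_succ]
          · simp only [f, Fin.cons_succ]
      rw [← hx]
      refine map_mem_closure hf (dense_col h k (by omega) _) ?_
      rintro v ⟨d, hd⟩
      exact ⟨d, by simpa [f] using hd⟩
    refine dense_closure.mp (h1.mono ?_)
    rintro x ⟨d, hd⟩
    set w : B := 1 - x 0 0 with hw
    set ρ : Fin (n + 2) → B := x 0 + w • ∑ i, d i • x i.succ with hρ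
    have hρ0 : ρ 0 = 1 := by
      simp [hρ, Finset.sum_apply, hd, hw]
    let row : (Fin k → Fin (n + 1) → B) → Fin k → Fin (n + 2) → B :=
      fun M i => x i.succ 0 • ρ + Fin.cons 0 (M i)
    let f : (Fin k → Fin (n + 1) → B) → (Fin (k + 1) → Fin (n + 2) → B) :=
      fun M => Fin.cons (ρ - w • ∑ i, d i • row M i) (row M)
    have hrow : Continuous row := by
      refine continuous_pi fun i => continuous_pi fun j => ?_
      refine Fin.cases ?_ (fun j => ?_) j
      · simp only [row, Pi.add_apply, Fin.cons_zero]; fun_prop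
      · simp only [row, Pi.add_apply, Fin.cons_succ]; fun_prop
    have hf : Continuous f := by
      refine continuous_pi fun i => continuous_pi fun j => ?_
      refine Fin.cases ?_ (fun i => ?_) i
      · simp only [f, Fin.cons_zero, Pi.sub_apply, Pi.smul_apply, Finset.sum_apply, smul_eq_mul]
        fun_prop
      · simp only [f, Fin.cons_succ]; fun_prop
    have hx : f (fun i j => x i.succ j.succ - x i.succ 0 * ρ j.succ) = x := by
      have hr : row (fun i j => x i.succ j.succ - x i.succ 0 * ρ j.succ) = fun i => x i.succ := by
        funext i j
        refine Fin.cases ?_ (fun j => ?_) j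
        · simp [row, hρ0]
        · simp [row]
      funext i
      refine Fin.cases ?_ (fun i => ?_) i
      · simp only [f, Fin.cons_zero, hr]; rw [hρ]; simp
      · simp only [f, Fin.cons_succ, hr]
    rw [← hx]
    refine map_mem_closure hf (ih k (by omega) _) ?_
    intro M hM
    set P := Submodule.span B (Set.range (f M)) with hP
    have m0 : ∀ i, row M i ∈ P := fun i =>
      Submodule.subset_span ⟨i.succ, by simp [f]⟩
    have m1 : ρ - w • ∑ i, d i • row M i ∈ P :=
      Submodule.subset_span ⟨0, by simp [f]⟩
    have m2 : ρ ∈ P := by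
      have : w • ∑ i, d i • row M i ∈ P :=
        P.smul_mem _ (P.sum_mem fun i _ => P.smul_mem _ (m0 i))
      simpa using P.add_mem m1 this
    have m3 : ∀ i, (Fin.cons 0 (M i) : Fin (n + 2) → B) ∈ P := fun i => by
      simpa [row] using P.sub_mem (m0 i) (P.smul_mem (x i.succ 0) m2)
    have m4 : ∀ j : Fin (n + 1), (Pi.single j.succ 1 : Fin (n + 2) → B) ∈ P := by
      intro j
      obtain ⟨y, hy⟩ := (Submodule.mem_span_range_iff_exists_fun B).1 (hM j)
      have : (Pi.single j.succ 1 : Fin (n + 2) → B)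
          = ∑ i, y i • (Fin.cons 0 (M i) : Fin (n + 2) → B) := by
        funext l
        refine Fin.cases ?_ (fun l => ?_) l
        · simp [Finset.sum_apply, Pi.single_apply, (Fin.succ_ne_zero j).symm]
        · have := congrFun hy l
          simp only [Finset.sum_apply, Pi.smul_apply, Fin.cons_succ] at this ⊢
          rw [this]
          simp [Pi.single_apply]
      rw [this]
      exact P.sum_mem fun i _ => P.smul_mem _ (m3 i)
    intro j
    refine Fin.cases ?_ m4 j
    have : (Pi.single 0 1 : Fin (n + 2) → B)
        = ρ - ∑ j : Fin (n + 1), ρ j.succ • (Pi.single j.succ 1 : Fin (n + 2) → B) := by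
      funext l
      refine Fin.cases ?_ (fun l => ?_) l
      · simp [Finset.sum_apply, hρ0, Pi.single_apply, (Fin.succ_ne_zero _).symm]
      · simp [Finset.sum_apply, Pi.single_apply]
    rw [this]
    exact P.sub_mem m2 (P.sum_mem fun j _ => P.smul_mem _ (m4 j))

lemma core {B : Type*} [CStarAlgebra B]
    (A : StarSubalgebra ℂ B) (E : B →L[ℂ] B)
    (hrange : ∀ x : B, E x ∈ A)
    (hid : ∀ x ∈ A, E x = x)
    (hbimod : ∀ a ∈ A, ∀ c ∈ A, ∀ x : B, E (a * x * c) = a * E x * c)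
    (n m N : ℕ) (u : Fin n → B)
    (hqb₁ : ∀ b : B, b = ∑ j, u j * E (star (u j) * b))
    (hS : Dense {x : Fin (m + 1) → Fin n → B | LI x})
    (e : Fin N ≃ Option (Fin m × Fin n)) :
    Dense {c : Fin N → A | ∃ d : Fin N → A, ∑ i, (d i : B) * (c i : B) = 1} := by
  have hr : ∀ c ∈ A, ∀ x : B, E (x * c) = E x * c := fun c hc x => by
    simpa using hbimod 1 A.one_mem c hc x
  have hl : ∀ c ∈ A, ∀ x : B, E (c * x) = c * E x := fun c hc x => by
    simpa using hbimod c hc 1 A.one_mem x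
  have hE1 : E 1 = 1 := hid 1 A.one_mem
  have hEE : ∀ x, E (E x) = E x := fun x => hid _ (hrange x)
  intro a
  -- original data
  let a0 : A := a (e.symm none)
  let a1 : Fin m → Fin n → A := fun i j => a (e.symm (some (i, j)))
  let β : Fin m → B := fun i => ∑ j, u j * (a1 i j : B)
  let x0 : Fin (m + 1) → Fin n → B :=
    Fin.cons (fun l => (a0 : B) * E (u l) + (u l - E (u l))) (fun i l => β i * E (u l))
  let C : (Fin n → B) → (B →L[ℂ] B) := fun r =>
    ∑ l, (ContinuousLinearMap.mul ℂ B (r l)) ∘L E ∘L (ContinuousLinearMap.mul ℂ B (star (u l)))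
  have hC : ∀ r b, C r b = ∑ l, r l * E (star (u l) * b) := by
    intro r b; simp [C, ContinuousLinearMap.sum_apply]
  have hCc : Continuous C := by
    refine continuous_finset_sum _ fun l _ => ?_
    exact ((ContinuousLinearMap.mul ℂ B).continuous.comp (continuous_apply l)).clm_comp
      continuous_const
  let T : (Fin (m + 1) → Fin n → B) → (B →L[ℂ] B) := fun x => E + (C (x 0) - E ∘L C (x 0))
  have hTc : Continuous T := by
    have : Continuous fun x : Fin (m + 1) → Fin n → B => C (x 0) :=
      hCc.comp (continuous_apply 0)
    exact continuous_const.add (this.sub (continuous_const.clm_comp this))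
  have hEq : ∀ b, E b = ∑ l, E (u l) * E (star (u l) * b) := by
    intro b
    conv_lhs => rw [hqb₁ b]
    rw [map_sum]
    exact Finset.sum_congr rfl fun l _ => hr _ (hrange _) _
  have hC0 : ∀ b, C (x0 0) b = (a0 : B) * E b + (b - E b) := by
    intro b
    rw [hC]
    simp only [x0, Fin.cons_zero, add_mul, sub_mul, Finset.sum_add_distrib, Finset.sum_sub_distrib,
      mul_assoc, ← Finset.mul_sum]
    rw [← hEq, ← hqb₁]
  have hC1 : ∀ i b, C (x0 (Fin.succ i)) b = β i * E b := by
    intro i b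
    rw [hC]
    simp only [x0, Fin.cons_succ, mul_assoc, ← Finset.mul_sum]
    rw [← hEq]
  have hT0 : T x0 = 1 := by
    ext b
    simp only [T, ContinuousLinearMap.add_apply, ContinuousLinearMap.sub_apply,
      ContinuousLinearMap.comp_apply, hC0, map_add, map_sub, hEE,
      ContinuousLinearMap.one_apply, hl _ a0.2]
    abel
  let z : (Fin (m + 1) → Fin n → B) → B := fun x => Ring.inverse (T x) 1
  have hzc : ContinuousAt z x0 := by
    have h1 : ContinuousAt (fun x => Ring.inverse (T x)) x0 := by
      have : ContinuousAt Ring.inverse (T x0) := by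
        rw [hT0]; exact NormedRing.inverse_continuousAt (1 : (B →L[ℂ] B)ˣ)
      exact this.comp hTc.continuousAt
    exact h1.clm_apply continuousAt_const
  have hz0 : z x0 = 1 := by simp [z, hT0]
  have hunit : ∀ᶠ x in nhds x0, IsUnit (T x) := by
    have : ∀ᶠ y in nhds (T x0), IsUnit y := by
      rw [hT0]; exact Units.isOpen.mem_nhds isUnit_one
    exact hTc.continuousAt.eventually this
  let G : (Fin (m + 1) → Fin n → B) → Option (Fin m × Fin n) → A := fun x s =>
    match s with
    | none => ⟨E (C (x 0) (z x)), hrange _⟩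
    | some (i, j) => ⟨E (star (u j) * C (x i.succ) (z x)), hrange _⟩ +
        (a1 i j - ⟨E (star (u j) * β i), hrange _⟩)
  have hCz : ∀ i, ContinuousAt (fun x => C (x i) (z x)) x0 := fun i =>
    (hCc.comp (continuous_apply i)).continuousAt.clm_apply hzc
  have hGc : ContinuousAt (fun x => (fun s => G x (e s) : Fin N → A)) x0 := by
    refine continuousAt_pi.2 fun s => ?_
    rcases e s with _ | ⟨i, j⟩
    · simp only [G]
      rw [Topology.IsInducing.subtypeVal.continuousAt_iff]
      exact E.continuous.continuousAt.comp (hCz 0)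
    · simp only [G]
      rw [Topology.IsInducing.subtypeVal.continuousAt_iff]
      have : ContinuousAt (fun x => E (star (u j) * C (x i.succ) (z x))) x0 :=
        E.continuous.continuousAt.comp (continuousAt_const.mul (hCz i.succ))
      exact this.add continuousAt_const
  have hG0 : (fun s => G x0 (e s) : Fin N → A) = a := by
    funext s
    obtain ⟨s, rfl⟩ := e.symm.surjective s
    rw [Equiv.apply_symm_apply]
    rcases s with _ | ⟨i, j⟩
    · apply Subtype.ext
      simp only [G, hC0, hz0, hE1]
      simp [a0, hid _ (a (e.symm none)).2]
    · apply Subtype.ext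
      simp only [G, hC1, hz0, hE1]
      simp [a1]
  have hne : (nhdsWithin x0 {x | LI x}).NeBot := mem_closure_iff_nhdsWithin_neBot.1 (hS x0)
  have hten : Filter.Tendsto (fun x => (fun s => G x (e s) : Fin N → A))
      (nhdsWithin x0 {x | LI x}) (nhds a) := by
    have := hGc.tendsto.mono_left (nhdsWithin_le_nhds (s := {x | LI x}))
    rwa [hG0] at this
  refine mem_closure_of_tendsto hten ?_
  filter_upwards [self_mem_nhdsWithin, nhdsWithin_le_nhds hunit] with x hx hTx
  have hTz : T x (z x) = 1 := by
    have := Ring.mul_inverse_cancel _ hTx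
    simpa using congrArg (fun f : B →L[ℂ] B => f 1) this
  have hTz' : E (z x) + (C (x 0) (z x) - E (C (x 0) (z x))) = 1 := by simpa [T] using hTz
  have hEz : E (z x) = 1 := by
    have := congrArg E hTz'
    simpa [hEE, hE1] using this
  have hC0z : E (C (x 0) (z x)) = C (x 0) (z x) := by
    rw [hEz] at hTz'
    exact (sub_eq_zero.1 (by simpa using hTz')).symm
  have hPi : ∀ i, ∑ j, u j * (G x (some (i, j)) : B) = C (x i.succ) (z x) := by
    intro i
    have : ∀ j, (G x (some (i, j)) : B) = E (star (u j) * C (x i.succ) (z x)) +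
        ((a1 i j : B) - E (star (u j) * β i)) := fun j => rfl
    simp only [this, mul_add, mul_sub, Finset.sum_add_distrib, Finset.sum_sub_distrib]
    rw [← hqb₁, ← hqb₁]
    simp [β]
  have hy : ∀ l, ∃ y : Fin (m + 1) → B, ∑ i, y i • x i = Pi.single l 1 := fun l =>
    (Submodule.mem_span_range_iff_exists_fun B).1 (hx l)
  choose y hy using hy
  have hyC : ∀ l, ∑ i, y l i * C (x i) (z x) = E (star (u l) * z x) := by
    intro l
    simp only [hC, Finset.mul_sum]
    rw [Finset.sum_comm]
    have : ∀ p, ∑ i, y l i * (x i p * E (star (u p) * z x))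
        = (Pi.single l 1 : Fin n → B) p * E (star (u p) * z x) := by
      intro p
      rw [← hy l]
      simp [Finset.sum_apply, Finset.sum_mul, mul_assoc]
    simp only [this]
    simp [Pi.single_apply]
  have hzz : z x = ∑ i, (∑ l, u l * y l i) * C (x i) (z x) := by
    conv_lhs => rw [hqb₁ (z x)]
    simp only [← hyC, Finset.mul_sum, Finset.sum_mul]
    rw [Finset.sum_comm]
    simp only [mul_assoc]
  let D : Option (Fin m × Fin n) → A := fun s =>
    match s with
    | none => ⟨E (∑ l, u l * y l 0), hrange _⟩
    | some (i, j) => ⟨E ((∑ l, u l * y l i.succ) * u j), hrange _⟩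
  refine ⟨fun s => D (e s), ?_⟩
  rw [Equiv.sum_comp e (fun s => (D s : B) * (G x s : B)), Fintype.sum_option,
    Fintype.sum_prod_type]
  have d0 : (D none : B) * (G x none : B) = E ((∑ l, u l * y l 0) * C (x 0) (z x)) := by
    rw [← hC0z, hr _ (hrange _)]
  have d1 : ∀ i, ∑ j, (D (some (i, j)) : B) * (G x (some (i, j)) : B)
      = E ((∑ l, u l * y l i.succ) * C (x i.succ) (z x)) := by
    intro i
    rw [← hPi, Finset.mul_sum, map_sum]
    refine Finset.sum_congr rfl fun j _ => ?_
    rw [← mul_assoc, hr _ (G x (some (i, j))).2]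
  rw [d0]
  simp only [d1]
  rw [← map_sum, ← map_add, ← Fin.sum_univ_succ (fun i => (∑ l, u l * y l i) * C (x i) (z x)),
    ← hzz, hEz]

end TsrAux

/-- If `1 ∈ A ⊆ B` is an inclusion of unital C*-algebras and `E : B → A` is a faithful
conditional expectation with a quasi-basis of `n` elements whose index is invertible,
then `tsr (A) ≤ n * tsr (B) + n ^ 2 - 2 * n + 1`, expressed via density of the sets of
left-generating tuples: if `Lg_t (B)` is dense in `B^t` then `Lg_{n*t+(n-1)^2} (A)` is
dense in `A^{n*t+(n-1)^2}`. -/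
theorem tsr_subalgebra_le_of_conditional_expectation
    {B : Type*} [CStarAlgebra B] [PartialOrder B] [StarOrderedRing B]
    (A : StarSubalgebra ℂ B) (hA : IsClosed (A : Set B))
    (E : B →ₗ[ℂ] B)
    (hrange : ∀ x : B, E x ∈ A)
    (hid : ∀ x ∈ A, E x = x)
    (hbimod : ∀ a ∈ A, ∀ c ∈ A, ∀ x : B, E (a * x * c) = a * E x * c)
    (hpos : ∀ x : B, 0 ≤ x → 0 ≤ E x)
    (hfaithful : ∀ x : B, E (star x * x) = 0 → x = 0)
    (n : ℕ) (u : Fin n → B)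
    (hqb₁ : ∀ b : B, b = ∑ j, u j * E (star (u j) * b))
    (hqb₂ : ∀ b : B, b = ∑ j, E (b * u j) * star (u j))
    (hindex : IsUnit (∑ j, u j * star (u j)))
    (t : ℕ) (ht : 1 ≤ t)
    (htsrB : Dense {c : Fin t → B | ∃ d : Fin t → B, ∑ i, d i * c i = 1}) :
    Dense {c : Fin (n * t + (n - 1) ^ 2) → A |
      ∃ d : Fin (n * t + (n - 1) ^ 2) → A, ∑ i, (d i : B) * (c i : B) = 1} := by
  have hEm : Monotone E := by
    intro x y hxy
    have := hpos (y - x) (sub_nonneg.2 hxy)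
    rwa [map_sub, sub_nonneg] at this
  let Ep : B →ₚ[ℂ] B := { E with monotone' := hEm }
  have hEc : Continuous E := map_continuous Ep
  rcases n with _ | n
  · have h01 : (0 : B) = 1 := by
      have := hqb₁ 1
      simpa using this.symm
    intro c
    refine subset_closure ⟨0, ?_⟩
    simpa using h01
  · obtain ⟨t, rfl⟩ : ∃ t', t = t' + 1 := ⟨t - 1, by omega⟩
    have hS := TsrAux.dense_LI htsrB n (t + n + 1) (by omega)
    have e : Fin ((n + 1) * (t + 1) + (n + 1 - 1) ^ 2) ≃ Option (Fin (t + n) × Fin (n + 1)) :=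
      Fintype.equivOfCardEq (by simp; ring)
    exact TsrAux.core A ⟨E, hEc⟩ hrange hid hbimod (n + 1) (t + n) _ u hqb₁ hS e
end

section
/- (Warfield–Rieffel cancellation, C*-algebra form.) Let A be a C*-algebra, let p, q, r be projections in matrix algebras over A with r ∈ M_k(A), and let n ∈ ℕ. If p ⊕ r ∼ q ⊕ r, tsr(r M_k(A) r) ≤ n, and n*r ≾ p, then p ∼ q. -/
open scoped Matrix

/-- Murray–von Neumann equivalence of projections in (possibly different-sized)
matrix algebras over a C*-algebra `A`. -/
def MvNEquiv {A : Type*} [NonUnitalCStarAlgebra A] {m n : Type*} [Fintype m] [Fintype n]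
    (p : Matrix m m A) (q : Matrix n n A) : Prop :=
  ∃ v : Matrix m n A, v * vᴴ = p ∧ vᴴ * v = q

/-- `p` is a projection in a matrix algebra over `A`. -/
def IsProjM {A : Type*} [NonUnitalCStarAlgebra A] {m : Type*} [Fintype m]
    (p : Matrix m m A) : Prop :=
  pᴴ = p ∧ p * p = p

/-- `p ≾ q`: `p` is Murray–von Neumann equivalent to a subprojection `q₀` of `q`. -/
def SubEquiv {A : Type*} [NonUnitalCStarAlgebra A] {m n : Type*} [Fintype m] [Fintype n]
    (p : Matrix m m A) (q : Matrix n n A) : Prop :=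
  ∃ q₀ : Matrix n n A, IsProjM q₀ ∧ MvNEquiv p q₀ ∧ q₀ * q = q₀

/-- The block-diagonal direct sum `p ⊕ q` of two matrices over `A`. -/
def dSum {A : Type*} [NonUnitalCStarAlgebra A] {m n : Type*}
    (p : Matrix m m A) (q : Matrix n n A) : Matrix (m ⊕ n) (m ⊕ n) A :=
  Matrix.fromBlocks p 0 0 q

/-- `N * p`: the direct sum of `N` copies of `p`. -/
def nFold {A : Type*} [NonUnitalCStarAlgebra A] {m : Type*} (N : ℕ)
    (p : Matrix m m A) : Matrix (m × Fin N) (m × Fin N) A :=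
  Matrix.blockDiagonal fun _ : Fin N => p

/-- `tsr (r M r) ≤ N` for the corner of a matrix algebra over `A` by the projection `r`:
the `N`-tuples of elements of `r M r` generating `r M r` as a left ideal are dense. -/
def CornerTsrLe {A : Type*} [NonUnitalCStarAlgebra A] {m : Type*} [Fintype m]
    (r : Matrix m m A) (N : ℕ) : Prop :=
  Dense {c : Fin N → {x : Matrix m m A // r * x * r = x} |
    ∃ d : Fin N → {x : Matrix m m A // r * x * r = x},
      ∑ i, (d i : Matrix m m A) * (c i : Matrix m m A) = r}

/-- A C*-algebra is simple if its only closed two-sided ideals are `0` and the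
whole algebra. -/
def IsSimpleCStarAlgebra (A : Type*) [NonUnitalCStarAlgebra A] : Prop :=
  ∀ I : Set A, IsClosed I → (0 : A) ∈ I → (∀ x ∈ I, ∀ y ∈ I, x + y ∈ I) →
    (∀ x ∈ I, -x ∈ I) → (∀ x ∈ I, ∀ a : A, a * x ∈ I) → (∀ x ∈ I, ∀ a : A, x * a ∈ I) →
    I = {0} ∨ I = Set.univ


theorem cs_polar {B : Type*} [NonUnitalCStarAlgebra B] (p q x y : B)
    (hp : star p = p) (hp2 : p * p = p) (hq : star q = q) (hq2 : q * q = q)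
    (hxy : x * y = p) (hyx : y * x = q) :
    ∃ w : B, w * star w = p ∧ star w * w = q ∧ p * w * q = w := by
  let _ := CStarAlgebra.spectralOrder B
  have := CStarAlgebra.spectralOrderedRing B
  obtain ⟨x', hx'⟩ : ∃ x', x' = p * x * q := ⟨_, rfl⟩
  obtain ⟨y', hy'⟩ : ∃ y', y' = q * y * p := ⟨_, rfl⟩
  have e1 : x' * y' = p := by
    calc x' * y' = p * x * (q * q) * y * p := by rw [hx', hy']; simp only [mul_assoc]
      _ = p * x * (y * x) * y * p := by rw [hq2, hyx]
      _ = p * (x * y) * (x * y) * p := by simp only [mul_assoc]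
      _ = p := by rw [hxy, hp2, hp2, hp2]
  have e2 : y' * x' = q := by
    calc y' * x' = q * y * (p * p) * x * q := by rw [hx', hy']; simp only [mul_assoc]
      _ = q * y * (x * y) * x * q := by rw [hp2, hxy]
      _ = q * (y * x) * (y * x) * q := by simp only [mul_assoc]
      _ = q := by rw [hyx, hq2, hq2, hq2]
  have xq : x' * q = x' := by rw [hx', mul_assoc, hq2]
  have yp : y' * p = y' := by rw [hy', mul_assoc, hp2]
  have px : p * x' = x' := by rw [hx', ← mul_assoc, ← mul_assoc, hp2]
  have k0 : 0 ≤ star y' * y' := star_mul_self_nonneg y'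
  obtain ⟨k, hk⟩ : ∃ k, k = star y' * y' := ⟨_, rfl⟩
  obtain ⟨h, hh⟩ : ∃ h, h = x' * star x' := ⟨_, rfl⟩
  rw [← hk] at k0
  have sk : star k = k := by rw [hk]; simp
  have sh : star h = h := by rw [hh]; simp
  have hk1 : h * k = p := by
    calc h * k = x' * star (y' * x') * y' := by rw [hh, hk, star_mul]; simp only [mul_assoc]
      _ = p := by rw [e2, hq, xq, e1]
  have hk2 : k * h = p := by
    have := congrArg star hk1
    rwa [star_mul, sk, sh, hp] at this
  have cm : Commute k h := by rw [Commute, SemiconjBy, hk1, hk2]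
  have cs : Commute (CFC.sqrt k) h := cm.cfcₙ_nnreal _
  have ss := CFC.sqrt_mul_sqrt_self k k0
  have ssa : star (CFC.sqrt k) = CFC.sqrt k := (CFC.sqrt_nonneg k).isSelfAdjoint.star_eq
  have cp : Commute k p := by
    rw [Commute, SemiconjBy, hk, mul_assoc, yp, ← mul_assoc]
    have := congrArg star yp
    rw [star_mul, hp] at this
    rw [this]
  have csp : Commute (CFC.sqrt k) p := cp.cfcₙ_nnreal _
  refine ⟨CFC.sqrt k * x', ?_, ?_, ?_⟩
  · calc _ = CFC.sqrt k * (h * CFC.sqrt k) := by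
          rw [star_mul, ssa, hh]; simp only [mul_assoc]
      _ = p := by rw [← cs.eq, ← mul_assoc, ss, hk2]
  · calc _ = star x' * (CFC.sqrt k * CFC.sqrt k) * x' := by
          rw [star_mul, ssa]; simp only [mul_assoc]
      _ = star (y' * x') * (y' * x') := by rw [ss, hk, star_mul]; simp only [mul_assoc]
      _ = q := by rw [e2, hq, hq2]
  · rw [← mul_assoc, ← csp.eq, mul_assoc, mul_assoc, xq, px]

theorem cs_leftInv {B : Type*} [NonUnitalCStarAlgebra B] (r w : B)
    (hr2 : r * r = r) (hrw : r * w = w) (hwr : w * r = w) (hn : ‖r - w‖ < 1) :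
    ∃ w' : B, w' * w = r := by
  have hn' : ‖((r - w : B) : Unitization ℂ B)‖ < 1 := by rwa [Unitization.norm_inr]
  obtain ⟨U, hU⟩ := isUnit_one_sub_of_norm_lt_one hn'
  have h1 : (↑U⁻¹ : Unitization ℂ B) * (1 - ((r - w : B) : Unitization ℂ B)) = 1 := by
    rw [← hU]; simp
  have h2 : (1 - ((r - w : B) : Unitization ℂ B)) * (r : Unitization ℂ B) = w := by
    rw [sub_mul, one_mul, ← Unitization.inr_mul, sub_mul, hr2, hwr, Unitization.inr_sub]
    abel
  have h3 : (↑U⁻¹ : Unitization ℂ B) * (w : Unitization ℂ B) = r := by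
    rw [← h2, ← mul_assoc, h1, one_mul]
  obtain ⟨V, hV⟩ : ∃ V : Unitization ℂ B, V = ↑U⁻¹ := ⟨_, rfl⟩
  rw [← hV] at h3
  refine ⟨V.fst • r + r * V.snd, ?_⟩
  have h4 : (r : Unitization ℂ B) * (V * (w : Unitization ℂ B)) = r := by
    rw [h3, ← Unitization.inr_mul, hr2]
  have h5 := congrArg (fun z : Unitization ℂ B => z.snd) h4
  simp only [Unitization.snd_mul, Unitization.fst_inr, Unitization.snd_inr, Unitization.fst_mul,
    zero_smul, mul_zero, zero_add, add_zero] at h5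
  rw [mul_add, mul_smul_comm, hrw] at h5
  rw [add_mul, smul_mul_assoc, hrw, mul_assoc]
  exact h5

theorem mat_polar {A : Type*} [NonUnitalCStarAlgebra A] {ι : Type*} [Fintype ι]
    (p q x y : Matrix ι ι A)
    (hp : pᴴ = p) (hp2 : p * p = p) (hq : qᴴ = q) (hq2 : q * q = q)
    (hxy : x * y = p) (hyx : y * x = q) :
    ∃ w : Matrix ι ι A, w * wᴴ = p ∧ wᴴ * w = q ∧ p * w * q = w := by
  let _ := CStarAlgebra.spectralOrder A
  have := CStarAlgebra.spectralOrderedRing A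
  exact cs_polar (B := CStarMatrix ι ι A) p q x y hp hp2 hq hq2 hxy hyx

theorem mvn_of_alg {A : Type*} [NonUnitalCStarAlgebra A] {a b : ℕ}
    (p : Matrix (Fin a) (Fin a) A) (q : Matrix (Fin b) (Fin b) A)
    (hp : IsProjM p) (hq : IsProjM q)
    (x : Matrix (Fin a) (Fin b) A) (y : Matrix (Fin b) (Fin a) A)
    (hxy : x * y = p) (hyx : y * x = q) : MvNEquiv p q := by
  obtain ⟨W, h1, h2, h3⟩ := mat_polar
    (Matrix.fromBlocks p 0 0 0 : Matrix (Fin a ⊕ Fin b) (Fin a ⊕ Fin b) A)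
    (Matrix.fromBlocks 0 0 0 q) (Matrix.fromBlocks 0 x 0 0) (Matrix.fromBlocks 0 0 y 0)
    (by rw [Matrix.fromBlocks_conjTranspose]; simp [hp.1])
    (by rw [Matrix.fromBlocks_multiply]; simp [hp.2])
    (by rw [Matrix.fromBlocks_conjTranspose]; simp [hq.1])
    (by rw [Matrix.fromBlocks_multiply]; simp [hq.2])
    (by rw [Matrix.fromBlocks_multiply]; simp [hxy])
    (by rw [Matrix.fromBlocks_multiply]; simp [hyx])
  obtain ⟨v, hv⟩ : ∃ v : Matrix (Fin a) (Fin b) A, W = Matrix.fromBlocks 0 v 0 0 := by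
    refine ⟨p * W.toBlocks₁₂ * q, ?_⟩
    rw [← Matrix.fromBlocks_toBlocks W, Matrix.fromBlocks_multiply, Matrix.fromBlocks_multiply] at h3
    exact (Matrix.fromBlocks_toBlocks W).symm.trans (h3.symm.trans (by simp))
  subst hv
  refine ⟨v, ?_, ?_⟩
  · rw [Matrix.fromBlocks_conjTranspose, Matrix.fromBlocks_multiply] at h1
    simpa using (Matrix.fromBlocks_inj.1 h1).1
  · rw [Matrix.fromBlocks_conjTranspose, Matrix.fromBlocks_multiply] at h2
    simpa using (Matrix.fromBlocks_inj.1 h2).2.2.2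

theorem mat_leftInv {A : Type*} [NonUnitalCStarAlgebra A] {k : ℕ}
    (r : Matrix (Fin k) (Fin k) A) (hr : IsProjM r) :
    ∃ O : Set (Matrix (Fin k) (Fin k) A), IsOpen O ∧ r ∈ O ∧
      ∀ w ∈ O, r * w = w → w * r = w → ∃ w' : Matrix (Fin k) (Fin k) A, w' * w = r := by
  let _ := CStarAlgebra.spectralOrder A
  have := CStarAlgebra.spectralOrderedRing A
  refine ⟨{w | ‖CStarMatrix.ofMatrix r - CStarMatrix.ofMatrix w‖ < 1}, ?_, ?_, ?_⟩
  · have hc : Continuous (fun w : CStarMatrix (Fin k) (Fin k) A =>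
        ‖CStarMatrix.ofMatrix r - w‖) := by fun_prop
    exact isOpen_Iio.preimage hc
  · simp
  · intro w hw h1 h2
    obtain ⟨w', h⟩ := cs_leftInv (B := CStarMatrix (Fin k) (Fin k) A)
      (CStarMatrix.ofMatrix r) (CStarMatrix.ofMatrix w) hr.2 h1 h2 hw
    exact ⟨CStarMatrix.ofMatrix.symm w', h⟩

theorem alg_cancel {A : Type*} [NonUnitalRing A] {a b k : Type*}
    [Fintype a] [Fintype b] [Fintype k]
    (p : Matrix a a A) (q : Matrix b b A) (r : Matrix k k A)
    (u : Matrix a b A) (x : Matrix a k A) (l : Matrix k b A) (c : Matrix k k A)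
    (u' : Matrix b a A) (y : Matrix k a A) (l' : Matrix b k A) (d : Matrix k k A)
    (r2 : r * r = r) (p2 : p * p = p)
    (pu : p * u = u) (px : p * x = x) (rl : r * l = l) (rc : r * c = c) (cr : c * r = c)
    (xr : x * r = x) (rd : r * d = d)
    (h11 : u * u' + x * y = p) (h12 : u * l' + x * d = 0)
    (h21 : l * u' + c * y = 0) (h22 : l * l' + c * d = r)
    (k11 : u' * u + l' * l = q) (k12 : u' * x + l' * c = 0)
    (Y : Matrix k a A) (e : Matrix a k A) (w' : Matrix k k A)
    (hYe : Y * e = r) (pe : p * e = e) (Yp : Y * p = Y)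
    (hw : w' * (Y * x + d * c) = r) :
    ∃ (α : Matrix a b A) (β : Matrix b a A), α * β = p ∧ β * α = q := by
  obtain ⟨g, hg⟩ : ∃ g, g = (r - c) * w' := ⟨_, rfl⟩
  obtain ⟨x2, hx2⟩ : ∃ x2, x2 = x + e * (d * c) := ⟨_, rfl⟩
  obtain ⟨X, hX⟩ : ∃ X, X = u + e * (d * l) := ⟨_, rfl⟩
  obtain ⟨ρ, hρ⟩ : ∃ ρ, ρ = l + g * (Y * X) := ⟨_, rfl⟩
  obtain ⟨M, hM⟩ : ∃ M, M = p + e * (d * (g * Y)) := ⟨_, rfl⟩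
  obtain ⟨θ, hθ⟩ : ∃ θ, θ = y * M - d * (g * Y) := ⟨_, rfl⟩
  have rg : r * g = g := by rw [hg, ← Matrix.mul_assoc, Matrix.mul_sub, r2, rc]
  have rρ : r * ρ = ρ := by rw [hρ, Matrix.mul_add, ← Matrix.mul_assoc, rg, rl]
  have pM : p * M = M := by rw [hM, Matrix.mul_add, p2, ← Matrix.mul_assoc, pe]
  have x2r : x2 * r = x2 := by
    rw [hx2, Matrix.add_mul, xr, Matrix.mul_assoc, Matrix.mul_assoc, cr]
  have gYx2 : g * (Y * x2) = r - c := by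
    rw [hx2, Matrix.mul_add, ← Matrix.mul_assoc Y, hYe, ← Matrix.mul_assoc r, rd, hg,
      Matrix.mul_assoc, hw, Matrix.sub_mul, r2, cr]
  have huu : u * u' = p - x * y := eq_sub_of_add_eq h11
  have hul : u * l' = - (x * d) := eq_neg_of_add_eq_zero_left h12
  have hlu : l * u' = - (c * y) := eq_neg_of_add_eq_zero_left h21
  have hll : l * l' = r - c * d := eq_sub_of_add_eq h22
  refine ⟨X - x2 * ρ, u' * M - l' * (g * Y), ?_, ?_⟩
  · obtain ⟨β, hβ⟩ : ∃ β, β = u' * M - l' * (g * Y) := ⟨_, rfl⟩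
    rw [← hβ]
    have huβ : u * β = M - x * θ := by
      rw [hβ, Matrix.mul_sub, ← Matrix.mul_assoc, ← Matrix.mul_assoc, huu, hul, Matrix.sub_mul,
        pM, hθ, Matrix.mul_sub, Matrix.neg_mul]
      simp only [Matrix.mul_assoc]; abel
    have hlβ : l * β = - (g * Y) - c * θ := by
      rw [hβ, Matrix.mul_sub, ← Matrix.mul_assoc, ← Matrix.mul_assoc, hlu, hll, Matrix.sub_mul,
        ← Matrix.mul_assoc r, rg, hθ, Matrix.mul_sub, Matrix.neg_mul]
      simp only [Matrix.mul_assoc]; abel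
    have hXβ : X * β = p - x2 * θ := by
      rw [hX, Matrix.add_mul, huβ, Matrix.mul_assoc, Matrix.mul_assoc, hlβ, hx2, hM]
      simp only [Matrix.mul_assoc, Matrix.mul_sub, Matrix.mul_neg, Matrix.add_mul]; abel
    have hYp : g * (Y * p) = g * Y := by rw [Yp]
    have hρβ : ρ * β = - (r * θ) := by
      rw [hρ, Matrix.add_mul, hlβ, Matrix.mul_assoc, Matrix.mul_assoc, hXβ, Matrix.mul_sub,
        Matrix.mul_sub, hYp, ← Matrix.mul_assoc Y, ← Matrix.mul_assoc g, gYx2, Matrix.sub_mul]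
      abel
    rw [Matrix.sub_mul, hXβ, Matrix.mul_assoc, hρβ, Matrix.mul_neg, ← Matrix.mul_assoc, x2r]
    abel
  · obtain ⟨α, hα⟩ : ∃ α, α = X - x2 * ρ := ⟨_, rfl⟩
    rw [← hα]
    have pα : p * α = α := by
      rw [hα, hX, hx2, Matrix.mul_sub, Matrix.mul_add, pu, ← Matrix.mul_assoc p, pe,
        ← Matrix.mul_assoc p, Matrix.mul_add, px, ← Matrix.mul_assoc p, pe]
    have gYα : g * (Y * α) = c * ρ - l := by
      rw [hα, Matrix.mul_sub, Matrix.mul_sub, ← Matrix.mul_assoc Y x2, ← Matrix.mul_assoc g _ ρ, gYx2,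
        Matrix.sub_mul, rρ]
      nth_rw 1 [hρ]
      abel
    have hMα : M * α = u - x * ρ := by
      rw [hM, Matrix.add_mul, pα]
      simp only [Matrix.mul_assoc]
      rw [gYα, hα, hX, hx2]
      simp only [Matrix.mul_assoc, Matrix.mul_sub, Matrix.add_mul]; abel
    rw [Matrix.sub_mul, Matrix.mul_assoc, hMα, Matrix.mul_assoc, Matrix.mul_assoc, gYα, ← k11]
    have := congrArg (· * ρ) k12
    simp only [Matrix.add_mul, Matrix.zero_mul, Matrix.mul_assoc] at this
    simp only [Matrix.mul_sub, eq_neg_of_add_eq_zero_left this]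
    abel

theorem exists_supported {A : Type*} [NonUnitalCStarAlgebra A] {m n : Type*} [Fintype m]
    [Fintype n] (p : Matrix m m A) (q q' : Matrix n n A) (hp : p * p = p) (hps : pᴴ = p)
    (hq : q * q = q) (hqs : qᴴ = q) (hq' : q' * q = q') (hqs' : q'ᴴ = q')
    (h : ∃ v : Matrix m n A, v * vᴴ = p ∧ vᴴ * v = q') :
    ∃ v : Matrix m n A, v * vᴴ = p ∧ (q' = q → vᴴ * v = q) ∧ p * v = v ∧ v * q = v := by
  obtain ⟨v, h1, h2⟩ := h
  have hqq : q * q' = q' := by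
    have := congrArg Matrix.conjTranspose hq'
    rwa [Matrix.conjTranspose_mul, hqs, hqs'] at this
  have hc : (p * v * q)ᴴ = q * vᴴ * p := by
    rw [Matrix.conjTranspose_mul, Matrix.conjTranspose_mul, hqs, hps, Matrix.mul_assoc]
  refine ⟨p * v * q, ?_, ?_, ?_, ?_⟩
  · rw [hc]
    calc p * v * q * (q * vᴴ * p) = p * v * (q * q) * vᴴ * p := by simp only [Matrix.mul_assoc]
      _ = (v * vᴴ) * v * q * vᴴ * (v * vᴴ) := by rw [hq, h1]
      _ = v * ((vᴴ * v) * q * (vᴴ * v)) * vᴴ := by simp only [Matrix.mul_assoc]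
      _ = v * (vᴴ * v * (vᴴ * v)) * vᴴ := by rw [h2, hq']
      _ = (v * vᴴ) * (v * vᴴ) * (v * vᴴ) := by simp only [Matrix.mul_assoc]
      _ = p := by rw [h1, hp, hp]
  · intro hqe
    rw [hc]
    calc q * vᴴ * p * (p * v * q) = q * vᴴ * (p * p) * v * q := by simp only [Matrix.mul_assoc]
      _ = q * vᴴ * (v * vᴴ) * v * q := by rw [hp, h1]
      _ = q * (vᴴ * v) * (vᴴ * v) * q := by simp only [Matrix.mul_assoc]
      _ = q := by rw [h2, hqe, hq, hq, hq]
  · rw [← Matrix.mul_assoc, ← Matrix.mul_assoc, hp]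
  · rw [Matrix.mul_assoc, hq]

theorem mvNEquiv_of_dSum_mvNEquiv {A : Type*} [NonUnitalCStarAlgebra A]
    {a b k : ℕ} (n : ℕ)
    (p : Matrix (Fin a) (Fin a) A) (q : Matrix (Fin b) (Fin b) A)
    (r : Matrix (Fin k) (Fin k) A)
    (hp : IsProjM p) (hq : IsProjM q) (hr : IsProjM r)
    (hsum : MvNEquiv (dSum p r) (dSum q r))
    (htsr : CornerTsrLe r n)
    (hsub : SubEquiv (nFold n r) p) :
    MvNEquiv p q := by
  obtain ⟨hps, hp2⟩ := hp
  obtain ⟨hqs, hq2⟩ := hq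
  obtain ⟨hrs, hr2⟩ := hr
  obtain ⟨q₀, ⟨hq0s, hq02⟩, hv, hq0p⟩ := hsub
  have dps : (dSum p r)ᴴ = dSum p r := by
    simp [dSum, Matrix.fromBlocks_conjTranspose, hps, hrs]
  have dp2 : dSum p r * dSum p r = dSum p r := by
    simp [dSum, Matrix.fromBlocks_multiply, hp2, hr2]
  have dqs : (dSum q r)ᴴ = dSum q r := by
    simp [dSum, Matrix.fromBlocks_conjTranspose, hqs, hrs]
  have dq2 : dSum q r * dSum q r = dSum q r := by
    simp [dSum, Matrix.fromBlocks_multiply, hq2, hr2]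
  have nR2 : nFold n r * nFold n r = nFold n r := by
    simp only [nFold, ← Matrix.blockDiagonal_mul, hr2]
  have nRs : (nFold n r)ᴴ = nFold n r := by
    simp only [nFold, Matrix.blockDiagonal_conjTranspose, hrs]
  obtain ⟨V, hV1, hV2, hV3, hV4⟩ := exists_supported _ _ _ dp2 dps dq2 dqs dq2 dqs hsum
  replace hV2 := hV2 rfl
  obtain ⟨v, hv1, -, hv3, hv4⟩ := exists_supported _ _ _ nR2 nRs hp2 hps hq0p hq0s hv
  obtain ⟨u, x, l, c, rfl⟩ : ∃ u x l c, V = Matrix.fromBlocks u x l c :=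
    ⟨_, _, _, _, (Matrix.fromBlocks_toBlocks V).symm⟩
  rw [Matrix.fromBlocks_conjTranspose] at hV1 hV2
  simp only [dSum, Matrix.fromBlocks_multiply, Matrix.fromBlocks_inj, Matrix.zero_mul,
    Matrix.mul_zero, add_zero, zero_add] at hV1 hV2 hV3 hV4
  obtain ⟨h11, h12, h21, h22⟩ := hV1
  obtain ⟨k11, k12, k21, k22⟩ := hV2
  obtain ⟨pu, px, rl, rc⟩ := hV3
  obtain ⟨uq, xr, lq, cr⟩ := hV4
  have rd : r * cᴴ = cᴴ := by
    have := congrArg Matrix.conjTranspose cr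
    rwa [Matrix.conjTranspose_mul, hrs] at this
  have ry : r * xᴴ = xᴴ := by
    have := congrArg Matrix.conjTranspose xr
    rwa [Matrix.conjTranspose_mul, hrs] at this
  have yp : xᴴ * p = xᴴ := by
    have := congrArg Matrix.conjTranspose px
    rwa [Matrix.conjTranspose_mul, hps] at this
  have pv : p * vᴴ = vᴴ := by
    have := congrArg Matrix.conjTranspose hv4
    rwa [Matrix.conjTranspose_mul, hps] at this
  have vR : vᴴ * nFold n r = vᴴ := by
    have := congrArg Matrix.conjTranspose hv3
    rwa [Matrix.conjTranspose_mul, nRs] at this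
  -- the tuple to matrix maps
  let Bm : (Fin n → {z : Matrix (Fin k) (Fin k) A // r * z * r = z}) →
      Matrix (Fin k) (Fin k × Fin n) A := fun f => Matrix.of fun i j => star ((f j.2).1 j.1 i)
  let Ym : (Fin n → {z : Matrix (Fin k) (Fin k) A // r * z * r = z}) →
      Matrix (Fin k) (Fin a) A := fun f => xᴴ - xᴴ * vᴴ * v + Bm f * v
  have hBc : Continuous Bm := by
    refine continuous_matrix fun i j => ?_
    have h1 : Continuous fun f : Fin n → {z : Matrix (Fin k) (Fin k) A // r * z * r = z} =>
      (f j.2).1 := continuous_subtype_val.comp (continuous_apply j.2)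
    exact (h1.matrix_elem j.1 i).star
  have hYc : Continuous Ym := continuous_const.add (hBc.matrix_mul continuous_const)
  have hWc : Continuous fun f => Ym f * x + cᴴ * c :=
    (hYc.matrix_mul continuous_const).add continuous_const
  obtain ⟨O, hO, hrO, hOinv⟩ := mat_leftInv r ⟨hrs, hr2⟩
  -- the base point
  have hbase : ∀ j : Fin n, r * (Matrix.of fun i i' => star ((xᴴ * vᴴ) i' (i, j))) * r =
      (Matrix.of fun i i' => star ((xᴴ * vᴴ) i' (i, j)) : Matrix (Fin k) (Fin k) A) := by
    intro j
    have e1 : r * (xᴴ * vᴴ) = xᴴ * vᴴ := by rw [← Matrix.mul_assoc, ry]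
    have e2 : (xᴴ * vᴴ) * nFold n r = xᴴ * vᴴ := by rw [Matrix.mul_assoc, vR]
    obtain ⟨G, hG⟩ : ∃ G, G = xᴴ * vᴴ := ⟨_, rfl⟩
    rw [← hG] at e1 e2 ⊢
    obtain ⟨g, hg⟩ : ∃ g : Matrix (Fin k) (Fin k) A, g = Matrix.of fun i' i => G i' (i, j) :=
      ⟨_, rfl⟩
    have f1 : r * g = g := by
      ext i i'
      have := congrFun (congrFun e1 i) (i', j)
      rw [hg]
      simpa [Matrix.mul_apply] using this
    have f2 : g * r = g := by
      ext i i'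
      have := congrFun (congrFun e2 i) (i', j)
      rw [hg]
      simpa [Matrix.mul_apply, nFold, Matrix.blockDiagonal_apply, Fintype.sum_prod_type] using this
    have f3 : (Matrix.of fun i i' => star (G i' (i, j)) : Matrix (Fin k) (Fin k) A) = gᴴ := by
      rw [hg]; rfl
    rw [f3]
    have g1 := congrArg Matrix.conjTranspose f1
    have g2 := congrArg Matrix.conjTranspose f2
    rw [Matrix.conjTranspose_mul, hrs] at g1 g2
    rw [g2, g1]
  obtain ⟨f, ⟨d, hd⟩, hfO⟩ : ∃ f, (∃ d : Fin n → {z : Matrix (Fin k) (Fin k) A // r * z * r = z},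
      ∑ i, (d i : Matrix (Fin k) (Fin k) A) * (f i : Matrix (Fin k) (Fin k) A) = r) ∧
      Ym f * x + cᴴ * c ∈ O := by
    obtain ⟨f, h1, h2⟩ := htsr.inter_open_nonempty _ (hO.preimage hWc)
      ⟨fun j => ⟨_, hbase j⟩, by
        have hB : Bm (fun j => ⟨_, hbase j⟩) = xᴴ * vᴴ := by
          ext i j
          simp [Bm]
        simp only [Set.mem_preimage, Ym, hB, sub_add_cancel]
        rw [k22]
        exact hrO⟩
    exact ⟨f, h2, h1⟩
  have hY : Ym f = xᴴ - xᴴ * vᴴ * v + Bm f * v := rfl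
  have rB : r * Bm f = Bm f := by
    ext i j
    have := congrArg Matrix.conjTranspose (f j.2).2
    rw [Matrix.conjTranspose_mul, Matrix.conjTranspose_mul, hrs] at this
    have h2 : r * ((f j.2).1)ᴴ = ((f j.2).1)ᴴ := by
      rw [← this, ← Matrix.mul_assoc, hr2]
    have := congrFun (congrFun h2 i) j.1
    simpa [Matrix.mul_apply, Bm] using this
  obtain ⟨E, hE⟩ : ∃ E : Matrix (Fin k × Fin n) (Fin k) A,
      E = Matrix.of fun j i => star ((d j.2).1 i j.1) := ⟨_, rfl⟩
  have RE : nFold n r * E = E := by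
    ext j i
    have := congrArg Matrix.conjTranspose (d j.2).2
    rw [Matrix.conjTranspose_mul, Matrix.conjTranspose_mul, hrs] at this
    have h2 : r * ((d j.2).1)ᴴ = ((d j.2).1)ᴴ := by
      rw [← this, ← Matrix.mul_assoc, hr2]
    have := congrFun (congrFun h2 j.1) i
    rw [hE]
    simpa [Matrix.mul_apply, nFold, Matrix.blockDiagonal_apply, Fintype.sum_prod_type] using this
  have BE : Bm f * E = r := by
    have := congrArg Matrix.conjTranspose hd
    rw [Matrix.conjTranspose_sum, hrs] at this
    rw [← this]
    ext i i'
    rw [hE]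
    simp [Matrix.mul_apply, Matrix.sum_apply, Bm, Fintype.sum_prod_type]
    rw [Finset.sum_comm]
  have hYe : Ym f * (vᴴ * E) = r := by
    have h1 : v * (vᴴ * E) = E := by rw [← Matrix.mul_assoc, hv1, RE]
    rw [hY, Matrix.add_mul, Matrix.sub_mul, Matrix.mul_assoc _ v, h1, Matrix.mul_assoc _ v, h1, BE,
      Matrix.mul_assoc]
    abel
  have Yp : Ym f * p = Ym f := by
    rw [hY, Matrix.add_mul, Matrix.sub_mul, yp, Matrix.mul_assoc _ v, hv4, Matrix.mul_assoc _ v, hv4]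
  have rY : r * Ym f = Ym f := by
    rw [hY, Matrix.mul_add, Matrix.mul_sub, ry]
    simp only [← Matrix.mul_assoc]
    rw [ry, rB]
  obtain ⟨w', hw'⟩ := hOinv _ hfO
    (by rw [Matrix.mul_add, ← Matrix.mul_assoc, rY, ← Matrix.mul_assoc, rd])
    (by rw [Matrix.add_mul, Matrix.mul_assoc, xr, Matrix.mul_assoc, cr])
  obtain ⟨α, β, h1, h2⟩ := alg_cancel p q r u x l c uᴴ xᴴ lᴴ cᴴ hr2 hp2 pu px rl rc cr xr rd
    h11 h12 h21 h22 k11 k12 (Ym f) (vᴴ * E) w' hYe (by rw [← Matrix.mul_assoc, pv]) Yp hw'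
  exact mvn_of_alg p q ⟨hps, hp2⟩ ⟨hqs, hq2⟩ α β h1 h2
end

section
/- (Blackadar's cancellation theorem.) Let A be a simple C*-algebra, and let P be a set of nonzero projections in matrix algebras over A with the following two properties: (1) for every nonzero projection q in a matrix algebra over A, there exist p ∈ P and projections r, s in matrix algebras over A with p ⊕ p ⊕ r ⊕ s ∼ q ⊕ s (that is, 2[p] ≤ [q] in K_0(A)); (2) there is N ∈ ℕ such that tsr(p M_k(A) p) ≤ N for every p ∈ P (with p ∈ M_k(A)). Then projections over A satisfy cancellation: whenever p, q, r are projections in matrix algebras over A with p ⊕ r ∼ q ⊕ r, it follows that p ∼ q. -/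
open scoped Matrix

theorem bl_unital {B : Type*} [CStarAlgebra B] [PartialOrder B] [StarOrderedRing B]
    {r q x y : B} (hr : star r = r) (hr2 : r * r = r) (hq : star q = q)
    (hq2 : q * q = q) (hxy : x * y = r) (hyx : y * x = q) (hx : r * x = x) (hy : y * r = y) :
    ∃ s : B, (s * x) * star (s * x) = r ∧ star (s * x) * (s * x) = q := by
  have hxr : star x * r = star x := by simpa [hr] using congrArg star hx
  have hry : r * star y = star y := by simpa [hr] using congrArg star hy
  have hyx' : star x * star y = q := by rw [← star_mul, hyx, hq]
  have hxy' : star y * star x = r := by rw [← star_mul, hxy, hr]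
  have hxq : x * q = x := by rw [← hyx, ← mul_assoc, hxy, hx]
  have hqx : q * star x = star x := by simpa [hq] using congrArg star hxq
  have hqy : q * y = y := by rw [← hyx, mul_assoc, hxy, hy]
  have hyq : star y * q = star y := by simpa [hq] using congrArg star hqy
  set h : B := x * star x + (1 - r) with hh
  set k : B := star y * y + (1 - r) with hk
  have hkh : k * h = 1 := by
    have e1 : star y * y * (x * star x) = r := by
      rw [mul_assoc, ← mul_assoc y, hyx, hqx, hxy']
    have e2 : star y * y * r = star y * y := by rw [mul_assoc, hy]
    have e3 : r * (x * star x) = x * star x := by rw [← mul_assoc, hx]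
    simp only [hh, hk, mul_add, add_mul, mul_sub, sub_mul, e1, e2, e3, hr2, mul_one, one_mul]
    abel
  have hhk : h * k = 1 := by
    have e1 : x * star x * (star y * y) = r := by
      rw [mul_assoc, ← mul_assoc (star x), hyx', hqy, hxy]
    have e2 : x * star x * r = x * star x := by rw [mul_assoc, hxr]
    have e3 : r * (star y * y) = star y * y := by rw [← mul_assoc, hry]
    simp only [hh, hk, mul_add, add_mul, mul_sub, sub_mul, e1, e2, e3, hr2, mul_one, one_mul]
    abel
  have hu : IsUnit h := ⟨⟨h, k, hhk, hkh⟩, rfl⟩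
  have hpos : 0 ≤ h := by
    refine add_nonneg (mul_star_self_nonneg x) ?_
    have : (1 - r) = star (1 - r) * (1 - r) := by
      simp [hr, mul_sub, sub_mul, hr2]
    rw [this]; exact star_mul_self_nonneg _
  have hsp : IsStrictlyPositive h := ⟨hpos, hu⟩
  have hrh : Commute h r := by
    have e2 : x * star x * r = x * star x := by rw [mul_assoc, hxr]
    have e3 : r * (x * star x) = x * star x := by rw [← mul_assoc, hx]
    simp only [commute_iff_eq, hh, mul_add, add_mul, mul_sub, sub_mul, e2, e3, mul_one, one_mul]
  have hhr : h * r = x * star x := by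
    have e2 : x * star x * r = x * star x := by rw [mul_assoc, hxr]
    simp only [hh, mul_add, add_mul, mul_sub, sub_mul, e2, hr2, mul_one, one_mul]
    abel
  set s : B := h ^ (-(1/2) : ℝ) with hs
  have hsn : star s = s := (CFC.rpow_nonneg (a := h) (y := (-(1/2) : ℝ))).isSelfAdjoint
  have hshs : s * h * s = 1 := CFC.conjugate_rpow_neg_one_half h
  have hsr : Commute s r := by
    rw [hs, CFC.rpow_def]
    exact Commute.cfc_nnreal hrh _
  have hss : s * s = k := by
    have h1 : (h * s) * s = 1 := by
      have : IsUnit s := IsUnit.cfcRpow hu _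
      obtain ⟨w, hw⟩ := this
      have : h * s = ↑w⁻¹ := by
        rw [eq_comm, Units.inv_eq_of_mul_eq_one_right]
        rw [hw, ← mul_assoc, hshs]
      rw [this, ← hw]; simp
    calc s * s = k * h * (s * s) := by rw [hkh, one_mul]
      _ = k * (h * s * s) := by simp only [mul_assoc]
      _ = k := by rw [h1, mul_one]
  refine ⟨s, ?_, ?_⟩
  · rw [star_mul, hsn]
    calc s * x * (star x * s) = s * (x * star x) * s := by simp only [mul_assoc]
      _ = s * h * (r * s) := by rw [← hhr]; simp only [mul_assoc]
      _ = s * h * s * r := by rw [← hsr.eq]; simp only [mul_assoc]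
      _ = r := by rw [hshs, one_mul]
  · rw [star_mul, hsn]
    calc star x * s * (s * x) = star x * (s * s) * x := by simp only [mul_assoc]
      _ = (star x * star y) * (y * x) + star x * (x - r * x) := by
        rw [hss, hk]; simp only [mul_add, add_mul, mul_sub, sub_mul, mul_one, one_mul, mul_assoc]
      _ = q := by rw [hyx', hyx, hx, hq2]; simp

theorem bl_inr {D : Type*} [NonUnitalCStarAlgebra D] (s : Unitization ℂ D) (x : D) :
    ∃ v : D, (v : Unitization ℂ D) = s * x := by
  refine ⟨(s * (x : Unitization ℂ D)).snd, ?_⟩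
  ext <;> simp

theorem bl_inr' {D : Type*} [NonUnitalCStarAlgebra D] (s : Unitization ℂ D) (x : D) :
    ∃ v : D, (v : Unitization ℂ D) = x * s := by
  refine ⟨((x : Unitization ℂ D) * s).snd, ?_⟩
  ext <;> simp

theorem bl_L1 {D : Type*} [NonUnitalCStarAlgebra D]
    {r q x y : D} (hr : star r = r) (hr2 : r * r = r) (hq : star q = q)
    (hq2 : q * q = q) (hxy : x * y = r) (hyx : y * x = q) :
    ∃ v : D, v * star v = r ∧ star v * v = q := by
  let _ : PartialOrder D := CStarAlgebra.spectralOrder D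
  have : StarOrderedRing D := CStarAlgebra.spectralOrderedRing D
  have h1 : (r * x) * (y * r) = r := by
    rw [mul_assoc, ← mul_assoc x, hxy, hr2, hr2]
  have h2 : (y * r) * (r * x) = q := by
    rw [mul_assoc, ← mul_assoc r, hr2, ← hxy, ← mul_assoc, ← mul_assoc, hyx, mul_assoc, hyx, hq2]
  obtain ⟨s, hs1, hs2⟩ := bl_unital (B := Unitization ℂ D) (r := (r : Unitization ℂ D))
    (q := (q : Unitization ℂ D)) (x := ((r * x : D) : Unitization ℂ D))
    (y := ((y * r : D) : Unitization ℂ D))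
    (by rw [← Unitization.inr_star, hr]) (by rw [← Unitization.inr_mul, hr2])
    (by rw [← Unitization.inr_star, hq]) (by rw [← Unitization.inr_mul, hq2])
    (by rw [← Unitization.inr_mul, h1]) (by rw [← Unitization.inr_mul, h2])
    (by rw [← Unitization.inr_mul, ← mul_assoc, hr2])
    (by rw [← Unitization.inr_mul, mul_assoc, hr2])
  obtain ⟨v, hv⟩ := bl_inr s (r * x)
  rw [← hv, ← Unitization.inr_star, ← Unitization.inr_mul] at hs1 hs2
  exact ⟨v, Unitization.inr_injective hs1, Unitization.inr_injective hs2⟩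

theorem bl_L2u {B : Type*} [CStarAlgebra B] [PartialOrder B] [StarOrderedRing B]
    {f : B} (hf : f * f = f) :
    ∃ w : B, star (f * w) = f * w ∧ (f * w) * (f * w) = f * w ∧ (f * w) * f = f := by
  set g := star f with hg
  have hgg : g * g = g := by rw [hg, ← star_mul, hf]
  have hsg : star g = f := star_star f
  set z : B := 1 + star (f - g) * (f - g) with hz
  have hz' : z = 1 + (f * g + g * f - f - g) := by
    rw [hz, star_sub, hsg, ← hg]
    simp only [mul_sub, sub_mul, hf, hgg]; abel
  have hu : IsUnit z := CStarAlgebra.isUnit_of_le (1 : B)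
    (by rw [hz]; exact le_add_of_nonneg_right (star_mul_self_nonneg _))
  have hfz : f * z = f * g * f := by
    simp only [hz', mul_add, mul_sub, mul_one, ← mul_assoc, hf]; abel
  have hzf : z * f = f * g * f := by
    simp only [hz', add_mul, sub_mul, one_mul, mul_assoc, hf]; abel
  have hgz : g * z = g * f * g := by
    simp only [hz', mul_add, mul_sub, mul_one, ← mul_assoc, hgg]; abel
  have hzg : z * g = g * f * g := by
    simp only [hz', add_mul, sub_mul, one_mul, mul_assoc, hgg]; abel
  obtain ⟨Z, hZ⟩ := hu
  have hzs : star z = z := by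
    rw [hz]; simp
  have cf : Commute (↑Z⁻¹ : B) f := by
    apply Commute.units_inv_left; rw [hZ, commute_iff_eq, hfz, hzf]
  have cg : Commute (↑Z⁻¹ : B) g := by
    apply Commute.units_inv_left; rw [hZ, commute_iff_eq, hgz, hzg]
  have hZi : (↑Z⁻¹ : B) * z = 1 := by rw [← hZ]; simp
  have hZi' : z * (↑Z⁻¹ : B) = 1 := by rw [← hZ]; simp
  have hsZ : star (↑Z⁻¹ : B) = ↑Z⁻¹ := by
    have : star (↑Z⁻¹ : B) * z = 1 := by
      have := congrArg star hZi'
      rwa [star_mul, hzs, star_one] at this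
    calc star (↑Z⁻¹ : B) = star (↑Z⁻¹ : B) * (z * (↑Z⁻¹ : B)) := by rw [hZi', mul_one]
      _ = _ := by rw [← mul_assoc, this, one_mul]
  have key : f * g * ↑Z⁻¹ * f = f := by
    calc f * g * ↑Z⁻¹ * f = f * g * f * ↑Z⁻¹ := by rw [mul_assoc, cf.eq]; simp only [mul_assoc]
      _ = f := by rw [← hfz, mul_assoc, hZi', mul_one]
  refine ⟨g * ↑Z⁻¹, ?_, ?_, ?_⟩
  · rw [star_mul, star_mul, hsZ, hsg, ← hg, ← mul_assoc, mul_assoc, (cf.mul_right cg).eq]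
  · simp only [← mul_assoc, key]
  · rw [← mul_assoc, key]

theorem bl_L2 {D : Type*} [NonUnitalCStarAlgebra D] {f : D} (hf : f * f = f) :
    ∃ q : D, star q = q ∧ q * q = q ∧ f * q = q ∧ q * f = f := by
  let _ : PartialOrder D := CStarAlgebra.spectralOrder D
  have : StarOrderedRing D := CStarAlgebra.spectralOrderedRing D
  obtain ⟨w, h1, h2, h3⟩ := bl_L2u (B := Unitization ℂ D) (f := (f : Unitization ℂ D))
    (by rw [← Unitization.inr_mul, hf])
  obtain ⟨q, hq⟩ := bl_inr' w f
  rw [← hq] at h1 h2 h3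
  rw [← Unitization.inr_star] at h1
  rw [← Unitization.inr_mul] at h2 h3
  refine ⟨q, Unitization.inr_injective h1, Unitization.inr_injective h2, ?_,
    Unitization.inr_injective h3⟩
  apply Unitization.inr_injective (R := ℂ)
  rw [Unitization.inr_mul, hq, ← mul_assoc, ← Unitization.inr_mul, hf]

theorem bl_L3 {D : Type*} [NonUnitalCStarAlgebra D] {p u : D} (hp : p * p = p)
    (hpu : p * u = u) (hup : u * p = u) (hn : ‖u - p‖ < 1) :
    ∃ e : D, u * e = p ∧ p * e = e ∧ e * p = e := by
  have hn' : ‖((p - u : D) : Unitization ℂ D)‖ < 1 := by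
    rw [Unitization.norm_inr, norm_sub_rev]; exact hn
  set W := Units.oneSub ((p - u : D) : Unitization ℂ D) hn' with hW
  have hW1 : (W : Unitization ℂ D) = 1 - ((p - u : D) : Unitization ℂ D) := rfl
  have hpW : (p : Unitization ℂ D) * W = u := by
    rw [hW1, mul_sub, mul_one, ← Unitization.inr_mul, mul_sub, hp, hpu, ← Unitization.inr_sub]
    simp
  obtain ⟨e0, he0⟩ := bl_inr (↑W⁻¹ : Unitization ℂ D) p
  have h1 : u * e0 = p := by
    apply Unitization.inr_injective (R := ℂ)
    rw [Unitization.inr_mul, he0, ← hpW, ← mul_assoc, mul_assoc (p : Unitization ℂ D)]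
    simp [← Unitization.inr_mul, hp]
  have h2 : e0 * p = e0 := by
    apply Unitization.inr_injective (R := ℂ)
    rw [Unitization.inr_mul, he0, mul_assoc, ← Unitization.inr_mul, hp]
  exact ⟨p * e0, by rw [← mul_assoc, hup, h1], by rw [← mul_assoc, hp], by rw [mul_assoc, h2]⟩


section blB
variable {A : Type*} [NonUnitalCStarAlgebra A]
variable {l m n o : Type*} [Fintype l] [Fintype m] [Fintype n] [Fintype o]

theorem bl_mvn_of_alg {r : Matrix m m A} {q : Matrix n n A} (hr : IsProjM r) (hq : IsProjM q)
    {x : Matrix m n A} {y : Matrix n m A} (hxy : x * y = r) (hyx : y * x = q) :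
    MvNEquiv r q := by
  let _ : PartialOrder A := CStarAlgebra.spectralOrder A
  have : StarOrderedRing A := CStarAlgebra.spectralOrderedRing A
  let R : Matrix (m ⊕ n) (m ⊕ n) A := Matrix.fromBlocks r 0 0 0
  let Q : Matrix (m ⊕ n) (m ⊕ n) A := Matrix.fromBlocks 0 0 0 q
  let X : Matrix (m ⊕ n) (m ⊕ n) A := Matrix.fromBlocks 0 x 0 0
  let Y : Matrix (m ⊕ n) (m ⊕ n) A := Matrix.fromBlocks 0 0 y 0
  have hR : Rᴴ = R := by simp [R, Matrix.fromBlocks_conjTranspose, hr.1]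
  have hQ : Qᴴ = Q := by simp [Q, Matrix.fromBlocks_conjTranspose, hq.1]
  have hR2 : R * R = R := by simp [R, Matrix.fromBlocks_multiply, hr.2]
  have hQ2 : Q * Q = Q := by simp [Q, Matrix.fromBlocks_multiply, hq.2]
  have hXY : X * Y = R := by simp [X, Y, R, Matrix.fromBlocks_multiply, hxy]
  have hYX : Y * X = Q := by simp [X, Y, Q, Matrix.fromBlocks_multiply, hyx]
  obtain ⟨v, h1, h2⟩ : ∃ v : Matrix (m ⊕ n) (m ⊕ n) A, v * vᴴ = R ∧ vᴴ * v = Q :=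
    bl_L1 (D := CStarMatrix (m ⊕ n) (m ⊕ n) A) (r := R) (q := Q) (x := X) (y := Y)
      hR hR2 hQ hQ2 hXY hYX
  have hw : R * v * Q = Matrix.fromBlocks 0 (r * v.toBlocks₁₂ * q) 0 0 := by
    rw [← Matrix.fromBlocks_toBlocks v]
    simp [R, Q, Matrix.fromBlocks_multiply]
  have e1 : (R * v * Q) * (R * v * Q)ᴴ = R := by
    simp only [Matrix.conjTranspose_mul, hR, hQ]
    calc R * v * Q * (Q * (vᴴ * R)) = R * (v * (Q * Q) * vᴴ) * R := by simp only [Matrix.mul_assoc]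
      _ = R * ((v * vᴴ) * (v * vᴴ)) * R := by rw [hQ2, ← h2]; simp only [Matrix.mul_assoc]
      _ = R := by simp [h1, hR2]
  have e2 : (R * v * Q)ᴴ * (R * v * Q) = Q := by
    simp only [Matrix.conjTranspose_mul, hR, hQ]
    calc Q * (vᴴ * R) * (R * v * Q) = Q * (vᴴ * (R * R) * v) * Q := by simp only [Matrix.mul_assoc]
      _ = Q * ((vᴴ * v) * (vᴴ * v)) * Q := by rw [hR2, ← h1]; simp only [Matrix.mul_assoc]
      _ = Q := by simp [h2, hQ2]
  rw [hw] at e1 e2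
  refine ⟨r * v.toBlocks₁₂ * q, ?_, ?_⟩
  · simpa [R, Matrix.fromBlocks_conjTranspose, Matrix.fromBlocks_multiply, Matrix.fromBlocks_inj]
      using e1
  · simpa [Q, Matrix.fromBlocks_conjTranspose, Matrix.fromBlocks_multiply, Matrix.fromBlocks_inj]
      using e2

theorem bl_M2 {f : Matrix n n A} (hf : f * f = f) :
    ∃ q : Matrix n n A, IsProjM q ∧ f * q = q ∧ q * f = f := by
  let _ : PartialOrder A := CStarAlgebra.spectralOrder A
  have : StarOrderedRing A := CStarAlgebra.spectralOrderedRing A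
  obtain ⟨q, h1, h2, h3, h4⟩ := bl_L2 (D := CStarMatrix n n A) (f := f) hf
  exact ⟨q, ⟨h1, h2⟩, h3, h4⟩

theorem bl_M3 {p : Matrix n n A} (hp : p * p = p) : ∃ U : Set (Matrix n n A), IsOpen U ∧ p ∈ U ∧
    ∀ u ∈ U, p * u = u → u * p = u → ∃ e : Matrix n n A, u * e = p ∧ p * e = e ∧ e * p = e := by
  let _ : PartialOrder A := CStarAlgebra.spectralOrder A
  have : StarOrderedRing A := CStarAlgebra.spectralOrderedRing A
  let F : Matrix n n A → CStarMatrix n n A := CStarMatrix.ofMatrix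
  have hF : Continuous F := (CStarMatrix.uniformEmbedding_ofMatrix).uniformContinuous.continuous
  refine ⟨{u | ‖F u - F p‖ < 1}, isOpen_lt (hF.sub continuous_const).norm continuous_const, by simp,
    fun u hu h1 h2 => ?_⟩
  exact bl_L3 (D := CStarMatrix n n A) (p := p) (u := u) hp h1 h2 hu

theorem bl_refl {p : Matrix m m A} (hp : IsProjM p) : MvNEquiv p p :=
  ⟨p, by rw [hp.1, hp.2], by rw [hp.1, hp.2]⟩

theorem bl_symm {p : Matrix m m A} {q : Matrix n n A} (h : MvNEquiv p q) : MvNEquiv q p := by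
  obtain ⟨v, h1, h2⟩ := h
  exact ⟨vᴴ, by simpa using h2, by simpa using h1⟩

theorem bl_trans {p : Matrix m m A} {q : Matrix n n A} {r : Matrix o o A}
    (hp : IsProjM p) (hr : IsProjM r) (h : MvNEquiv p q) (h' : MvNEquiv q r) : MvNEquiv p r := by
  obtain ⟨v, h1, h2⟩ := h
  obtain ⟨w, h3, h4⟩ := h'
  refine ⟨v * w, ?_, ?_⟩
  · calc v * w * (v * w)ᴴ = v * (w * wᴴ) * vᴴ := by
          simp only [Matrix.conjTranspose_mul, Matrix.mul_assoc]
      _ = (v * vᴴ) * (v * vᴴ) := by rw [h3, ← h2]; simp only [Matrix.mul_assoc]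
      _ = p := by rw [h1, hp.2]
  · calc (v * w)ᴴ * (v * w) = wᴴ * (vᴴ * v) * w := by
          simp only [Matrix.conjTranspose_mul, Matrix.mul_assoc]
      _ = (wᴴ * w) * (wᴴ * w) := by rw [h2, ← h3]; simp only [Matrix.mul_assoc]
      _ = r := by rw [h4, hr.2]

theorem bl_proj_submatrix {p : Matrix m m A} (hp : IsProjM p) (e : n ≃ m) :
    IsProjM (p.submatrix e e) := by
  refine ⟨by rw [Matrix.conjTranspose_submatrix, hp.1], ?_⟩
  rw [Matrix.submatrix_mul_equiv, hp.2]

theorem bl_mvn_submatrix {p : Matrix m m A} (hp : IsProjM p) (e : n ≃ m) :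
    MvNEquiv p (p.submatrix e e) := by
  refine ⟨p.submatrix id e, ?_, ?_⟩
  · rw [Matrix.conjTranspose_submatrix, hp.1, Matrix.submatrix_mul_equiv, hp.2, Matrix.submatrix_id_id]
  · have := Matrix.submatrix_mul_equiv p p e (Equiv.refl m) e
    rw [Matrix.conjTranspose_submatrix, hp.1]
    simpa [hp.2] using this

theorem bl_proj_dSum {p : Matrix m m A} {q : Matrix n n A} (hp : IsProjM p) (hq : IsProjM q) :
    IsProjM (dSum p q) := by
  constructor
  · simp [dSum, Matrix.fromBlocks_conjTranspose, hp.1, hq.1]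
  · simp [dSum, Matrix.fromBlocks_multiply, hp.2, hq.2]

theorem bl_mvn_dSum {p : Matrix m m A} {q : Matrix n n A} {p' : Matrix l l A} {q' : Matrix o o A}
    (h : MvNEquiv p p') (h' : MvNEquiv q q') : MvNEquiv (dSum p q) (dSum p' q') := by
  obtain ⟨v, h1, h2⟩ := h
  obtain ⟨w, h3, h4⟩ := h'
  refine ⟨Matrix.fromBlocks v 0 0 w, ?_, ?_⟩
  · simp [dSum, Matrix.fromBlocks_conjTranspose, Matrix.fromBlocks_multiply, h1, h3]
  · simp [dSum, Matrix.fromBlocks_conjTranspose, Matrix.fromBlocks_multiply, h2, h4]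

end blB

/-- projections over `A` -/
abbrev BlProj (A : Type*) [NonUnitalCStarAlgebra A] :=
  Σ k : ℕ, {p : Matrix (Fin k) (Fin k) A // IsProjM p}

instance blSetoid (A : Type*) [NonUnitalCStarAlgebra A] : Setoid (BlProj A) where
  r p q := MvNEquiv p.2.1 q.2.1
  iseqv := ⟨fun p => bl_refl p.2.2, fun h => bl_symm h,
    fun {p _ r} h h' => bl_trans p.2.2 r.2.2 h h'⟩

/-- the Murray-von Neumann semigroup -/
def BlV (A : Type*) [NonUnitalCStarAlgebra A] := Quotient (blSetoid A)

section blV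
variable {A : Type*} [NonUnitalCStarAlgebra A]
variable {l m n o : Type} [Fintype l] [Fintype m] [Fintype n] [Fintype o]

/-- class of a projection -/
noncomputable def blCls (p : Matrix m m A) (hp : IsProjM p) : BlV A :=
  Quotient.mk (blSetoid A) ⟨Fintype.card m, p.submatrix (Fintype.equivFin m).symm (Fintype.equivFin m).symm,
    bl_proj_submatrix hp _⟩

theorem blCls_eq_iff {p : Matrix m m A} {hp : IsProjM p} {q : Matrix n n A} {hq : IsProjM q} :
    blCls p hp = blCls q hq ↔ MvNEquiv p q := by
  refine Iff.trans (Quotient.eq (r := blSetoid A)) ?_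
  change MvNEquiv _ _ ↔ _
  have h1 := bl_mvn_submatrix hp (Fintype.equivFin m).symm
  have h2 := bl_mvn_submatrix hq (Fintype.equivFin n).symm
  constructor
  · intro h
    exact bl_trans hp hq (bl_trans hp (bl_proj_submatrix hq _) h1 h) (bl_symm h2)
  · intro h
    exact bl_trans (bl_proj_submatrix hp _) (bl_proj_submatrix hq _)
      (bl_trans (bl_proj_submatrix hp _) hq (bl_symm h1) h) h2

theorem blV_ind (x : BlV A) : ∃ (k : ℕ) (p : Matrix (Fin k) (Fin k) A) (hp : IsProjM p),
    x = blCls p hp := by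
  obtain ⟨⟨k, p, hp⟩, rfl⟩ := Quotient.exists_rep x
  refine ⟨k, p, hp, ?_⟩
  apply Quotient.sound
  exact bl_mvn_submatrix hp _

noncomputable instance : Add (BlV A) where
  add := Quotient.map₂ (fun p q => ⟨p.1 + q.1,
      (dSum p.2.1 q.2.1).submatrix finSumFinEquiv.symm finSumFinEquiv.symm,
      bl_proj_submatrix (bl_proj_dSum p.2.2 q.2.2) _⟩) (by
    intro p p' h q q' h'
    change MvNEquiv _ _
    exact bl_trans (bl_proj_submatrix (bl_proj_dSum p.2.2 q.2.2) _)
      (bl_proj_submatrix (bl_proj_dSum p'.2.2 q'.2.2) _)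
      (bl_trans (bl_proj_submatrix (bl_proj_dSum p.2.2 q.2.2) _) (bl_proj_dSum p'.2.2 q'.2.2)
      (bl_symm (bl_mvn_submatrix (bl_proj_dSum p.2.2 q.2.2) _)) (bl_mvn_dSum h h'))
      (bl_mvn_submatrix (bl_proj_dSum p'.2.2 q'.2.2) _))

theorem blCls_dSum {p : Matrix m m A} (hp : IsProjM p) {q : Matrix n n A} (hq : IsProjM q) :
    blCls (dSum p q) (bl_proj_dSum hp hq) = blCls p hp + blCls q hq := by
  apply Quotient.sound
  change MvNEquiv _ _
  have h1 := bl_mvn_submatrix hp (Fintype.equivFin m).symm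
  have h2 := bl_mvn_submatrix hq (Fintype.equivFin n).symm
  have h3 := bl_mvn_dSum h1 h2
  have h4 := bl_mvn_submatrix (bl_proj_dSum hp hq) (Fintype.equivFin (m ⊕ n)).symm
  have hA := bl_proj_dSum (bl_proj_submatrix hp (Fintype.equivFin m).symm)
    (bl_proj_submatrix hq (Fintype.equivFin n).symm)
  have hB := bl_proj_submatrix (bl_proj_dSum hp hq) (Fintype.equivFin (m ⊕ n)).symm
  exact bl_trans hB (bl_proj_submatrix hA _) (bl_trans hB hA (bl_symm h4) h3)
    (bl_mvn_submatrix hA _)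

theorem bl_zero_proj : IsProjM (0 : Matrix m m A) := ⟨by simp, by simp⟩

noncomputable instance : Zero (BlV A) where
  zero := blCls (0 : Matrix (Fin 0) (Fin 0) A) bl_zero_proj

theorem blCls_zero : blCls (0 : Matrix m m A) bl_zero_proj = 0 := by
  change _ = blCls (0 : Matrix (Fin 0) (Fin 0) A) bl_zero_proj
  rw [blCls_eq_iff]
  exact ⟨0, by simp, by simp⟩

theorem blCls_eq_of_submatrix {p : Matrix m m A} (hp : IsProjM p) {q : Matrix n n A}
    (hq : IsProjM q) (e : n ≃ m) (h : q = p.submatrix e e) : blCls p hp = blCls q hq := by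
  rw [blCls_eq_iff, h]
  exact bl_mvn_submatrix hp e

theorem blV_comm (x y : BlV A) : x + y = y + x := by
  obtain ⟨k, p, hp, rfl⟩ := blV_ind x
  obtain ⟨l, q, hq, rfl⟩ := blV_ind y
  rw [← blCls_dSum, ← blCls_dSum]
  apply blCls_eq_of_submatrix _ _ (Equiv.sumComm _ _)
  ext (i | i) (j | j) <;> simp [dSum]

theorem blV_zero_add (x : BlV A) : 0 + x = x := by
  obtain ⟨k, p, hp, rfl⟩ := blV_ind x
  rw [← blCls_zero (m := Fin 0), ← blCls_dSum]
  apply blCls_eq_of_submatrix _ _ (Equiv.emptySum _ _).symm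
  ext i j
  simp [dSum]

theorem blV_assoc (x y z : BlV A) : x + y + z = x + (y + z) := by
  obtain ⟨k, p, hp, rfl⟩ := blV_ind x
  obtain ⟨l, q, hq, rfl⟩ := blV_ind y
  obtain ⟨m, r, hr, rfl⟩ := blV_ind z
  rw [← blCls_dSum, ← blCls_dSum, ← blCls_dSum, ← blCls_dSum]
  apply blCls_eq_of_submatrix _ _ (Equiv.sumAssoc _ _ _).symm
  ext (i | i | i) (j | j | j) <;> simp [dSum]

noncomputable instance : AddCommMonoid (BlV A) where
  add_assoc := blV_assoc
  zero_add := blV_zero_add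
  add_zero x := by rw [blV_comm, blV_zero_add]
  add_comm := blV_comm
  nsmul := nsmulRec

theorem bl_proj_nFold {p : Matrix m m A} (hp : IsProjM p) (N : ℕ) : IsProjM (nFold N p) := by
  constructor
  · rw [nFold, Matrix.blockDiagonal_conjTranspose, hp.1]
  · rw [nFold, ← Matrix.blockDiagonal_mul, hp.2]

theorem blCls_nFold {p : Matrix m m A} (hp : IsProjM p) (N : ℕ) :
    blCls (nFold N p) (bl_proj_nFold hp N) = N • blCls p hp := by
  induction N with
  | zero =>
    rw [zero_smul, ← blCls_zero (m := Fin 0), blCls_eq_iff]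
    refine ⟨0, ?_, by simp⟩
    ext ⟨_, i⟩
    exact i.elim0
  | succ N ih =>
    rw [add_smul, ← ih, one_smul, add_comm (blCls (nFold N p) _), ← blCls_dSum, eq_comm]
    let e : m × Fin (N + 1) ≃ m ⊕ (m × Fin N) :=
      { toFun := fun x => Fin.cases (motive := fun _ => m ⊕ (m × Fin N)) (Sum.inl x.1) (fun j => Sum.inr (x.1, j)) x.2
        invFun := Sum.elim (fun a => (a, 0)) (fun x => (x.1, x.2.succ))
        left_inv := by
          rintro ⟨a, i⟩
          refine Fin.cases ?_ (fun j => ?_) i <;> simp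
        right_inv := by
          rintro (a | ⟨a, i⟩) <;> simp }
    apply blCls_eq_of_submatrix _ _ e
    ext ⟨a, i⟩ ⟨b, j⟩
    refine Fin.cases ?_ (fun i => ?_) i <;> refine Fin.cases ?_ (fun j => ?_) j <;>
      simp [dSum, nFold, e, Matrix.blockDiagonal_apply, Fin.succ_ne_zero, (Fin.succ_ne_zero _).symm]

end blV


section blC
variable {A : Type*} [NonUnitalCStarAlgebra A]
variable {k l m n o s t : Type*} [Fintype k] [Fintype l] [Fintype m] [Fintype n] [Fintype o]
  [Fintype s] [Fintype t]

theorem bl_cr (a : Matrix m n A) (b : Matrix m o A) (c : Matrix n l A) (d : Matrix o l A) :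
    Matrix.fromCols a b * Matrix.fromRows c d = a * c + b * d := by
  ext i j
  simp [Matrix.mul_apply, Fintype.sum_sum_type]

theorem bl_br (a : Matrix m n A) (b : Matrix m o A) (c : Matrix s n A) (d : Matrix s o A)
    (x : Matrix n l A) (y : Matrix o l A) :
    Matrix.fromBlocks a b c d * Matrix.fromRows x y
      = Matrix.fromRows (a * x + b * y) (c * x + d * y) := by
  ext (i | i) j <;> simp [Matrix.mul_apply, Fintype.sum_sum_type]

theorem bl_cb (a : Matrix m n A) (b : Matrix m o A) (c : Matrix s n A) (d : Matrix s o A)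
    (x : Matrix l m A) (y : Matrix l s A) :
    Matrix.fromCols x y * Matrix.fromBlocks a b c d
      = Matrix.fromCols (x * a + y * c) (x * b + y * d) := by
  ext i (j | j) <;> simp [Matrix.mul_apply, Fintype.sum_sum_type]

theorem bl_rm (a : Matrix m n A) (b : Matrix o n A) (c : Matrix n l A) :
    Matrix.fromRows a b * c = Matrix.fromRows (a * c) (b * c) := by
  ext (i | i) j <;> simp [Matrix.mul_apply]

theorem bl_mc (a : Matrix n m A) (b : Matrix n o A) (c : Matrix l n A) :
    c * Matrix.fromCols a b = Matrix.fromCols (c * a) (c * b) := by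
  ext i (j | j) <;> simp [Matrix.mul_apply]

theorem bl_rc (a : Matrix m n A) (b : Matrix o n A) (c : Matrix n l A) (d : Matrix n s A) :
    Matrix.fromRows a b * Matrix.fromCols c d
      = Matrix.fromBlocks (a * c) (a * d) (b * c) (b * d) := by
  ext (i | i) (j | j) <;> simp [Matrix.mul_apply]

theorem bl_bs (a a' : Matrix m n A) (b b' : Matrix m o A) (c c' : Matrix s n A)
    (d d' : Matrix s o A) :
    Matrix.fromBlocks a b c d - Matrix.fromBlocks a' b' c' d'
      = Matrix.fromBlocks (a - a') (b - b') (c - c') (d - d') := by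
  ext (i | i) (j | j) <;> simp

theorem bl_re {a : Matrix m n A} {b : Matrix n o A} {c : Matrix m o A} (h : a * b = c)
    (x : Matrix o s A) : a * (b * x) = c * x := by
  rw [← h, Matrix.mul_assoc]

/-- algebraic equivalence of idempotents -/
def BlAlg (e : Matrix m m A) (f : Matrix n n A) : Prop :=
  e * e = e ∧ f * f = f ∧ ∃ (x : Matrix m n A) (y : Matrix n m A), x * y = e ∧ y * x = f

theorem BlAlg.symm {e : Matrix m m A} {f : Matrix n n A} (h : BlAlg e f) : BlAlg f e := by
  obtain ⟨h1, h2, x, y, h3, h4⟩ := h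
  exact ⟨h2, h1, y, x, h4, h3⟩

theorem BlAlg.trans {e : Matrix m m A} {f : Matrix n n A} {g : Matrix o o A}
    (h : BlAlg e f) (h' : BlAlg f g) : BlAlg e g := by
  obtain ⟨h1, h2, x, y, h3, h4⟩ := h
  obtain ⟨h1', h2', z, w, h3', h4'⟩ := h'
  refine ⟨h1, h2', x * z, w * y, ?_, ?_⟩
  · calc x * z * (w * y) = x * (z * w) * y := by simp only [Matrix.mul_assoc]
      _ = (x * y) * (x * y) := by rw [h3', ← h4]; simp only [Matrix.mul_assoc]
      _ = e := by rw [h3, h1]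
  · calc w * y * (x * z) = w * (y * x) * z := by simp only [Matrix.mul_assoc]
      _ = (w * z) * (w * z) := by rw [h4, ← h3']; simp only [Matrix.mul_assoc]
      _ = g := by rw [h4', h2']

theorem bl_idem {E : Matrix m m A} {p : Matrix k k A} {f : Matrix k m A} {g : Matrix m k A}
    (hE : E * E = E) (hf : f * E = f) (hg : E * g = g) (hgp : g * p = g) (h : f * g = p) :
    (E - g * f) * (E - g * f) = E - g * f := by
  simp only [Matrix.mul_sub, Matrix.sub_mul, Matrix.mul_assoc, hE, hf, bl_re hg, bl_re h,
    bl_re hgp]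
  abel

theorem bl_S1 {E : Matrix m m A} {p : Matrix k k A} {f f' : Matrix k m A} {g : Matrix m k A}
    (hE : E * E = E) (hf : f * E = f) (hf' : f' * E = f') (hg : E * g = g) (hgp : g * p = g)
    (h : f * g = p) (h' : f' * g = p) : BlAlg (E - g * f) (E - g * f') := by
  refine ⟨bl_idem hE hf hg hgp h, bl_idem hE hf' hg hgp h', E - g * f, E - g * f', ?_, ?_⟩ <;>
  · simp only [Matrix.mul_sub, Matrix.sub_mul, Matrix.mul_assoc, hE, hf, hf', bl_re hg, bl_re h,
      bl_re h', bl_re hgp]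
    abel

theorem bl_S2 {E : Matrix m m A} {p : Matrix k k A} {f : Matrix k m A} {g g' : Matrix m k A}
    (hE : E * E = E) (hf : f * E = f) (hg : E * g = g) (hg' : E * g' = g') (hgp : g * p = g)
    (hgp' : g' * p = g')
    (h : f * g = p) (h' : f * g' = p) : BlAlg (E - g * f) (E - g' * f) := by
  refine ⟨bl_idem hE hf hg hgp h, bl_idem hE hf hg' hgp' h', E - g' * f, E - g * f, ?_, ?_⟩ <;>
  · simp only [Matrix.mul_sub, Matrix.sub_mul, Matrix.mul_assoc, hE, hf, bl_re hg, bl_re hg',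
      bl_re h, bl_re h', bl_re hgp, bl_re hgp']
    abel

theorem bl_chain {E : Matrix m m A} {p : Matrix k k A} {Q : Matrix n n A}
    {f π : Matrix k m A} {g i : Matrix m k A} {J : Matrix m n A} {ρ : Matrix n m A}
    (hE : E * E = E) (hfE : f * E = f) (hπE : π * E = π) (hEg : E * g = g) (hEi : E * i = i)
    (hEJ : E * J = J) (hρE : ρ * E = ρ) (hgp : g * p = g) (hip : i * p = i)
    (hfg : f * g = p) (hπi : π * i = p) (hρJ : ρ * J = Q) (hρi : ρ * i = 0) (hπJ : π * J = 0)
    (hQρ : Q * ρ = ρ) {β : Matrix n k A} {d : Matrix k n A} (hQβ : Q * β = β)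
    (hd : d * β = p) {e : Matrix k k A} (hu : (p - f * J * (ρ * g) + f * J * β) * e = p)
    (hpe : p * e = e) (hep : e * p = e) :
    BlAlg (E - g * f) (E - i * π) := by
  set u := p - f * J * (ρ * g) + f * J * β with hu0
  let b := p - f * J * (ρ * g)
  let x := u * d
  let y := β * e
  have hxy : x * y = p := by
    simp only [x, y, Matrix.mul_assoc, bl_re hd, hpe, hu]
  let g1 := g * e + J * (y - ρ * g * e)
  let B := f * J + b * e * x
  let h := B * ρ
  let g2 := i + J * y
  have hyp : y * p = y := by simp only [y, Matrix.mul_assoc, hep]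
  have hQy : Q * y = y := by simp only [y, ← Matrix.mul_assoc, hQβ]
  have hfg1 : f * g1 = p := by
    rw [← hu, hu0]
    simp only [g1, y, Matrix.mul_add, Matrix.mul_sub, Matrix.add_mul, Matrix.sub_mul,
      Matrix.mul_assoc, bl_re hfg]
    abel
  have hρg1 : ρ * g1 = y := by
    simp only [g1, Matrix.mul_add, Matrix.mul_sub, Matrix.mul_assoc, bl_re hρJ, hQy, bl_re hQρ]
    abel
  have hBy : B * y = p := by
    have : B * y = f * J * y + b * e * (x * y) := by
      simp only [B, Matrix.add_mul, Matrix.mul_assoc]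
    rw [this, hxy, Matrix.mul_assoc b, hep, ← hu, hu0]
    simp only [b, y, Matrix.mul_add, Matrix.mul_sub, Matrix.add_mul, Matrix.sub_mul,
      Matrix.mul_assoc]
    abel
  have hhg1 : h * g1 = p := by simp only [h, Matrix.mul_assoc, hρg1, hBy]
  have hρg2 : ρ * g2 = y := by
    simp only [g2, Matrix.mul_add, hρi, bl_re hρJ, hQy, zero_add]
  have hhg2 : h * g2 = p := by simp only [h, Matrix.mul_assoc, hρg2, hBy]
  have hπg2 : π * g2 = p := by
    simp only [g2, Matrix.mul_add, hπi, bl_re hπJ, Matrix.zero_mul, add_zero]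
  have hEg1 : E * g1 = g1 := by
    simp only [g1, Matrix.mul_add, bl_re hEg, bl_re hEJ]
  have hEg2 : E * g2 = g2 := by
    simp only [g2, Matrix.mul_add, hEi, bl_re hEJ]
  have hhE : h * E = h := by simp only [h, Matrix.mul_assoc, hρE]
  have hg1p : g1 * p = g1 := by
    simp only [g1, Matrix.add_mul, Matrix.mul_assoc, Matrix.sub_mul, hep, hyp]
  have hg2p : g2 * p = g2 := by
    simp only [g2, Matrix.add_mul, Matrix.mul_assoc, hip, hyp]
  exact ((((bl_S2 hE hfE hEg hEg1 hgp hg1p hfg hfg1).trans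
    (bl_S1 hE hfE hhE hEg1 hg1p hfg1 hhg1)).trans
    (bl_S2 hE hhE hEg1 hEg2 hg1p hg2p hhg1 hhg2)).trans
    (bl_S1 hE hhE hπE hEg2 hg2p hhg2 hπg2)).trans
    (bl_S2 hE hπE hEg2 hEi hg2p hip hπg2 hπi)

/-- stable rank input -/
theorem bl_tsr {p : Matrix k k A} (hp : IsProjM p) {N : ℕ} (ht : CornerTsrLe p N)
    {b : Matrix k (k × Fin N) A} {c : Matrix (k × Fin N) k A}
    (hpb : p * b = b) (hcp : c * p = c) (hc : nFold N p * c = c) :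
    ∃ (β : Matrix (k × Fin N) k A) (d : Matrix k (k × Fin N) A) (e : Matrix k k A),
      nFold N p * β = β ∧ d * β = p ∧ (p - b * c + b * β) * e = p ∧ p * e = e ∧ e * p = e := by
  obtain ⟨U, hU, hpU, hUe⟩ := bl_M3 hp.2
  let S := {x : Matrix k k A // p * x * p = x}
  let col : (Fin N → S) → Matrix (k × Fin N) k A := fun w => Matrix.of fun a j => (w a.2).1 a.1 j
  have hcol : ∀ w, nFold N p * col w = col w ∧ col w * p = col w := by
    intro w
    have h1 : ∀ i, p * (w i).1 = (w i).1 := fun i => by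
      rw [← (w i).2]; simp only [← Matrix.mul_assoc, hp.2]
    have h2 : ∀ i, (w i).1 * p = (w i).1 := fun i => by
      rw [← (w i).2]; simp only [Matrix.mul_assoc, hp.2]
    constructor
    · ext ⟨a, i⟩ j
      have := congrFun (congrFun (h1 i) a) j
      simp only [Matrix.mul_apply] at this
      simp [Matrix.mul_apply, nFold, Matrix.blockDiagonal_apply, Fintype.sum_prod_type, col, this]
    · ext ⟨a, i⟩ j
      have := congrFun (congrFun (h2 i) a) j
      simp only [Matrix.mul_apply] at this
      simp [Matrix.mul_apply, col, this]
  have hcont : Continuous col := by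
    refine continuous_pi fun a => continuous_pi fun j => ?_
    have h1 : Continuous fun w : Fin N → S => (w a.2).1 := continuous_subtype_val.comp (continuous_apply _)
    exact h1.matrix_elem a.1 j
  let c0 : Fin N → S := fun i => ⟨Matrix.of fun a j => c (a, i) j, by
    have h1 : p * (Matrix.of fun a j => c (a, i) j) = (Matrix.of fun a j => c (a, i) j) := by
      ext a j
      have := congrFun (congrFun hc (a, i)) j
      simpa [Matrix.mul_apply, nFold, Matrix.blockDiagonal_apply, Fintype.sum_prod_type] using this
    have h2 : (Matrix.of fun a j => c (a, i) j) * p = (Matrix.of fun a j => c (a, i) j) := by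
      ext a j
      have := congrFun (congrFun hcp (a, i)) j
      simpa [Matrix.mul_apply] using this
    rw [h1, h2]⟩
  have hc0 : col c0 = c := by ext; rfl
  have hΦ : Continuous fun w => p - b * c + b * col w := by fun_prop
  have hopen := hU.preimage hΦ
  obtain ⟨w, hw, d, hd⟩ := ht.inter_open_nonempty _ hopen ⟨c0, by simp [hc0, hpU]⟩
  obtain ⟨e, he1, he2, he3⟩ := hUe _ hw
    (by simp only [Matrix.mul_add, Matrix.mul_sub, hp.2, bl_re hpb])
    (by simp only [Matrix.add_mul, Matrix.sub_mul, hp.2, Matrix.mul_assoc, hcp, (hcol w).2])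
  refine ⟨col w, Matrix.of fun a x => (d x.2).1 a x.1, e, (hcol w).1, ?_, he1, he2, he3⟩
  refine Eq.trans ?_ hd
  ext a j
  simp only [Matrix.mul_apply, col, Matrix.sum_apply, Fintype.sum_prod_type, Matrix.of_apply]
  rw [Finset.sum_comm]

theorem bl_cancel {p : Matrix k k A} (hp : IsProjM p) {N : ℕ} (ht : CornerTsrLe p N)
    {Z : Matrix l l A} (hZ : IsProjM Z) {Y : Matrix o o A} (hY : IsProjM Y)
    (h : MvNEquiv (dSum p (dSum (nFold N p) Z)) (dSum p Y)) :
    MvNEquiv (dSum (nFold N p) Z) Y := by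
  have hQ : IsProjM (nFold N p) := by
    constructor
    · rw [nFold, Matrix.blockDiagonal_conjTranspose, hp.1]
    · rw [nFold, ← Matrix.blockDiagonal_mul, hp.2]
  set Q := nFold N p with hQdef
  have hM := bl_proj_dSum hQ hZ
  set M := dSum Q Z with hMdef
  have hE := bl_proj_dSum hp hM
  have hF := bl_proj_dSum hp hY
  obtain ⟨v, hv1, hv2⟩ := h
  set E := dSum p M with hEdef
  -- make `v` compatible
  obtain ⟨v, hv1, hv2, hEv, hvF⟩ : ∃ v : Matrix (k ⊕ ((k × Fin N) ⊕ l)) (k ⊕ o) A, v * vᴴ = E ∧ vᴴ * v = dSum p Y ∧ E * v = v ∧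
      v * dSum p Y = v := by
    set F := dSum p Y with hFdef
    refine ⟨E * v * F, ?_, ?_, ?_, ?_⟩
    · simp only [Matrix.conjTranspose_mul, hE.1, hF.1]
      calc E * v * F * (F * (vᴴ * E)) = E * (v * (F * F) * vᴴ) * E := by
            simp only [Matrix.mul_assoc]
        _ = E * ((v * vᴴ) * (v * vᴴ)) * E := by rw [hF.2, ← hv2]; simp only [Matrix.mul_assoc]
        _ = E := by simp only [hv1, hE.2]
    · simp only [Matrix.conjTranspose_mul, hE.1, hF.1]
      calc F * (vᴴ * E) * (E * v * F) = F * (vᴴ * (E * E) * v) * F := by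
            simp only [Matrix.mul_assoc]
        _ = F * ((vᴴ * v) * (vᴴ * v)) * F := by rw [hE.2, ← hv1]; simp only [Matrix.mul_assoc]
        _ = F := by simp only [hv2, hF.2]
    · simp only [← Matrix.mul_assoc, hE.2]
    · simp only [Matrix.mul_assoc, hF.2]
  have hvE : vᴴ * E = vᴴ := by
    have := congrArg Matrix.conjTranspose hEv
    rwa [Matrix.conjTranspose_mul, hE.1] at this
  let a : Matrix (k ⊕ o) k A := Matrix.fromRows p 0
  let a' : Matrix k (k ⊕ o) A := Matrix.fromCols p 0
  let c : Matrix (k ⊕ o) o A := Matrix.fromRows 0 Y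
  let c' : Matrix o (k ⊕ o) A := Matrix.fromCols 0 Y
  have ha'a : a' * a = p := by simp [a, a', bl_cr, hp.2]
  have hFa : dSum p Y * a = a := by
    simp [a, dSum, bl_br, hp.2]
  have hap : a * p = a := by simp [a, bl_rm, hp.2]
  have hpa' : p * a' = a' := by simp [a', bl_mc, hp.2]
  have hFc : dSum p Y * c = c := by
    simp [c, dSum, bl_br, hY.2]
  have hc'c : c' * c = Y := by simp [c, c', bl_cr, hY.2]
  have hsumF : dSum p Y - a * a' = c * c' := by
    simp only [a, a', c, c', bl_rc, dSum, hp.2, hY.2, bl_bs]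
    simp
  let f := a' * vᴴ
  let g := v * a
  have hfg : f * g = p := by
    simp only [f, g, Matrix.mul_assoc, bl_re hv2, hFa, ha'a]
  have hfE : f * E = f := by simp only [f, Matrix.mul_assoc, hvE]
  have hEg : E * g = g := by simp only [g, bl_re hEv]
  have hgp : g * p = g := by simp only [g, Matrix.mul_assoc, hap]
  have hpf : p * f = f := by simp only [f, bl_re hpa']
  have hEgf : E - g * f = (v * c) * (c' * vᴴ) := by
    calc E - g * f = v * (dSum p Y - a * a') * vᴴ := by
          simp only [f, g, Matrix.mul_sub, Matrix.sub_mul, hvF, hv1, Matrix.mul_assoc]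
      _ = _ := by rw [hsumF]; simp only [Matrix.mul_assoc]
  let i : Matrix (k ⊕ ((k × Fin N) ⊕ l)) k A := Matrix.fromRows p 0
  let π : Matrix k (k ⊕ ((k × Fin N) ⊕ l)) A := Matrix.fromCols p 0
  let J : Matrix (k ⊕ ((k × Fin N) ⊕ l)) (k × Fin N) A := Matrix.fromRows 0 (Matrix.fromRows Q 0)
  let ρ : Matrix (k × Fin N) (k ⊕ ((k × Fin N) ⊕ l)) A := Matrix.fromCols 0 (Matrix.fromCols Q 0)
  let I : Matrix (k ⊕ ((k × Fin N) ⊕ l)) ((k × Fin N) ⊕ l) A := Matrix.fromRows 0 M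
  let I' : Matrix ((k × Fin N) ⊕ l) (k ⊕ ((k × Fin N) ⊕ l)) A := Matrix.fromCols 0 M
  have hEi : E * i = i := by
    simp [i, E, dSum, bl_br, hp.2]
  have hEJ : E * J = J := by
    simp [J, E, M, dSum, bl_br, hQ.2]
  have hπE : π * E = π := by
    simp [π, E, dSum, bl_cb, hp.2]
  have hρE : ρ * E = ρ := by
    simp [ρ, E, M, dSum, bl_cb, hQ.2]
  have hip : i * p = i := by simp [i, bl_rm, hp.2]
  have hπi : π * i = p := by simp [i, π, bl_cr, hp.2]
  have hρJ : ρ * J = Q := by simp [J, ρ, bl_cr, hQ.2]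
  have hρi : ρ * i = 0 := by simp [i, ρ, bl_cr]
  have hπJ : π * J = 0 := by simp [J, π, bl_cr]
  have hQρ : Q * ρ = ρ := by simp [ρ, bl_mc, hQ.2]
  have hI : E - i * π = I * I' := by
    simp only [i, π, I, I', bl_rc, hEdef, hp.2, hM.2]
    simp only [dSum, bl_bs]
    simp
  have hI' : I' * I = M := by simp [I, I', bl_cr, hM.2]
  obtain ⟨β, d, e, h1, h2, h3, h4, h5⟩ := bl_tsr hp ht (b := f * J) (c := ρ * g)
    (by rw [bl_re hpf]) (by rw [Matrix.mul_assoc, hgp]) (by rw [← hQdef, bl_re hQρ])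
  have key := bl_chain hE.2 hfE hπE hEg hEi hEJ hρE hgp hip hfg hπi hρJ hρi hπJ hQρ h1 h2 h3 h4 h5
  have k1 : BlAlg (E - g * f) Y := by
    refine ⟨key.1, hY.2, v * c, c' * vᴴ, hEgf.symm, ?_⟩
    simp only [Matrix.mul_assoc, bl_re hv2, hFc, hc'c]
  have k2 : BlAlg (E - i * π) M := ⟨key.2.1, hM.2, I, I', hI.symm, hI'⟩
  obtain ⟨_, _, x, y, hxy, hyx⟩ := (k2.symm.trans key.symm).trans k1
  exact bl_mvn_of_alg hM hY hxy hyx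

end blC


section blD
variable {A : Type*} [NonUnitalCStarAlgebra A]
variable {k l m n o : Type} [Fintype k] [Fintype l] [Fintype m] [Fintype n] [Fintype o]

/-- factorization through multiples of `p` -/
def BlFac (p : Matrix k k A) (hp : IsProjM p) (T : Matrix m n A) : Prop :=
  ∃ (κ : Type) (_ : Fintype κ) (Q : Matrix κ κ A) (hQ : IsProjM Q) (c : ℕ)
    (X : Matrix m κ A) (Y : Matrix κ n A), blCls Q hQ = c • blCls p hp ∧ T = X * Q * Y

theorem BlFac.zero (p : Matrix k k A) (hp : IsProjM p) : BlFac p hp (0 : Matrix m n A) :=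
  ⟨k, inferInstance, p, hp, 1, 0, 0, by simp, by simp⟩

theorem BlFac.add {p : Matrix k k A} {hp : IsProjM p} {T T' : Matrix m n A}
    (h : BlFac p hp T) (h' : BlFac p hp T') : BlFac p hp (T + T') := by
  obtain ⟨κ, _, Q, hQ, c, X, Y, h1, rfl⟩ := h
  obtain ⟨κ', _, Q', hQ', c', X', Y', h1', rfl⟩ := h'
  refine ⟨κ ⊕ κ', inferInstance, dSum Q Q', bl_proj_dSum hQ hQ', c + c', Matrix.fromCols X X',
    Matrix.fromRows Y Y', ?_, ?_⟩
  · rw [blCls_dSum hQ hQ', h1, h1', add_smul]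
  · rw [dSum, bl_cb, bl_cr]; simp

theorem BlFac.mul {p : Matrix k k A} {hp : IsProjM p} {T : Matrix m n A}
    (h : BlFac p hp T) (x : Matrix l m A) : BlFac p hp (x * T) := by
  obtain ⟨κ, _, Q, hQ, c, X, Y, h1, rfl⟩ := h
  exact ⟨κ, inferInstance, Q, hQ, c, x * X, Y, h1, by simp only [Matrix.mul_assoc]⟩

theorem BlFac.mul' {p : Matrix k k A} {hp : IsProjM p} {T : Matrix m n A}
    (h : BlFac p hp T) (x : Matrix n l A) : BlFac p hp (T * x) := by
  obtain ⟨κ, _, Q, hQ, c, X, Y, h1, rfl⟩ := h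
  exact ⟨κ, inferInstance, Q, hQ, c, X, Y * x, h1, by simp only [Matrix.mul_assoc]⟩

theorem BlFac.neg {p : Matrix k k A} {hp : IsProjM p} {T : Matrix m n A}
    (h : BlFac p hp T) : BlFac p hp (-T) := by
  obtain ⟨κ, _, Q, hQ, c, X, Y, h1, rfl⟩ := h
  exact ⟨κ, inferInstance, Q, hQ, c, -X, Y, h1, by simp only [Matrix.neg_mul]⟩

theorem BlFac.sum {p : Matrix k k A} {hp : IsProjM p} {ι : Type*} (S : Finset ι)
    (T : ι → Matrix m n A) (h : ∀ i, BlFac p hp (T i)) : BlFac p hp (∑ i ∈ S, T i) := by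
  classical
  induction S using Finset.induction_on with
  | empty => simpa using BlFac.zero p hp
  | insert a S ha ih => rw [Finset.sum_insert ha]; exact (h a).add ih

open Classical in
theorem bl_dense (hs : IsSimpleCStarAlgebra A) {p : Matrix k k A} (hp : IsProjM p) (hp0 : p ≠ 0) :
    Dense {T : Matrix l l A | BlFac p hp T} := by
  let I : Set A := {a | ∀ i j, BlFac p hp (Matrix.single i j a : Matrix l l A)}
  have hadd : ∀ x ∈ I, ∀ y ∈ I, x + y ∈ I := fun x hx y hy i j => by
    rw [Matrix.single_add]; exact (hx i j).add (hy i j)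
  have hneg : ∀ x ∈ I, -x ∈ I := fun x hx i j => by
    have : (Matrix.single i j (-x) : Matrix l l A) = - Matrix.single i j x := by
      ext a b; simp [Matrix.single_apply]; split_ifs <;> simp
    rw [this]; exact (hx i j).neg
  have hl : ∀ x ∈ I, ∀ a : A, a * x ∈ I := fun x hx a i j => by
    have : (Matrix.single i j (a * x) : Matrix l l A) = Matrix.single i i a * Matrix.single i j x := by
      rw [Matrix.single_mul_single_same]
    rw [this]; exact (hx i j).mul _
  have hr : ∀ x ∈ I, ∀ a : A, x * a ∈ I := fun x hx a i j => by
    have : (Matrix.single i j (x * a) : Matrix l l A) = Matrix.single i j x * Matrix.single j j a := by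
      rw [Matrix.single_mul_single_same]
    rw [this]; exact (hx i j).mul' _
  have hpI : ∀ a b, p a b ∈ I := fun a b i j => by
    refine ⟨k, inferInstance, p, hp, 1, Matrix.of fun x c => if x = i then p a c else 0,
      Matrix.of fun c y => if y = j then p c b else 0, by simp, ?_⟩
    have h3 : p * p * p = p := by rw [hp.2, hp.2]
    have := congrFun (congrFun h3 a) b
    simp only [Matrix.mul_apply] at this
    ext x y
    simp only [Matrix.single_apply, Matrix.mul_apply, Matrix.of_apply]
    by_cases hx : x = i
    · by_cases hy : y = j
      · simp [hx, hy, this]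
      · simp [hy, Ne.symm hy]
    · simp [hx, Ne.symm hx]
  have hI : closure I = Set.univ := by
    refine (hs (closure I) isClosed_closure ?_ ?_ ?_ ?_ ?_).resolve_left ?_
    · exact subset_closure fun i j => by simpa using BlFac.zero p hp
    · exact fun x hx y hy => map_mem_closure₂ continuous_add hx hy hadd
    · exact fun x hx => map_mem_closure continuous_neg hx hneg
    · exact fun x hx a => map_mem_closure (continuous_const_mul a) hx fun y hy => hl y hy a
    · exact fun x hx a => map_mem_closure (f := fun z => z * a) (continuous_mul_const a) hx fun y hy => hr y hy a
    · intro h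
      apply hp0
      ext a b
      have : p a b ∈ closure I := subset_closure (hpI a b)
      rw [h] at this
      simpa using this
  have hd : Dense I := dense_iff_closure_eq.2 hI
  have h2 : Dense (Set.pi (Set.univ : Set l) fun _ : l => Set.pi (Set.univ : Set l) fun _ : l => I) :=
    dense_pi _ fun _ _ => dense_pi _ fun _ _ => hd
  refine Dense.mono ?_ h2
  intro T hT
  show BlFac p hp T
  have : T = ∑ i, ∑ j, Matrix.single i j (T i j) := Matrix.matrix_eq_sum_single T
  rw [this]
  exact BlFac.sum _ _ fun i => BlFac.sum _ _ fun j => hT i trivial j trivial i j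

theorem bl_sub {q Q : Matrix n n A} (hQ : IsProjM Q) (hq : IsProjM q) (h : Q * q = q) :
    ∃ h' : IsProjM (Q - q), blCls Q hQ = blCls q hq + blCls (Q - q) h' := by
  have h2 : q * Q = q := by
    have := congrArg Matrix.conjTranspose h
    rwa [Matrix.conjTranspose_mul, hQ.1, hq.1] at this
  have h' : IsProjM (Q - q) := by
    refine ⟨by rw [Matrix.conjTranspose_sub, hQ.1, hq.1], ?_⟩
    simp only [Matrix.mul_sub, Matrix.sub_mul, hQ.2, hq.2, h, h2]
    abel
  refine ⟨h', ?_⟩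
  rw [← blCls_dSum, blCls_eq_iff]
  refine bl_mvn_of_alg hQ (bl_proj_dSum hq h') (x := Matrix.fromCols q (Q - q))
    (y := Matrix.fromRows q (Q - q)) ?_ ?_
  · rw [bl_cr, hq.2, h'.2]; abel
  · rw [bl_rc, hq.2, h'.2, dSum]
    simp only [Matrix.mul_sub, Matrix.sub_mul, hq.2, h, h2, sub_self]

theorem bl_simple (hs : IsSimpleCStarAlgebra A) {p : Matrix k k A} (hp : IsProjM p) (hp0 : p ≠ 0)
    {r : Matrix l l A} (hr : IsProjM r) :
    ∃ (c : ℕ) (y : BlV A), blCls r hr + y = c • blCls p hp := by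
  obtain ⟨U, hU, hrU, hUe⟩ := bl_M3 hr.2
  have hΦ : Continuous fun T : Matrix l l A => r * T * r := by fun_prop
  obtain ⟨T, hT, hfac⟩ := (bl_dense (l := l) hs hp hp0).inter_open_nonempty _ (hU.preimage hΦ)
    ⟨r, by simpa [hr.2] using hrU⟩
  obtain ⟨e, he, hre, her⟩ := hUe _ hT (by simp only [← Matrix.mul_assoc, hr.2])
    (by simp only [Matrix.mul_assoc, hr.2])
  obtain ⟨κ, _, Q, hQ, c, X, Y, hc, rfl⟩ := hfac
  have hxy : (r * X * Q) * (Q * Y * r * e * r) = r := by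
    calc (r * X * Q) * (Q * Y * r * e * r) = r * (X * (Q * Q) * Y) * r * e * r := by
          simp only [Matrix.mul_assoc]
      _ = r := by rw [hQ.2, he, hr.2]
  have hrx : r * (r * X * Q) = r * X * Q := by simp only [← Matrix.mul_assoc, hr.2]
  have hQy : Q * (Q * Y * r * e * r) = Q * Y * r * e * r := by simp only [← Matrix.mul_assoc, hQ.2]
  have hyr : (Q * Y * r * e * r) * r = Q * Y * r * e * r := by simp only [Matrix.mul_assoc, hr.2]
  generalize r * X * Q = x at hxy hrx
  generalize Q * Y * r * e * r = y at hxy hQy hyr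
  have hf : (y * x) * (y * x) = y * x := by
    simp only [Matrix.mul_assoc, bl_re hxy, hrx]
  obtain ⟨q, hq, hfq, hqf⟩ := bl_M2 hf
  have hQq : Q * q = q := by
    rw [← hfq]; simp only [← Matrix.mul_assoc, hQy]
  obtain ⟨h', h2⟩ := bl_sub hQ hq hQq
  refine ⟨c, blCls _ h', ?_⟩
  rw [← hc, h2]
  congr 1
  rw [blCls_eq_iff]
  have hqy : q * y = y := by
    calc q * y = q * (y * (x * y)) := by rw [hxy, hyr]
      _ = (q * (y * x)) * y := by simp only [Matrix.mul_assoc]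
      _ = y := by rw [hqf, Matrix.mul_assoc, hxy, hyr]
  refine bl_mvn_of_alg hr hq (x := x * q) (y := y) ?_ ?_
  · rw [Matrix.mul_assoc, hqy, hxy]
  · rw [← Matrix.mul_assoc, hfq]

end blD


section blE
variable {A : Type*} [NonUnitalCStarAlgebra A]

theorem bl_cancel_cls {k : Type} [Fintype k] {p : Matrix k k A} (hp : IsProjM p) {N : ℕ}
    (ht : CornerTsrLe p N) {x z : BlV A}
    (h : blCls p hp + (N • blCls p hp + x) = blCls p hp + z) : N • blCls p hp + x = z := by
  obtain ⟨a, X, hX, rfl⟩ := blV_ind x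
  obtain ⟨b, Z, hZ, rfl⟩ := blV_ind z
  rw [← blCls_nFold hp N, ← blCls_dSum (bl_proj_nFold hp N) hX] at h ⊢
  rw [← blCls_dSum hp (bl_proj_dSum (bl_proj_nFold hp N) hX), ← blCls_dSum hp hZ,
    blCls_eq_iff] at h
  rw [blCls_eq_iff]
  exact bl_cancel hp ht hX hZ h

theorem bl_cancel_mul {k : Type} [Fintype k] {p : Matrix k k A} (hp : IsProjM p) {N : ℕ}
    (ht : CornerTsrLe p N) {x z : BlV A} (c : ℕ)
    (h : c • blCls p hp + (N • blCls p hp + x) = c • blCls p hp + z) :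
    N • blCls p hp + x = z := by
  induction c with
  | zero => simpa using h
  | succ c ih =>
    apply ih
    have h2 : blCls p hp + (N • blCls p hp + (c • blCls p hp + x))
        = blCls p hp + (c • blCls p hp + z) := by
      have e1 : blCls p hp + (N • blCls p hp + (c • blCls p hp + x))
        = (c + 1) • blCls p hp + (N • blCls p hp + x) := by rw [succ_nsmul]; abel
      rw [e1, h, succ_nsmul]; abel
    rw [← bl_cancel_cls hp ht h2]; abel

theorem bl_small (P : Set (Σ k : ℕ, Matrix (Fin k) (Fin k) A))
    (hP : ∀ p ∈ P, IsProjM p.2 ∧ p.2 ≠ 0)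
    (hsmall : ∀ (l : ℕ) (q : Matrix (Fin l) (Fin l) A), IsProjM q → q ≠ 0 →
      ∃ p ∈ P, ∃ (kr ks : ℕ) (r : Matrix (Fin kr) (Fin kr) A)
        (s : Matrix (Fin ks) (Fin ks) A), IsProjM r ∧ IsProjM s ∧
        MvNEquiv (dSum (dSum (dSum p.2 p.2) r) s) (dSum q s))
    (j : ℕ) {l : ℕ} {q : Matrix (Fin l) (Fin l) A} (hq : IsProjM q) (hq0 : q ≠ 0) :
    ∃ (p : Σ k : ℕ, Matrix (Fin k) (Fin k) A) (hp : p ∈ P) (x s : BlV A),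
      2 ^ (j + 1) • blCls p.2 (hP p hp).1 + x + s = blCls q hq + s := by
  have key : ∀ (l : ℕ) (q : Matrix (Fin l) (Fin l) A) (hq : IsProjM q), q ≠ 0 →
      ∃ (p : Σ k : ℕ, Matrix (Fin k) (Fin k) A) (hp : p ∈ P) (x s : BlV A),
      2 • blCls p.2 (hP p hp).1 + x + s = blCls q hq + s := by
    intro l q hq hq0
    obtain ⟨p, hp, _, _, r, s, hr, hs, h⟩ := hsmall l q hq hq0
    have hp' := (hP p hp).1
    refine ⟨p, hp, blCls r hr, blCls s hs, ?_⟩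
    rw [two_nsmul, ← blCls_dSum hp' hp', ← blCls_dSum (bl_proj_dSum hp' hp') hr,
      ← blCls_dSum (bl_proj_dSum (bl_proj_dSum hp' hp') hr) hs, ← blCls_dSum hq hs, blCls_eq_iff]
    exact h
  induction j with
  | zero => simpa using key l q hq hq0
  | succ j ih =>
    obtain ⟨p, hp, x, s, h⟩ := ih
    obtain ⟨p', hp', x', s', h'⟩ := key _ p.2 (hP p hp).1 (hP p hp).2
    refine ⟨p', hp', 2 ^ (j + 1) • x' + x, 2 ^ (j + 1) • s' + s, ?_⟩
    have h2 := congrArg (fun y => 2 ^ (j + 1) • y) h'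
    simp only [nsmul_add, smul_smul] at h2
    rw [pow_succ 2 (j + 1)]
    calc _ = ((2 ^ (j + 1) * 2) • blCls p'.2 (hP p' hp').1 + 2 ^ (j + 1) • x' + 2 ^ (j + 1) • s')
          + (x + s) := by abel
      _ = (2 ^ (j + 1) • blCls p.2 (hP p hp).1 + x + s) + 2 ^ (j + 1) • s' := by rw [h2]; abel
      _ = _ := by rw [h]; abel

theorem bl_main (hsimple : IsSimpleCStarAlgebra A)
    (P : Set (Σ k : ℕ, Matrix (Fin k) (Fin k) A))
    (hP : ∀ p ∈ P, IsProjM p.2 ∧ p.2 ≠ 0)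
    (hsmall : ∀ (l : ℕ) (q : Matrix (Fin l) (Fin l) A), IsProjM q → q ≠ 0 →
      ∃ p ∈ P, ∃ (kr ks : ℕ) (r : Matrix (Fin kr) (Fin kr) A)
        (s : Matrix (Fin ks) (Fin ks) A), IsProjM r ∧ IsProjM s ∧
        MvNEquiv (dSum (dSum (dSum p.2 p.2) r) s) (dSum q s))
    (N : ℕ) (htsr : ∀ p ∈ P, CornerTsrLe p.2 N)
    {l : ℕ} {q : Matrix (Fin l) (Fin l) A} (hq : IsProjM q) (hq0 : q ≠ 0) {r z : BlV A}
    (h : blCls q hq + r = z + r) : blCls q hq = z := by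
  obtain ⟨p, hp, x, s, hx⟩ := bl_small P hP hsmall N hq hq0
  have hp' := (hP p hp).1
  have ht := htsr p hp
  have hdom : ∀ y : BlV A, ∃ (c : ℕ) (w : BlV A), y + w = c • blCls p.2 hp' := by
    intro y
    obtain ⟨_, Y, hY, rfl⟩ := blV_ind y
    exact bl_simple hsimple hp' (hP p hp).2 hY
  obtain ⟨d, hd⟩ : ∃ d, 2 ^ (N + 1) = N + d :=
    Nat.exists_eq_add_of_le ((Nat.lt_two_pow_self (n := N)).le.trans
      (Nat.pow_le_pow_right (by norm_num) (by omega)))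
  rw [hd, add_nsmul] at hx
  obtain ⟨c, w, hw⟩ := hdom s
  have h1 : N • blCls p.2 hp' + (d • blCls p.2 hp' + x) = blCls q hq := by
    apply bl_cancel_mul hp' ht c
    rw [← hw]
    calc _ = (N • blCls p.2 hp' + d • blCls p.2 hp' + x + s) + w := by abel
      _ = _ := by rw [hx]; abel
  obtain ⟨c', w', hw'⟩ := hdom r
  rw [← h1]
  apply bl_cancel_mul hp' ht c'
  rw [← hw', h1]
  calc _ = (blCls q hq + r) + w' := by abel
    _ = _ := by rw [h]; abel

end blE

/-- Blackadar's cancellation theorem: if `A` is a simple C*-algebra and `P` is a set of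
nonzero projections in matrix algebras over `A` such that (1) every nonzero projection
`q` over `A` satisfies `2 [p] ≤ [q]` in `K₀ (A)` for some `p ∈ P`, and (2) the corners by
elements of `P` have uniformly bounded topological stable rank, then projections over `A`
satisfy cancellation. -/
theorem mvNEquiv_cancellation {A : Type*} [NonUnitalCStarAlgebra A]
    (hsimple : IsSimpleCStarAlgebra A)
    (P : Set (Σ k : ℕ, Matrix (Fin k) (Fin k) A))
    (hP : ∀ p ∈ P, IsProjM p.2 ∧ p.2 ≠ 0)
    (hsmall : ∀ (l : ℕ) (q : Matrix (Fin l) (Fin l) A), IsProjM q → q ≠ 0 →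
      ∃ p ∈ P, ∃ (kr ks : ℕ) (r : Matrix (Fin kr) (Fin kr) A)
        (s : Matrix (Fin ks) (Fin ks) A), IsProjM r ∧ IsProjM s ∧
        MvNEquiv (dSum (dSum (dSum p.2 p.2) r) s) (dSum q s))
    (N : ℕ) (htsr : ∀ p ∈ P, CornerTsrLe p.2 N)
    {a b c : ℕ}
    (p : Matrix (Fin a) (Fin a) A) (q : Matrix (Fin b) (Fin b) A)
    (r : Matrix (Fin c) (Fin c) A)
    (hp : IsProjM p) (hq : IsProjM q) (hr : IsProjM r)
    (hsum : MvNEquiv (dSum p r) (dSum q r)) :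
    MvNEquiv p q := by
  have h : blCls p hp + blCls r hr = blCls q hq + blCls r hr := by
    rw [← blCls_dSum hp hr, ← blCls_dSum hq hr, blCls_eq_iff]
    exact hsum
  by_cases hp0 : p = 0
  · by_cases hq0 : q = 0
    · subst hp0 hq0
      exact ⟨0, by simp, by simp⟩
    · exact bl_symm (blCls_eq_iff.1
        (bl_main hsimple P hP hsmall N htsr hq hq0 h.symm))
  · exact blCls_eq_iff.1 (bl_main hsimple P hP hsmall N htsr hp hp0 h)
end

section
/- Let A be a simple C*-algebra, and let P be a set of nonzero projections in matrix algebras over A such that: (1) for every nonzero projection q in a matrix algebra over A there exist p ∈ P and projections r, s in matrix algebras over A with p ⊕ p ⊕ r ⊕ s ∼ q ⊕ s; and (2) tsr(p M_k(A) p) ≤ N for every p ∈ P (with p ∈ M_k(A)), for some fixed N ∈ ℕ. Then for every nonzero projection q in a matrix algebra over A there exists p ∈ P such that N*p ≾ q. -/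
open scoped Matrix

namespace BC
universe u
open Matrix

section alg
variable {A : Type u} [NonUnitalCStarAlgebra A]
variable {m n k l : Type*} [Fintype m] [Fintype n] [Fintype k] [Fintype l]

/-- Algebraic equivalence of idempotents. -/
def AE (p : Matrix m m A) (q : Matrix n n A) : Prop :=
  ∃ (x : Matrix m n A) (y : Matrix n m A), x * y = p ∧ y * x = q

theorem AE.normd {p : Matrix m m A} {q : Matrix n n A} (h : AE p q) (hp : p * p = p)
    (hq : q * q = q) : ∃ (x : Matrix m n A) (y : Matrix n m A), x * y = p ∧ y * x = q ∧
      p * x = x ∧ x * q = x ∧ q * y = y ∧ y * p = y := by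
  obtain ⟨x, y, h1, h2⟩ := h
  have e1 : (p * x) * q = p * x := by
    rw [← h2, ← Matrix.mul_assoc, Matrix.mul_assoc p x y, h1, hp]
  have e2 : q * (y * p) = y * p := by
    rw [← h2, Matrix.mul_assoc, ← Matrix.mul_assoc x y p, h1, hp]
  refine ⟨p * x, y * p, ?_, ?_, ?_, e1, e2, ?_⟩
  · rw [Matrix.mul_assoc, ← Matrix.mul_assoc x, h1, hp, hp]
  · rw [Matrix.mul_assoc, ← Matrix.mul_assoc p p, hp, ← h1, Matrix.mul_assoc, h2,
      ← Matrix.mul_assoc, h2, hq]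
  · rw [← Matrix.mul_assoc, hp]
  · rw [Matrix.mul_assoc, hp]

theorem AE.refl {p : Matrix m m A} (hp : p * p = p) : AE p p := ⟨p, p, hp, hp⟩

theorem AE.symm {p : Matrix m m A} {q : Matrix n n A} (h : AE p q) : AE q p := by
  obtain ⟨x, y, h1, h2⟩ := h
  exact ⟨y, x, h2, h1⟩

theorem AE.trans {p : Matrix m m A} {q : Matrix n n A} {r : Matrix k k A} (h : AE p q)
    (h' : AE q r) (hp : p * p = p) (hr : r * r = r) : AE p r := by
  obtain ⟨x, y, h1, h2⟩ := h
  obtain ⟨z, w, h3, h4⟩ := h'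
  refine ⟨x * z, w * y, ?_, ?_⟩
  · rw [Matrix.mul_assoc, ← Matrix.mul_assoc z, h3, ← h2, Matrix.mul_assoc y, h1,
      ← Matrix.mul_assoc, h1, hp]
  · rw [Matrix.mul_assoc, ← Matrix.mul_assoc y, h2, ← h3, Matrix.mul_assoc z, h4,
      ← Matrix.mul_assoc, h4, hr]

theorem AE.dSum {p : Matrix m m A} {q : Matrix n n A} {r : Matrix k k A} {s : Matrix l l A}
    (h : AE p q) (h' : AE r s) : AE (dSum p r) (dSum q s) := by
  obtain ⟨x, y, h1, h2⟩ := h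
  obtain ⟨z, w, h3, h4⟩ := h'
  refine ⟨Matrix.fromBlocks x 0 0 z, Matrix.fromBlocks y 0 0 w, ?_, ?_⟩ <;>
  simp [_root_.dSum, Matrix.fromBlocks_multiply, *]

theorem dSum_idem {p : Matrix m m A} {q : Matrix n n A} (hp : p * p = p) (hq : q * q = q) :
    dSum p q * dSum p q = dSum p q := by
  simp [dSum, Matrix.fromBlocks_multiply, *]

theorem AE_submatrix {p : Matrix m m A} (hp : p * p = p) (e : n ≃ m) :
    AE (p.submatrix e e) p := by
  refine ⟨p.submatrix e id, p.submatrix id e, ?_, ?_⟩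
  · rw [← Matrix.submatrix_mul _ _ e id e Function.bijective_id, hp]
  · rw [← Matrix.submatrix_mul _ _ id e id e.bijective, hp]; simp

theorem AE_zero_dSum {p : Matrix m m A} (hp : p * p = p) :
    AE (dSum (0 : Matrix n n A) p) p := by
  have key : ∀ i j, ∑ c, p i c * p c j = p i j := fun i j => by
    rw [← Matrix.mul_apply, hp]
  refine ⟨Matrix.fromRows 0 p, Matrix.fromCols 0 p, ?_, ?_⟩
  · ext (i | i) (j | j) <;> simp [dSum, Matrix.mul_apply, key]
  · ext i j
    simp [Matrix.mul_apply, key]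

theorem AE_dSum_comm {p : Matrix m m A} {q : Matrix n n A} (hp : p * p = p) (hq : q * q = q) :
    AE (dSum p q) (dSum q p) := by
  have h := AE_submatrix (dSum_idem hq hp) (Equiv.sumComm m n)
  have e : (dSum q p).submatrix (Equiv.sumComm m n) (Equiv.sumComm m n) = dSum p q := by
    ext i j
    rcases i with i | i <;> rcases j with j | j <;> rfl
  rwa [e] at h

theorem AE_dSum_assoc {p : Matrix m m A} {q : Matrix n n A} {r : Matrix k k A} (hp : p * p = p)
    (hq : q * q = q) (hr : r * r = r) :
    AE (dSum (dSum p q) r) (dSum p (dSum q r)) := by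
  have h := AE_submatrix (dSum_idem hp (dSum_idem hq hr)) (Equiv.sumAssoc m n k)
  have e : (dSum p (dSum q r)).submatrix (Equiv.sumAssoc m n k) (Equiv.sumAssoc m n k)
      = dSum (dSum p q) r := by
    ext i j
    rcases i with (i | i) | i <;> rcases j with (j | j) | j <;> rfl
  rwa [e] at h

theorem nFold_idem {p : Matrix m m A} (hp : p * p = p) (N : ℕ) :
    nFold N p * nFold N p = nFold N p := by
  unfold nFold
  rw [← Matrix.blockDiagonal_mul, hp]

theorem AE_nFold_succ {p : Matrix m m A} (hp : p * p = p) (N : ℕ) :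
    AE (nFold (N + 1) p) (dSum (nFold N p) p) := by
  let e : (m × Fin N) ⊕ m ≃ m × Fin (N + 1) :=
    { toFun := Sum.elim (fun a => (a.1, a.2.castSucc)) (fun a => (a, Fin.last N))
      invFun := fun a => Fin.lastCases (motive := fun _ => (m × Fin N) ⊕ m) (Sum.inr a.1)
        (fun i => Sum.inl (a.1, i)) a.2
      left_inv := by
        rintro (⟨a, i⟩ | a) <;> simp
      right_inv := by
        rintro ⟨a, i⟩
        induction i using Fin.lastCases <;> simp }
  have h := AE_submatrix (nFold_idem hp (N + 1)) e
  have e : (nFold (N + 1) p).submatrix e e = dSum (nFold N p) p := by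
    ext i j
    rcases i with ⟨i, a⟩ | i <;> rcases j with ⟨j, b⟩ | j <;>
      simp [e, nFold, dSum, Matrix.blockDiagonal_apply, Fin.ext_iff] <;> intro h <;> omega
  rw [e] at h
  exact h.symm

theorem AE_compl {f : Matrix l l A} {x : Matrix k l A} {y : Matrix l k A}
    {g : Matrix l l A} (hyx : y * x = f) (hg : g * g = g) (hfg : f * g = g) :
    AE (x * g * y) g := by
  refine ⟨x * g, g * y, ?_, ?_⟩
  · rw [Matrix.mul_assoc, ← Matrix.mul_assoc g, hg, ← Matrix.mul_assoc]
  · rw [Matrix.mul_assoc, ← Matrix.mul_assoc y, hyx, hfg, hg]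

end alg

section V
variable (A : Type u) [NonUnitalCStarAlgebra A]

/-- Idempotents over matrix algebras. -/
structure Obj where
  ι : Type
  ft : Fintype ι
  p : Matrix ι ι A
  idem : p * p = p

attribute [instance] Obj.ft

/-- Setoid. -/
def Obj.sd : Setoid (Obj A) where
  r a b := AE a.p b.p
  iseqv := ⟨fun a => AE.refl a.idem, fun h => h.symm, fun {a _ c} h h' => h.trans h' a.idem c.idem⟩

/-- The monoid of classes of idempotents. -/
def V := Quotient (Obj.sd A)

variable {A}

/-- The class of an idempotent. -/
def cl {m : Type} [Fintype m] (p : Matrix m m A) (hp : p * p = p) : V A :=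
  Quotient.mk (Obj.sd A) ⟨m, inferInstance, p, hp⟩

theorem cl_eq {m n : Type} [Fintype m] [Fintype n] {p : Matrix m m A} {q : Matrix n n A}
    {hp : p * p = p} {hq : q * q = q} : cl p hp = cl q hq ↔ AE p q :=
  Quotient.eq (r := Obj.sd A)

theorem V.ind {motive : V A → Prop}
    (h : ∀ (m : Type) [Fintype m] (p : Matrix m m A) (hp : p * p = p), motive (cl p hp))
    (a : V A) : motive a := by
  induction a using Quotient.inductionOn with
  | h a => exact @h a.ι a.ft a.p a.idem

instance : Add (V A) := ⟨Quotient.map₂ (sa := Obj.sd A) (sb := Obj.sd A) (sc := Obj.sd A)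
  (fun a b => ⟨a.ι ⊕ b.ι, inferInstance, dSum a.p b.p, dSum_idem a.idem b.idem⟩)
  (fun _ _ h _ _ h' => AE.dSum h h')⟩

instance : Zero (V A) := ⟨cl (0 : Matrix Empty Empty A) (by simp)⟩

theorem cl_add {m n : Type} [Fintype m] [Fintype n] {p : Matrix m m A} {q : Matrix n n A}
    (hp : p * p = p) (hq : q * q = q) : cl p hp + cl q hq = cl (dSum p q) (dSum_idem hp hq) := rfl

theorem V.add_comm' (a b : V A) : a + b = b + a := by
  induction a using V.ind with | _ m p hp
  induction b using V.ind with | _ n q hq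
  exact cl_eq.2 (AE_dSum_comm hp hq)

theorem V.zero_add' (a : V A) : 0 + a = a := by
  induction a using V.ind with | _ m p hp
  exact cl_eq.2 (AE_zero_dSum hp)

instance : AddCommMonoid (V A) where
  add_assoc a b c := by
    induction a using V.ind with | _ m p hp
    induction b using V.ind with | _ n q hq
    induction c using V.ind with | _ k r hr
    exact cl_eq.2 (AE_dSum_assoc hp hq hr)
  zero_add := V.zero_add'
  add_zero a := by rw [V.add_comm', V.zero_add']
  add_comm := V.add_comm'
  nsmul := nsmulRec

theorem cl_nFold {m : Type} [Fintype m] {p : Matrix m m A} (hp : p * p = p) (N : ℕ) :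
    cl (nFold N p) (nFold_idem hp N) = N • cl p hp := by
  induction N with
  | zero =>
    rw [zero_smul]
    exact cl_eq.2 ⟨0, 0, by ext ⟨_, i⟩; exact i.elim0, by ext i; exact i.elim⟩
  | succ N ih =>
    rw [succ_nsmul, ← ih, cl_add]
    exact cl_eq.2 (AE_nFold_succ hp N)

end V

section analytic

/-- Elements near an idempotent in a corner are invertible in the corner. -/
theorem inv_near_aux {B : Type*} [NonUnitalCStarAlgebra B] {p : B} (hp : p * p = p) :
    ∀ᶠ u in nhds p, p * u * p = u → ∃ k, p * k * p = k ∧ u * k = p ∧ k * u = p := by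
  have hc : Continuous (fun u : B => (1 : Unitization ℂ B) - ((p - u : B) : Unitization ℂ B)) := by
    have : Continuous (fun x : B => (x : Unitization ℂ B)) := Unitization.isometry_inr.continuous
    fun_prop
  have ho := (Units.isOpen (R := Unitization ℂ B)).preimage hc
  have hm : p ∈ (fun u : B => (1 : Unitization ℂ B) - ((p - u : B) : Unitization ℂ B)) ⁻¹'
      {x | IsUnit x} := by simp
  filter_upwards [ho.mem_nhds hm] with u hu hpu
  obtain ⟨w, hw⟩ := hu
  have hup : u * p = u := by rw [← hpu, mul_assoc _ p p, hp]
  have hpu' : p * u = u := by rw [← hpu, ← mul_assoc, ← mul_assoc, hp]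
  have h1 : (w : Unitization ℂ B) * (p : Unitization ℂ B) = (u : Unitization ℂ B) := by
    rw [hw, sub_mul, one_mul, ← Unitization.inr_mul, sub_mul, hp, hup]
    simp
  have h2 : (p : Unitization ℂ B) * w = (u : Unitization ℂ B) := by
    rw [hw, mul_sub, mul_one, ← Unitization.inr_mul, mul_sub, hp, hpu']
    simp
  have hk : ((↑w⁻¹ : Unitization ℂ B) * (p : Unitization ℂ B)).fst = 0 := by simp
  obtain ⟨k, hk'⟩ : ∃ k : B, (k : Unitization ℂ B) = (↑w⁻¹ : Unitization ℂ B) * p := by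
    refine ⟨((↑w⁻¹ : Unitization ℂ B) * (p : Unitization ℂ B)).snd, ?_⟩
    ext
    · rw [hk]; simp
    · simp
  have hk2 : (k : Unitization ℂ B) = p * (↑w⁻¹ : Unitization ℂ B) := by
    rw [hk']
    rw [Units.inv_mul_eq_iff_eq_mul, ← mul_assoc, h1, ← h2, mul_assoc, Units.mul_inv, mul_one]
  have hpp : (p : Unitization ℂ B) * p = p := by rw [← Unitization.inr_mul, hp]
  have hinj := Unitization.inr_injective (R := ℂ) (A := B)
  refine ⟨k, hinj ?_, hinj ?_, hinj ?_⟩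
  · simp only [Unitization.inr_mul]
    rw [hk2, ← mul_assoc, hpp, ← hk2, hk', mul_assoc, hpp]
  · simp only [Unitization.inr_mul]
    rw [hk', ← h2, mul_assoc, Units.mul_inv_cancel_left, hpp]
  · simp only [Unitization.inr_mul]
    rw [hk2, ← h1, mul_assoc, Units.inv_mul_cancel_left, hpp]

theorem inv_near {A : Type u} [NonUnitalCStarAlgebra A] {m : Type*} [Fintype m]
    {p : Matrix m m A} (hp : p * p = p) :
    ∀ᶠ u in nhds p, p * u * p = u → ∃ k, p * k * p = k ∧ u * k = p ∧ k * u = p := by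
  let _ := CStarAlgebra.spectralOrder A
  let _ := CStarAlgebra.spectralOrderedRing A
  exact inv_near_aux (B := CStarMatrix m m A) (p := CStarMatrix.ofMatrix p) hp

theorem polar_aux {B : Type*} [NonUnitalCStarAlgebra B] {P x y : B} (hP : star P = P)
    (hPP : P * P = P) (hxy : x * y = P) (hPx : P * x = x) :
    ∃ h : B, P * (h * x) = h * x ∧ (h * x) * star (h * x) = P := by
  let _ := CStarAlgebra.spectralOrder B
  have _ := CStarAlgebra.spectralOrderedRing B
  let _ := CStarAlgebra.spectralOrder (Unitization ℂ B)
  have _ := CStarAlgebra.spectralOrderedRing (Unitization ℂ B)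
  set Q : Unitization ℂ B := (P : Unitization ℂ B) with hQ
  set X : Unitization ℂ B := (x : Unitization ℂ B) with hX
  set Y : Unitization ℂ B := (y : Unitization ℂ B) with hY
  have hQs : star Q = Q := by rw [hQ, ← Unitization.inr_star, hP]
  have hQQ : Q * Q = Q := by rw [hQ, ← Unitization.inr_mul, hPP]
  have hXY : X * Y = Q := by rw [hX, hY, ← Unitization.inr_mul, hxy]
  have hQX : Q * X = X := by rw [hX, hQ, ← Unitization.inr_mul, hPx]
  have hXQ : star X * Q = star X := by
    conv_rhs => rw [← hQX, star_mul, hQs]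
  set a : Unitization ℂ B := X * star X + (1 - Q) with ha
  have hR : 0 ≤ 1 - Q := by
    have : (1 - Q) = star (1 - Q) * (1 - Q) := by
      rw [star_sub, hQs, star_one, mul_sub, sub_mul, sub_mul, hQQ]; simp
    rw [this]; exact star_mul_self_nonneg _
  have ha0 : 0 ≤ a := add_nonneg (mul_star_self_nonneg _) hR
  have hle : Q ≤ ‖Y * star Y‖ • (X * star X) := by
    have := CStarAlgebra.star_right_conjugate_le_norm_smul (a := X) (b := Y * star Y)
    have e : X * (Y * star Y) * star X = Q := by
      rw [← mul_assoc, hXY, mul_assoc, ← star_mul, hXY, hQs, hQQ]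
    rwa [e] at this
  have hunit : IsUnit a := by
    set c : ℝ := ‖Y * star Y‖ + 1 with hc
    have hc0 : 0 < c := by positivity
    have h1 : (1 : Unitization ℂ B) ≤ c • a := by
      have hXX : (0 : Unitization ℂ B) ≤ X * star X := mul_star_self_nonneg _
      have e : c • a = ‖Y * star Y‖ • (X * star X) + (X * star X) + ‖Y * star Y‖ • (1 - Q)
          + (1 - Q) := by
        rw [hc, ha, add_smul, one_smul, smul_add]; abel
      have h3 : (0 : Unitization ℂ B) ≤ ‖Y * star Y‖ • (1 - Q) := smul_nonneg (norm_nonneg _) hR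
      rw [e]
      calc (1 : Unitization ℂ B) = Q + 0 + 0 + (1 - Q) := by abel
        _ ≤ _ := by gcongr
    have h2 : IsUnit (c • a) := CStarAlgebra.isUnit_of_le 1 h1
    have := h2.smul (Units.mk0 (c⁻¹) (inv_ne_zero hc0.ne'))
    rwa [Units.smul_mk0, smul_smul, inv_mul_cancel₀ hc0.ne', one_smul] at this
  have hsp : IsStrictlyPositive a := ⟨ha0, hunit⟩
  have hQa : Q * a = X * star X := by
    rw [ha, mul_add, ← mul_assoc, hQX, mul_sub, hQQ]; simp
  have haQ : a * Q = X * star X := by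
    rw [ha, add_mul, mul_assoc, hXQ, sub_mul, hQQ]; simp
  set t : Unitization ℂ B := a ^ (-(1/2) : ℝ) with ht
  have ht0 : 0 ≤ t := CFC.rpow_nonneg
  have hts : star t = t := (IsSelfAdjoint.of_nonneg ht0).star_eq
  have htQ : t * Q = Q * t := by
    have : Commute a Q := by rw [Commute, SemiconjBy, hQa, haQ]
    exact (this.cfc_nnreal _).eq
  have hta : t * a * t = 1 := by
    have h1 : t * a = a ^ (1/2 : ℝ) := by
      conv_lhs => rw [← CFC.rpow_one a, ht]
      rw [← CFC.rpow_add hunit]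
      norm_num
    rw [h1, ht]
    exact CFC.rpow_mul_rpow_neg _ hsp
  obtain ⟨h, hh⟩ : ∃ h : B, (h : Unitization ℂ B) = Q * t := by
    refine ⟨(Q * t).snd, ?_⟩
    ext
    · simp [hQ]
    · simp
  have hinj := Unitization.inr_injective (R := ℂ) (A := B)
  refine ⟨h, hinj ?_, hinj ?_⟩
  · simp only [Unitization.inr_mul]
    rw [hh, ← mul_assoc, ← mul_assoc, hQQ]
  · simp only [Unitization.inr_mul, Unitization.inr_star, star_mul]
    rw [hh, star_mul, hQs, hts]
    change Q * t * X * (star X * (t * Q)) = Q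
    calc Q * t * X * (star X * (t * Q)) = Q * t * (X * star X) * t * Q := by simp only [mul_assoc]
      _ = Q * (t * Q) * a * t * Q := by rw [← hQa]; simp only [mul_assoc]
      _ = Q * Q * (t * a * t) * Q := by rw [htQ]; simp only [mul_assoc]
      _ = Q := by rw [hta, mul_one, hQQ, hQQ]

theorem polar {A : Type u} [NonUnitalCStarAlgebra A] {m n : Type*} [Fintype m] [Fintype n]
    {p : Matrix m m A} {q : Matrix n n A} (hp : IsProjM p) {x : Matrix m n A} {y : Matrix n m A}
    (hxy : x * y = p) (hpx : p * x = x) (hxq : x * q = x) : SubEquiv p q := by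
  let _ := CStarAlgebra.spectralOrder A
  let _ := CStarAlgebra.spectralOrderedRing A
  let P : Matrix (m ⊕ n) (m ⊕ n) A := Matrix.fromBlocks p 0 0 0
  let X : Matrix (m ⊕ n) (m ⊕ n) A := Matrix.fromBlocks 0 x 0 0
  let Y : Matrix (m ⊕ n) (m ⊕ n) A := Matrix.fromBlocks 0 0 y 0
  have h1 : Pᴴ = P := by simp [P, Matrix.fromBlocks_conjTranspose, hp.1]
  have h2 : P * P = P := by simp [P, Matrix.fromBlocks_multiply, hp.2]
  have h3 : X * Y = P := by simp [P, X, Y, Matrix.fromBlocks_multiply, hxy]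
  have h4 : P * X = X := by simp [P, X, Matrix.fromBlocks_multiply, hpx]
  obtain ⟨h, h5, h6⟩ := polar_aux (B := CStarMatrix (m ⊕ n) (m ⊕ n) A)
    (P := CStarMatrix.ofMatrix P) (x := CStarMatrix.ofMatrix X) (y := CStarMatrix.ofMatrix Y)
    h1 h2 h3 h4
  let H : Matrix (m ⊕ n) (m ⊕ n) A := CStarMatrix.ofMatrix.symm h
  have h5' : P * (H * X) = H * X := h5
  have h6' : (H * X) * (H * X)ᴴ = P := h6
  obtain ⟨a, b, c, d, hH⟩ : ∃ a b c d, H = Matrix.fromBlocks a b c d :=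
    ⟨_, _, _, _, (Matrix.fromBlocks_toBlocks H).symm⟩
  rw [hH] at h5' h6'
  simp only [P, X, Matrix.fromBlocks_multiply, Matrix.fromBlocks_conjTranspose,
    Matrix.fromBlocks_inj] at h5' h6'
  have h5 : p * (a * x) = a * x := by simpa using h5'.2.1
  have h6 : (a * x) * (a * x)ᴴ = p := by simpa using h6'.1
  refine ⟨(a * x)ᴴ * (a * x), ⟨?_, ?_⟩, ⟨a * x, h6, rfl⟩, ?_⟩
  · rw [Matrix.conjTranspose_mul (a * x)ᴴ, Matrix.conjTranspose_conjTranspose]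
  · rw [Matrix.mul_assoc, ← Matrix.mul_assoc (a * x) (a * x)ᴴ, h6, h5]
  · rw [Matrix.mul_assoc _ (a * x) q, Matrix.mul_assoc a x q, hxq]

end analytic

section cancel
variable {A : Type u} [NonUnitalCStarAlgebra A]
variable {m n k l : Type*} [Fintype m] [Fintype n] [Fintype k] [Fintype l]

/-- `σ : p → e` and `π : e → p` exhibit `p` as a direct summand of `e`. -/
structure IsRet (e : Matrix k k A) (p : Matrix m m A) (σ : Matrix k m A) (π : Matrix m k A) :
    Prop where
  es : e * σ = σ
  sp : σ * p = σ
  pe : π * e = π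
  pp : p * π = π
  ps : π * σ = p

theorem IsRet.idem {e : Matrix k k A} {p : Matrix m m A} {σ : Matrix k m A} {π : Matrix m k A}
    (h : IsRet e p σ π) (he : e * e = e) : (e - σ * π) * (e - σ * π) = e - σ * π := by
  rw [Matrix.sub_mul, Matrix.mul_sub, Matrix.mul_sub, he, ← Matrix.mul_assoc, h.es,
    Matrix.mul_assoc σ π e, h.pe, Matrix.mul_assoc σ π, ← Matrix.mul_assoc π, h.ps, h.pp]
  abel

theorem IsRet.change_s {e : Matrix k k A} {p : Matrix m m A} {σ σ' : Matrix k m A}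
    {π : Matrix m k A} (he : e * e = e) (h : IsRet e p σ π) (h' : IsRet e p σ' π) :
    AE (e - σ * π) (e - σ' * π) := by
  refine ⟨e - σ' * π, e - σ * π, ?_, ?_⟩
  · rw [Matrix.sub_mul, Matrix.mul_sub, Matrix.mul_sub, he, ← Matrix.mul_assoc, h.es,
      Matrix.mul_assoc σ' π e, h.pe, Matrix.mul_assoc σ' π, ← Matrix.mul_assoc π, h.ps, h.pp]
    abel
  · rw [Matrix.sub_mul, Matrix.mul_sub, Matrix.mul_sub, he, ← Matrix.mul_assoc, h'.es,
      Matrix.mul_assoc σ π e, h.pe, Matrix.mul_assoc σ π, ← Matrix.mul_assoc π, h'.ps, h.pp]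
    abel

theorem IsRet.change_p {e : Matrix k k A} {p : Matrix m m A} {σ : Matrix k m A}
    {π π' : Matrix m k A} (he : e * e = e) (h : IsRet e p σ π) (h' : IsRet e p σ π') :
    AE (e - σ * π) (e - σ * π') := by
  refine ⟨e - σ * π, e - σ * π', ?_, ?_⟩
  · rw [Matrix.sub_mul, Matrix.mul_sub, Matrix.mul_sub, he, ← Matrix.mul_assoc, h.es,
      Matrix.mul_assoc σ π e, h.pe, Matrix.mul_assoc σ π, ← Matrix.mul_assoc π, h.ps, h'.pp]
    abel
  · rw [Matrix.sub_mul, Matrix.mul_sub, Matrix.mul_sub, he, ← Matrix.mul_assoc, h.es,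
      Matrix.mul_assoc σ π' e, h'.pe, Matrix.mul_assoc σ π', ← Matrix.mul_assoc π', h'.ps, h.pp]
    abel

theorem IsRet.transport {e : Matrix k k A} {f : Matrix l l A} {p : Matrix m m A}
    {σ : Matrix l m A} {π : Matrix m l A} (R1 : IsRet f p σ π) {x : Matrix k l A}
    {y : Matrix l k A} (hxy : x * y = e) (hyx : y * x = f) (hfy : f * y = y) :
    IsRet e p (x * σ) (π * y) := by
  refine ⟨?_, ?_, ?_, ?_, ?_⟩
  · rw [← hxy, Matrix.mul_assoc, ← Matrix.mul_assoc y, hyx, R1.es]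
  · rw [Matrix.mul_assoc, R1.sp]
  · rw [← hxy, Matrix.mul_assoc, ← Matrix.mul_assoc y, hyx, hfy]
  · rw [← Matrix.mul_assoc, R1.pp]
  · rw [Matrix.mul_assoc, ← Matrix.mul_assoc y, hyx, R1.es, R1.ps]

theorem cancel_core {e : Matrix k k A} {p : Matrix m m A} (he : e * e = e) (hp : p * p = p)
    {N : ℕ} (htsr : CornerTsrLe p N) {σ : Matrix k m A} {π : Matrix m k A}
    (h : IsRet e p σ π) {σ₀ : Matrix k m A} {π₀ : Matrix m k A} (h₀ : IsRet e p σ₀ π₀)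
    {s : Fin N → Matrix k m A} {t : Fin N → Matrix m k A} (hst : ∀ i, IsRet e p (s i) (t i))
    (hne : ∀ i j, i ≠ j → t i * s j = 0) (h0s : ∀ i, π₀ * s i = 0) (ht0 : ∀ i, t i * σ₀ = 0) :
    AE (e - σ * π) (e - σ₀ * π₀) := by
  -- the coordinates of `σ`
  have hxmem : ∀ i, p * (t i * σ) * p = t i * σ := fun i => by
    rw [← Matrix.mul_assoc, (hst i).pp, Matrix.mul_assoc, h.sp]
  let x : Fin N → {x : Matrix m m A // p * x * p = x} := fun i => ⟨t i * σ, hxmem i⟩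
  let F : (Fin N → {x : Matrix m m A // p * x * p = x}) → Matrix m m A := fun c =>
    ∑ i, (π * s i) * (c i : Matrix m m A) + (p - ∑ i, (π * s i) * (x i : Matrix m m A))
  have hF : Continuous F := by
    refine Continuous.add (continuous_finsetSum _ fun i _ => ?_) continuous_const
    exact Continuous.matrix_mul continuous_const
      (continuous_subtype_val.comp (continuous_apply i))
  have hFx : F x = p := by simp [F]
  have hev : ∀ᶠ c in nhds x, p * F c * p = F c →
      ∃ k, p * k * p = k ∧ F c * k = p ∧ k * F c = p := by
    have := inv_near hp
    rw [← hFx] at this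
    have := hF.continuousAt.eventually this
    rwa [hFx] at this
  obtain ⟨c, hc, hcF⟩ := htsr.inter_nhds_nonempty hev
  obtain ⟨d, hd⟩ := hc
  have hcp : ∀ i, p * (c i : Matrix m m A) = c i := fun i => by
    rw [← (c i).2, ← Matrix.mul_assoc, ← Matrix.mul_assoc, hp]
  have hcp' : ∀ i, (c i : Matrix m m A) * p = c i := fun i => by
    rw [← (c i).2, Matrix.mul_assoc _ p p, hp]
  have hdp : ∀ i, p * (d i : Matrix m m A) = d i := fun i => by
    rw [← (d i).2, ← Matrix.mul_assoc, ← Matrix.mul_assoc, hp]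
  have hdp' : ∀ i, (d i : Matrix m m A) * p = d i := fun i => by
    rw [← (d i).2, Matrix.mul_assoc _ p p, hp]
  -- `ξ`, `ω`, `τ`
  let ξ : Matrix k m A := ∑ i, s i * (c i : Matrix m m A)
  let ω : Matrix m k A := ∑ i, (d i : Matrix m m A) * t i
  let τ : Matrix k m A := σ - ∑ i, s i * (t i * σ)
  have ts : ∀ (i : Fin N) (z : Fin N → Matrix m m A), (∀ i, p * z i = z i) →
      t i * ∑ j, s j * z j = z i := by
    intro i z hz
    rw [Matrix.mul_sum, Finset.sum_eq_single i]
    · rw [← Matrix.mul_assoc, (hst i).ps, hz]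
    · intro j _ hj
      rw [← Matrix.mul_assoc, hne i j hj.symm, Matrix.zero_mul]
    · simp
  have hωξ : ω * ξ = p := by
    rw [← hd]
    simp only [ω, Matrix.sum_mul]
    refine Finset.sum_congr rfl fun i _ => ?_
    rw [Matrix.mul_assoc, ts i (fun i => c i) hcp]
  have hωτ : ω * τ = 0 := by
    simp only [ω, Matrix.sum_mul]
    refine Finset.sum_eq_zero fun i _ => ?_
    rw [Matrix.mul_assoc]
    simp only [τ]
    rw [Matrix.mul_sub, ts i (fun i => t i * σ) (fun i => by rw [← Matrix.mul_assoc, (hst i).pp]),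
      sub_self, Matrix.mul_zero]
  have hu : π * (ξ + τ) = F c := by
    simp only [ξ, τ, F, x, Matrix.mul_add, Matrix.mul_sub, Matrix.mul_sum, h.ps, Matrix.mul_assoc]
  have heξ : e * ξ = ξ := by
    simp only [ξ, Matrix.mul_sum]
    exact Finset.sum_congr rfl fun i _ => by rw [← Matrix.mul_assoc, (hst i).es]
  have hξp : ξ * p = ξ := by
    simp only [ξ, Matrix.sum_mul]
    exact Finset.sum_congr rfl fun i _ => by rw [Matrix.mul_assoc, hcp']
  have hωe : ω * e = ω := by
    simp only [ω, Matrix.sum_mul]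
    exact Finset.sum_congr rfl fun i _ => by rw [Matrix.mul_assoc, (hst i).pe]
  have hpω : p * ω = ω := by
    simp only [ω, Matrix.mul_sum]
    exact Finset.sum_congr rfl fun i _ => by rw [← Matrix.mul_assoc, hdp]
  have heτ : e * τ = τ := by
    simp only [τ, Matrix.mul_sub, Matrix.mul_sum, h.es]
    congr 1
    exact Finset.sum_congr rfl fun i _ => by rw [← Matrix.mul_assoc, (hst i).es]
  have hτp : τ * p = τ := by
    simp only [τ, Matrix.sub_mul, Matrix.sum_mul, h.sp]
    congr 1
    exact Finset.sum_congr rfl fun i _ => by rw [Matrix.mul_assoc, Matrix.mul_assoc, h.sp]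
  have hπ₀ξ : π₀ * ξ = 0 := by
    simp only [ξ, Matrix.mul_sum]
    exact Finset.sum_eq_zero fun i _ => by rw [← Matrix.mul_assoc, h0s, Matrix.zero_mul]
  have hωσ₀ : ω * σ₀ = 0 := by
    simp only [ω, Matrix.sum_mul]
    exact Finset.sum_eq_zero fun i _ => by rw [Matrix.mul_assoc, ht0, Matrix.mul_zero]
  have hFp : p * F c * p = F c := by
    rw [← hu, ← Matrix.mul_assoc p, h.pp, Matrix.mul_assoc π, Matrix.add_mul, hξp, hτp]
  obtain ⟨w, hw1, hw2, hw3⟩ := hcF hFp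
  have hpF : p * F c = F c := by rw [← hu, ← Matrix.mul_assoc p, h.pp]
  have hpw : p * w = w := by rw [← hw1, ← Matrix.mul_assoc, ← Matrix.mul_assoc, hp]
  have hwp : w * p = w := by rw [← hw1, Matrix.mul_assoc _ p p, hp]
  have r1 : IsRet e p (σ * F c) (w * π) := by
    refine ⟨?_, ?_, ?_, ?_, ?_⟩
    · rw [← Matrix.mul_assoc, h.es]
    · rw [Matrix.mul_assoc, ← hpF, hFp, hpF]
    · rw [Matrix.mul_assoc, h.pe]
    · rw [← Matrix.mul_assoc, hpw]
    · rw [Matrix.mul_assoc, ← Matrix.mul_assoc π, h.ps, hpF, hw3]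
  have r2 : IsRet e p (ξ + τ) (w * π) := by
    refine ⟨?_, ?_, r1.pe, r1.pp, ?_⟩
    · rw [Matrix.mul_add, heξ, heτ]
    · rw [Matrix.add_mul, hξp, hτp]
    · rw [Matrix.mul_assoc, hu, hw3]
  have r3 : IsRet e p (ξ + τ) ω :=
    ⟨r2.es, r2.sp, hωe, hpω, by rw [Matrix.mul_add, hωξ, hωτ, add_zero]⟩
  have r4 : IsRet e p (ξ + σ₀) ω :=
    ⟨by rw [Matrix.mul_add, heξ, h₀.es], by rw [Matrix.add_mul, hξp, h₀.sp], hωe, hpω,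
      by rw [Matrix.mul_add, hωξ, hωσ₀, add_zero]⟩
  have r5 : IsRet e p (ξ + σ₀) π₀ :=
    ⟨r4.es, r4.sp, h₀.pe, h₀.pp, by rw [Matrix.mul_add, hπ₀ξ, h₀.ps, zero_add]⟩
  have e1 : e - σ * π = e - (σ * F c) * (w * π) := by
    rw [Matrix.mul_assoc, ← Matrix.mul_assoc (F c), hw2, h.pp]
  rw [e1]
  have i1 := r1.idem he
  refine (r1.change_s he r2).trans ?_ i1 (h₀.idem he)
  refine (r2.change_p he r3).trans ?_ (r2.idem he) (h₀.idem he)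
  refine (r3.change_s he r4).trans ?_ (r3.idem he) (h₀.idem he)
  exact (r4.change_p he r5).trans (r5.change_s he h₀) (r4.idem he) (h₀.idem he)

/-- A block of an idempotent is a direct summand. -/
theorem isRet_block {e : Matrix k k A} {p : Matrix m m A} (he : e * e = e) (hp : p * p = p)
    (f : m → k) (hf : e.submatrix f f = p) :
    IsRet e p (e.submatrix id f * p) (p * e.submatrix f id) := by
  refine ⟨?_, ?_, ?_, ?_, ?_⟩
  · rw [← Matrix.mul_assoc]
    congr 1
    conv_rhs => rw [← he, Matrix.submatrix_mul e e id id f Function.bijective_id]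
    rw [Matrix.submatrix_id_id]
  · rw [Matrix.mul_assoc, hp]
  · rw [Matrix.mul_assoc]
    congr 1
    conv_rhs => rw [← he, Matrix.submatrix_mul e e f id id Function.bijective_id]
    rw [Matrix.submatrix_id_id]
  · rw [← Matrix.mul_assoc, hp]
  · rw [Matrix.mul_assoc, ← Matrix.mul_assoc _ _ p,
      ← Matrix.submatrix_mul e e f id f Function.bijective_id, he, hf, hp, hp]

theorem block_orth {e : Matrix k k A} {p : Matrix m m A} (he : e * e = e)
    (f g : m → k) (hf : e.submatrix f g = 0) :
    (p * e.submatrix f id) * (e.submatrix id g * p) = 0 := by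
  rw [Matrix.mul_assoc, ← Matrix.mul_assoc _ _ p,
      ← Matrix.submatrix_mul e e f id g Function.bijective_id, he, hf]
  simp

theorem block_compl {n : Type*} {p : Matrix m m A} {b : Matrix n n A} (hp : p * p = p) :
    dSum p b - ((dSum p b).submatrix id Sum.inl * p) * (p * (dSum p b).submatrix Sum.inl id)
      = dSum 0 b := by
  have e1 : (dSum p b).submatrix id Sum.inl * p = (dSum p b).submatrix id Sum.inl := by
    ext (i | i) j
    · simp only [dSum, Matrix.mul_apply, Matrix.submatrix_apply, id, Matrix.fromBlocks_apply₁₁]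
      rw [← Matrix.mul_apply, hp]
    · simp [dSum, Matrix.mul_apply]
  have e2 : p * (dSum p b).submatrix Sum.inl id = (dSum p b).submatrix Sum.inl id := by
    ext i (j | j)
    · simp only [dSum, Matrix.mul_apply, Matrix.submatrix_apply, id, Matrix.fromBlocks_apply₁₁]
      rw [← Matrix.mul_apply, hp]
    · simp [dSum, Matrix.mul_apply]
  rw [e1, e2]
  ext (i | i) (j | j)
  · simp only [dSum, Matrix.sub_apply, Matrix.mul_apply, Matrix.submatrix_apply, id,
      Matrix.fromBlocks_apply₁₁]
    rw [← Matrix.mul_apply, hp]; simp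
  all_goals simp [dSum, Matrix.mul_apply]

end cancel

section cancelV
variable {A : Type u} [NonUnitalCStarAlgebra A]

theorem cancelV {m : Type} [Fintype m] {p : Matrix m m A} (hp : p * p = p) {N : ℕ}
    (htsr : CornerTsrLe p N) (b c : V A)
    (h : cl p hp + (N • cl p hp + b) = cl p hp + c) : N • cl p hp + b = c := by
  induction b using V.ind with | _ n b hb
  induction c using V.ind with | _ l c hc
  rw [← cl_nFold] at h ⊢
  simp only [cl_add] at h ⊢
  have hB := dSum_idem (nFold_idem hp N) hb
  set B := dSum (nFold N p) b with hBdef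
  have he := dSum_idem hp hB
  have hf := dSum_idem hp hc
  obtain ⟨x, y, hxy, hyx, -, hxf, hfy, -⟩ := (cl_eq.1 h).normd he hf
  have R0 := isRet_block he hp Sum.inl (by ext; rfl)
  have R1 := isRet_block hf hp Sum.inl (by ext; rfl)
  set σ₁ := (dSum p c).submatrix id Sum.inl * p
  set π₁ := p * (dSum p c).submatrix Sum.inl id
  have R : IsRet (dSum p B) p (x * σ₁) (π₁ * y) := R1.transport hxy hyx hfy
  have hblk : ∀ i j : Fin N, (dSum p B).submatrix (fun a => Sum.inr (Sum.inl (a, i)))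
      (fun a => Sum.inr (Sum.inl (a, j))) = if i = j then p else 0 := by
    intro i j
    ext a b
    by_cases hij : i = j <;> simp [dSum, hBdef, nFold, Matrix.blockDiagonal_apply, hij]
  have key := cancel_core he hp htsr R R0
    (s := fun i => (dSum p B).submatrix id (fun a => Sum.inr (Sum.inl (a, i))) * p)
    (t := fun i => p * (dSum p B).submatrix (fun a => Sum.inr (Sum.inl (a, i))) id)
    (fun i => isRet_block he hp _ (by rw [hblk]; simp))
    (fun i j hij => block_orth he _ _ (by rw [hblk]; simp [hij]))
    (fun i => block_orth he _ _ (by ext; rfl))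
    (fun i => block_orth he _ _ (by ext; rfl))
  rw [block_compl hp] at key
  have e1 : dSum p B - (x * σ₁) * (π₁ * y) = x * (dSum p c - σ₁ * π₁) * y := by
    rw [Matrix.mul_sub, Matrix.sub_mul, hxf, hxy]
    simp only [Matrix.mul_assoc]
    rfl
  have i0 : dSum (0 : Matrix m m A) c * dSum 0 c = dSum 0 c := dSum_idem (by simp) hc
  have i1 : dSum (0 : Matrix m m A) B * dSum 0 B = dSum 0 B := dSum_idem (by simp) hB
  have hcc : dSum p c - σ₁ * π₁ = dSum 0 c := block_compl hp
  rw [e1, hcc] at key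
  have h2 : AE (x * dSum (0 : Matrix m m A) c * y) (dSum (0 : Matrix m m A) c) :=
    AE_compl hyx i0 (by simp [dSum, Matrix.fromBlocks_multiply, hc])
  refine cl_eq.2 ?_
  refine ((AE_zero_dSum (n := m) hB).symm.trans ?_ hB hc)
  refine AE.trans (key.symm.trans h2 i1 i0) (AE_zero_dSum hc) i1 hc

theorem cancelV_nsmul {m : Type} [Fintype m] {p : Matrix m m A} (hp : p * p = p) {N : ℕ}
    (htsr : CornerTsrLe p N) (b c : V A) (M : ℕ)
    (h : M • cl p hp + (N • cl p hp + b) = M • cl p hp + c) : N • cl p hp + b = c := by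
  induction M with
  | zero => simpa using h
  | succ M ih =>
    refine ih ?_
    rw [add_left_comm]
    refine cancelV hp htsr _ _ ?_
    rw [succ_nsmul'] at h
    rw [add_left_comm (N • cl p hp), ← add_assoc, h, add_assoc]

end cancelV

section simple
variable {A : Type u} [NonUnitalCStarAlgebra A]

theorem IsRet.cl_add {k m : Type} [Fintype k] [Fintype m] {e : Matrix k k A} {p : Matrix m m A}
    {σ : Matrix k m A} {π : Matrix m k A}
    (h : IsRet e p σ π) (he : e * e = e) (hp : p * p = p) :
    cl p hp + cl (e - σ * π) (h.idem he) = cl e he := by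
  rw [BC.cl_add]
  refine cl_eq.2 ⟨Matrix.fromRows π (e - σ * π), Matrix.fromCols σ (e - σ * π), ?_, ?_⟩
  · have h1 : Matrix.fromRows π (e - σ * π) * Matrix.fromCols σ (e - σ * π)
        = Matrix.fromBlocks (π * σ) (π * (e - σ * π)) ((e - σ * π) * σ)
          ((e - σ * π) * (e - σ * π)) := by
      ext (i | i) (j | j) <;> rfl
    rw [h1, h.ps, h.idem he, Matrix.mul_sub, Matrix.sub_mul, h.pe, ← Matrix.mul_assoc, h.ps, h.pp,
      h.es, Matrix.mul_assoc, h.ps, h.sp]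
    simp [dSum]
  · have h1 : Matrix.fromCols σ (e - σ * π) * Matrix.fromRows π (e - σ * π)
        = σ * π + (e - σ * π) * (e - σ * π) := by
      ext i j
      simp [Matrix.mul_apply]
    rw [h1, h.idem he]
    abel

variable {m n l : Type*} [Fintype m] [Fintype n] [Fintype l]

/-- The matrix `z` factors through a multiple of `p`. -/
def Gen (p : Matrix m m A) {n l : Type*} (z : Matrix n l A) : Prop :=
  ∃ (ι : Type) (_ : Fintype ι) (X : ι → Matrix n m A) (Y : ι → Matrix m l A),
    z = ∑ i, X i * p * Y i

theorem Gen.zero (p : Matrix m m A) {n l : Type*} : Gen p (0 : Matrix n l A) :=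
  ⟨Empty, inferInstance, fun i => i.elim, fun i => i.elim, by simp⟩

theorem Gen.add {p : Matrix m m A} {n l : Type*} {z w : Matrix n l A} (h : Gen p z)
    (h' : Gen p w) : Gen p (z + w) := by
  obtain ⟨ι, _, X, Y, rfl⟩ := h
  obtain ⟨κ, _, X', Y', rfl⟩ := h'
  exact ⟨ι ⊕ κ, inferInstance, Sum.elim X X', Sum.elim Y Y', by simp⟩

theorem Gen.sum {p : Matrix m m A} {n l : Type*} {κ : Type*} (s : Finset κ)
    {z : κ → Matrix n l A} (h : ∀ i, Gen p (z i)) : Gen p (∑ i ∈ s, z i) := by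
  classical
  induction s using Finset.induction_on with
  | empty => simpa using Gen.zero p
  | insert a s ha ih => rw [Finset.sum_insert ha]; exact (h a).add ih

theorem Gen.neg {p : Matrix m m A} {n l : Type*} {z : Matrix n l A} (h : Gen p z) :
    Gen p (-z) := by
  obtain ⟨ι, _, X, Y, rfl⟩ := h
  exact ⟨ι, inferInstance, fun i => - X i, Y, by simp [Matrix.neg_mul]⟩

theorem Gen.mul_left {p : Matrix m m A} {l k : Type*} {z : Matrix n l A} (h : Gen p z)
    (w : Matrix k n A) : Gen p (w * z) := by
  obtain ⟨ι, _, X, Y, rfl⟩ := h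
  exact ⟨ι, inferInstance, fun i => w * X i, Y, by simp [Matrix.mul_sum, Matrix.mul_assoc]⟩

theorem Gen.mul_right {p : Matrix m m A} {n k : Type*} {z : Matrix n l A} (h : Gen p z)
    (w : Matrix l k A) : Gen p (z * w) := by
  obtain ⟨ι, _, X, Y, rfl⟩ := h
  exact ⟨ι, inferInstance, X, fun i => Y i * w, by simp [Matrix.sum_mul, Matrix.mul_assoc]⟩

theorem Gen.single {p : Matrix m m A} {n l : Type*} [DecidableEq n] [DecidableEq l] {a : A}
    (h : Gen p (Matrix.of fun (_ _ : Unit) => a)) (i : n) (j : l) :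
    Gen p (Matrix.single i j a) := by
  obtain ⟨ι, _, X, Y, hXY⟩ := h
  refine ⟨ι, inferInstance, fun k => Matrix.of fun i' c => if i = i' then X k () c else 0,
    fun k => Matrix.of fun c j' => if j = j' then Y k c () else 0, ?_⟩
  have h1 := congrFun (congrFun hXY ()) ()
  ext i' j'
  rw [Matrix.sum_apply]
  by_cases hi : i = i'
  · by_cases hj : j = j'
    · subst hi hj
      rw [Matrix.single_apply_same]
      simp only [Matrix.of_apply] at h1
      rw [h1, Matrix.sum_apply]
      simp [Matrix.mul_apply]
    · simp [Matrix.mul_apply, hj]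
  · simp [Matrix.mul_apply, hi]

theorem gen_dense (hsimple : IsSimpleCStarAlgebra A) {p : Matrix m m A} (hp : p * p = p)
    (hp0 : p ≠ 0) : closure {a : A | Gen p (Matrix.of fun (_ _ : Unit) => a)} = Set.univ := by
  set J : Set A := {a : A | Gen p (Matrix.of fun (_ _ : Unit) => a)} with hJ
  have hmem : ∀ a b, p a b ∈ J := by
    intro a b
    refine ⟨Unit, inferInstance, fun _ => p.submatrix (fun _ => a) id,
      fun _ => p.submatrix id (fun _ => b), ?_⟩
    ext i j
    have h3 : p.submatrix (fun _ : Unit => a) id * p = p.submatrix (fun _ : Unit => a) id := by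
      conv_rhs => rw [← hp, Matrix.submatrix_mul p p _ id id Function.bijective_id]
      simp
    simp only [Finset.univ_unique, Finset.sum_singleton, h3]
    rw [← Matrix.submatrix_mul p p _ id _ Function.bijective_id, hp]
    rfl
  refine (hsimple (closure J) isClosed_closure ?_ ?_ ?_ ?_ ?_).resolve_left ?_
  · exact subset_closure (Gen.zero p)
  · intro x hx y hy
    refine map_mem_closure₂ continuous_add hx hy ?_
    intro a ha b hb
    exact Gen.add ha hb
  · intro x hx
    refine map_mem_closure continuous_neg hx ?_
    intro a ha
    exact Gen.neg ha
  · intro x hx a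
    refine map_mem_closure (f := fun x => a * x) (by fun_prop) hx ?_
    intro b hb
    have h1 := Gen.mul_left hb (Matrix.of fun (_ _ : Unit) => a)
    have h2 : (Matrix.of fun (_ _ : Unit) => a) * (Matrix.of fun (_ _ : Unit) => b)
      = Matrix.of fun (_ _ : Unit) => a * b := by
      ext i j; simp [Matrix.mul_apply]
    rw [h2] at h1
    exact h1
  · intro x hx a
    refine map_mem_closure (f := fun x => x * a) (by fun_prop) hx ?_
    intro b hb
    have h1 := Gen.mul_right hb (Matrix.of fun (_ _ : Unit) => a)
    have h2 : (Matrix.of fun (_ _ : Unit) => b) * (Matrix.of fun (_ _ : Unit) => a)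
      = Matrix.of fun (_ _ : Unit) => b * a := by
      ext i j; simp [Matrix.mul_apply]
    rw [h2] at h1
    exact h1
  · intro h
    apply hp0
    ext a b
    have := subset_closure (hmem a b)
    rw [h] at this
    exact this

theorem gen_all (hsimple : IsSimpleCStarAlgebra A) {p : Matrix m m A} (hp : p * p = p)
    (hp0 : p ≠ 0) {s : Matrix n n A} (hs : s * s = s) : Gen p s := by
  classical
  have hd := gen_dense hsimple hp hp0
  set J : Set A := {a : A | Gen p (Matrix.of fun (_ _ : Unit) => a)} with hJ
  have hcl : s ∈ closure {z : Matrix n n A | Gen p z} := by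
    have h1 : s ∈ closure (Set.pi Set.univ fun _ : n => Set.pi Set.univ fun _ : n => J) := by
      rw [closure_pi_set]
      intro i _
      rw [closure_pi_set]
      intro j _
      rw [hd]; trivial
    refine closure_mono ?_ h1
    intro z hz
    change Gen p z
    rw [Matrix.matrix_eq_sum_single z]
    refine Gen.sum _ fun i => Gen.sum _ fun j => Gen.single ?_ i j
    exact hz i trivial j trivial
  have hc : Continuous fun z : Matrix n n A => s * z * s :=
    (continuous_const.matrix_mul continuous_id).matrix_mul continuous_const
  have hev := inv_near hs
  have hss : s * s * s = s := by rw [hs, hs]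
  have hev2 := hc.continuousAt (x := s)
  rw [ContinuousAt, hss] at hev2
  obtain ⟨z, hz, hz2⟩ := ((mem_closure_iff_frequently.1 hcl).and_eventually
    (hev2.eventually hev)).exists
  obtain ⟨w, -, hw, -⟩ := hz2 (by
    rw [← Matrix.mul_assoc, ← Matrix.mul_assoc, hs, Matrix.mul_assoc _ s s, hs])
  rw [← hw]
  exact ((Gen.mul_left hz s).mul_right s).mul_right w

theorem exists_compl (hsimple : IsSimpleCStarAlgebra A) {m : Type} [Fintype m]
    {p : Matrix m m A} (hp : p * p = p) (hp0 : p ≠ 0) (s : V A) :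
    ∃ (M : ℕ) (t : V A), s + t = M • cl p hp := by
  induction s using V.ind with | _ n s hs
  obtain ⟨ι, _, X₀, Y₀, hXY₀⟩ := gen_all hsimple hp hp0 hs
  obtain ⟨M, X, Y, hXY⟩ : ∃ (M : ℕ) (X : Fin M → Matrix n m A) (Y : Fin M → Matrix m n A),
      s = ∑ i, X i * p * Y i := by
    refine ⟨Fintype.card ι, fun i => X₀ ((Fintype.equivFin ι).symm i),
      fun i => Y₀ ((Fintype.equivFin ι).symm i), ?_⟩
    rw [hXY₀]
    exact (Equiv.sum_comp (Fintype.equivFin ι).symm (fun i => X₀ i * p * Y₀ i)).symm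
  let X' : Matrix n (m × Fin M) A := Matrix.of fun i a => (X a.2 * p) i a.1
  let Y' : Matrix (m × Fin M) n A := Matrix.of fun a j => (p * Y a.2) a.1 j
  have h1 : X' * Y' = s := by
    rw [hXY]
    ext i j
    rw [Matrix.mul_apply, Matrix.sum_apply, Fintype.sum_prod_type_right]
    refine Finset.sum_congr rfl fun k _ => ?_
    simp only [X', Y', Matrix.of_apply]
    rw [← Matrix.mul_apply, Matrix.mul_assoc, ← Matrix.mul_assoc p, hp, Matrix.mul_assoc]
  have h2 : X' * nFold M p = X' := by
    ext i ⟨a, k⟩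
    rw [Matrix.mul_apply, Fintype.sum_prod_type_right, Finset.sum_eq_single k]
    · simp only [X', nFold, Matrix.of_apply, Matrix.blockDiagonal_apply, if_true]
      rw [← Matrix.mul_apply, Matrix.mul_assoc, hp]
    · intro b _ hb
      simp [nFold, Matrix.blockDiagonal_apply, hb]
    · simp
  have h3 : nFold M p * Y' = Y' := by
    ext ⟨a, k⟩ j
    rw [Matrix.mul_apply, Fintype.sum_prod_type_right, Finset.sum_eq_single k]
    · simp only [Y', nFold, Matrix.of_apply, Matrix.blockDiagonal_apply, if_true]
      rw [← Matrix.mul_apply, ← Matrix.mul_assoc, hp]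
    · intro b _ hb
      simp [nFold, Matrix.blockDiagonal_apply, hb.symm]
    · simp
  have R : IsRet (nFold M p) s (Y' * s) (s * X') := by
    refine ⟨?_, ?_, ?_, ?_, ?_⟩
    · rw [← Matrix.mul_assoc, h3]
    · rw [Matrix.mul_assoc, hs]
    · rw [Matrix.mul_assoc, h2]
    · rw [← Matrix.mul_assoc, hs]
    · rw [Matrix.mul_assoc, ← Matrix.mul_assoc X', h1, hs, hs]
  refine ⟨M, cl _ (R.idem (nFold_idem hp M)), ?_⟩
  rw [← cl_nFold]
  exact R.cl_add (nFold_idem hp M) hs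

theorem subEquiv_of_cl {m n : Type} [Fintype m] [Fintype n] {p : Matrix m m A} {q : Matrix n n A}
    (hp : IsProjM p) (hq : q * q = q) (b : V A) (h : cl p hp.2 + b = cl q hq) :
    SubEquiv p q := by
  induction b using V.ind with | _ k b hb
  rw [cl_add] at h
  have hf := dSum_idem hp.2 hb
  obtain ⟨x, y, hxy, hyx, hfx, -, -, -⟩ := (cl_eq.1 h).normd hf hq
  have R1 := isRet_block hf hp.2 Sum.inl (by ext; rfl)
  have R := R1.transport hyx hxy hfx
  exact polar hp R.ps R.pp R.pe

theorem iterate_small (P : Set (Σ k : ℕ, Matrix (Fin k) (Fin k) A))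
    (hP : ∀ p ∈ P, IsProjM p.2 ∧ p.2 ≠ 0)
    (hsmall : ∀ (l : ℕ) (q : Matrix (Fin l) (Fin l) A), IsProjM q → q ≠ 0 →
      ∃ p ∈ P, ∃ (kr ks : ℕ) (r : Matrix (Fin kr) (Fin kr) A)
        (s : Matrix (Fin ks) (Fin ks) A), IsProjM r ∧ IsProjM s ∧
        MvNEquiv (dSum (dSum (dSum p.2 p.2) r) s) (dSum q s))
    (l : ℕ) (q : Matrix (Fin l) (Fin l) A) (hq : IsProjM q) (hq0 : q ≠ 0) (K : ℕ) :
    ∃ p, ∃ h : p ∈ P, ∃ r s : V A, (2 ^ K) • cl p.2 (hP p h).1.2 + r + s = cl q hq.2 + s := by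
  have step : ∀ (l : ℕ) (q : Matrix (Fin l) (Fin l) A) (hq : IsProjM q) (_ : q ≠ 0),
      ∃ p, ∃ h : p ∈ P, ∃ r s : V A, cl p.2 (hP p h).1.2 + cl p.2 (hP p h).1.2 + r + s
        = cl q hq.2 + s := by
    intro l q hq hq0
    obtain ⟨p, hp, kr, ks, r, s, hr, hs, v, hv1, hv2⟩ := hsmall l q hq hq0
    refine ⟨p, hp, cl r hr.2, cl s hs.2, ?_⟩
    simp only [cl_add]
    exact cl_eq.2 ⟨v, vᴴ, hv1, hv2⟩
  induction K with
  | zero =>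
    obtain ⟨p, hp, r, s, h⟩ := step l q hq hq0
    refine ⟨p, hp, cl p.2 (hP p hp).1.2 + r, s, ?_⟩
    rw [← h, pow_zero, one_smul, add_assoc (cl p.2 _) (cl p.2 _) r]
  | succ K ih =>
    obtain ⟨p, hp, r, s, h⟩ := ih
    obtain ⟨p', hp', r', s', h'⟩ := step p.1 p.2 (hP p hp).1 (hP p hp).2
    refine ⟨p', hp', 2 ^ K • r' + r, 2 ^ K • s' + s, ?_⟩
    have h2 := congrArg (fun v => 2 ^ K • v) h'
    simp only [nsmul_add] at h2
    have e : 2 ^ (K + 1) • cl p'.2 (hP p' hp').1.2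
        = 2 ^ K • cl p'.2 (hP p' hp').1.2 + 2 ^ K • cl p'.2 (hP p' hp').1.2 := by
      rw [← add_nsmul]; congr 1; ring
    rw [e]
    set a := 2 ^ K • cl p'.2 (hP p' hp').1.2
    calc a + a + (2 ^ K • r' + r) + (2 ^ K • s' + s)
        = (a + a + 2 ^ K • r' + 2 ^ K • s') + (r + s) := by abel
      _ = (2 ^ K • cl p.2 (hP p hp).1.2 + r + s) + 2 ^ K • s' := by rw [h2]; abel
      _ = _ := by rw [h]; abel

theorem nFold_proj {m : Type*} [Fintype m] {p : Matrix m m A} (hp : IsProjM p) (N : ℕ) :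
    IsProjM (nFold N p) := by
  refine ⟨?_, nFold_idem hp.2 N⟩
  unfold nFold
  rw [Matrix.blockDiagonal_conjTranspose]
  simp only [hp.1]

end simple
end BC

/-- Under the hypotheses of Blackadar's cancellation theorem, for every nonzero projection
`q` in a matrix algebra over the simple C*-algebra `A` there is `p ∈ P` with `N * p ≾ q`. -/
theorem exists_nFold_subEquiv {A : Type*} [NonUnitalCStarAlgebra A]
    (hsimple : IsSimpleCStarAlgebra A)
    (P : Set (Σ k : ℕ, Matrix (Fin k) (Fin k) A))
    (hP : ∀ p ∈ P, IsProjM p.2 ∧ p.2 ≠ 0)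
    (hsmall : ∀ (l : ℕ) (q : Matrix (Fin l) (Fin l) A), IsProjM q → q ≠ 0 →
      ∃ p ∈ P, ∃ (kr ks : ℕ) (r : Matrix (Fin kr) (Fin kr) A)
        (s : Matrix (Fin ks) (Fin ks) A), IsProjM r ∧ IsProjM s ∧
        MvNEquiv (dSum (dSum (dSum p.2 p.2) r) s) (dSum q s))
    (N : ℕ) (htsr : ∀ p ∈ P, CornerTsrLe p.2 N)
    (l : ℕ) (q : Matrix (Fin l) (Fin l) A) (hq : IsProjM q) (hq0 : q ≠ 0) :
    ∃ p ∈ P, SubEquiv (nFold N p.2) q := by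

  obtain ⟨p, hp, r, s, h⟩ := BC.iterate_small P hP hsmall l q hq hq0 N
  have hpp := (hP p hp).1
  obtain ⟨M, t, hst⟩ := BC.exists_compl hsimple hpp.2 (hP p hp).2 s
  obtain ⟨d, hd⟩ := Nat.exists_eq_add_of_le (Nat.lt_two_pow_self (n := N)).le
  refine ⟨p, hp, ?_⟩
  have key := BC.cancelV_nsmul hpp.2 (htsr p hp) (d • BC.cl p.2 hpp.2 + r) (BC.cl q hq.2) M (by
    rw [← hst]
    calc s + t + (N • BC.cl p.2 hpp.2 + (d • BC.cl p.2 hpp.2 + r))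
        = (N • BC.cl p.2 hpp.2 + d • BC.cl p.2 hpp.2) + r + s + t := by abel
      _ = BC.cl q hq.2 + s + t := by rw [← add_nsmul, ← hd, h]
      _ = _ := by abel)
  rw [← BC.cl_nFold] at key
  exact BC.subEquiv_of_cl (BC.nFold_proj hpp N) hq.2 _ key
end
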